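/- There exist a continuous function ψ_0 : ℝ → ℝ and a constant C > 0 with |ψ_0(x)| ≤ C·|x| for all |x| ≤ 1, such that for every prime q, every positive integer a coprime to q, and each choice of sign ± (with ∓ the opposite sign), writing a/q = [b_0; b_1, …, b_κ] with convergent denominators v_j, one has M_0*(±a, q) = Σ_{1≤j≤κ, (−1)^j = ∓1} (v_j/v_{j−1})^{1/2}·(log(v_j/v_{j−1}) + γ − log(8π)) − (π/2)·Σ_{1≤j≤κ, (−1)^j = ±1} (v_j/v_{j−1})^{1/2} + ζ(1/2)²·(κ+1) + Σ_{j=1}^κ ψ_0(±(−1)^j · v_{j−1}/v_j). -/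

import Mathlib

open Complex Real Finset

/-- `M_j*(a,q)`: the shifted twisted second moment (sum over all characters mod `q`),
with the extra zeta term. -/
noncomputable def Mstar (j : ℕ) (a : ℤ) (q : ℕ) [NeZero q] : ℂ :=
  ((q : ℂ) ^ ((1:ℂ)/2 - j) / (Nat.totient q : ℂ)) *
    ∑ χ : DirichletCharacter ℂ q,
      DirichletCharacter.LFunction (χ.ringHomComp (starRingEnd ℂ)) (1/2 - j) *
        χ.LFunction (1/2 + j) * χ (a : ZMod q)
  + ((q : ℂ) ^ (-(j:ℂ)) / (Nat.totient q : ℂ)) * riemannZeta (1/2 + j) *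
      riemannZeta (1/2 - j) * ((q : ℂ) ^ ((1:ℂ)/2) - (q : ℂ) ^ (-(1:ℂ)/2))

/-- The list `[b_0, b_1, …, b_κ]` of partial quotients of `a/q` produced by the
Euclidean algorithm. -/
def cfList : ℕ → ℕ → List ℕ
  | a, q =>
    if h : q = 0 then [] else (a / q) :: cfList q (a % q)
termination_by a q => q
decreasing_by exact Nat.mod_lt _ (Nat.pos_of_ne_zero h)

/-- The denominators `v_j` of the convergents of `a/q`:
`v_0 = 1`, `v_1 = b_1`, `v_j = b_j v_{j-1} + v_{j-2}`. -/
def cfDen (a q : ℕ) : ℕ → ℕ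
  | 0 => 1
  | 1 => (cfList a q).getD 1 0
  | (j+2) => (cfList a q).getD (j+2) 0 * cfDen a q (j+1) + cfDen a q j

/-!
By orthogonality of characters, `M_0*(a, q)` is a twisted sum
`F(a, q) = q^(-1/2) ∑_{n mod q} ζ(1/2, {a n / q}) ζ(1/2, {n / q})` of Hurwitz zeta values. Writing
`ζ(1/2, ·)` as a regularized sum of inverse square roots turns `F(h, k)` and `F(-k, h)` into
weighted sums over `v` of `v^(-1/2) ζ(1/2, {h v / k})` and `v^(-1/2) ζ(1/2, {-k v / h})`. Their
difference can be matched term by term, which gives a reciprocity law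
`F(h, k) - F(-k, h) = G(h / k)`, where `G(x) = (π / 2) √x - ζ(1/2)² + ∑_{v ≥ 1} v^(-1/2) E(x v)`
and `E(y) = O(1 / y)`.

The decay of `E` gives the behaviour of `G` at infinity. Near `0` the series is a Riemann sum, and
trapezoidal summation gives `G(x) = x^(-1/2) (γ - log x + c) + ζ(1/2)² + O(x)`. To see that
`c = -log (8 π)`, compare this at `x = 1 / k` with the direct asymptotics of `F(1, k)`, a Riemann
sum for `∫₀¹ (ζ(1/2, t)² - 1 / t) dt`, which Stirling's formula evaluates.

Consecutive convergents satisfy `v_{j+1} ≡ v_{j-1} mod v_j`, so the reciprocity law telescopes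
along the denominators `v_j`. Since `F(a, q) = F(a⁻¹, q)` and `a v_{κ-1} ≡ ± 1 mod q`, the
telescoped value is `F(± a, q)`.
-/

section Trapezoid

open MeasureTheory

variable {f g : ℝ → ℝ} {a b h : ℝ}

lemma trapezoidal_error_one_eq (f : ℝ → ℝ) (a b : ℝ) :
    trapezoidal_error f 1 a b = (b - a) / 2 * (f a + f b) - ∫ t in a..b, f t := by
  rw [trapezoidal_error, trapezoidal_integral_one]

lemma intervalIntegral_affine (a b c d : ℝ) :
    ∫ t in a..b, (c + (t - a) * d) = (b - a) * c + (b - a) ^ 2 / 2 * d := by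
  rw [intervalIntegral.integral_add (by simp)
    (Continuous.intervalIntegrable (by fun_prop) _ _), intervalIntegral.integral_mul_const,
    intervalIntegral.integral_comp_sub_right (fun t => t), integral_id]
  simp

lemma trapezoidal_error_one_nonneg (hab : a ≤ b) (hf : ConvexOn ℝ (Set.Icc a b) f)
    (hfi : IntervalIntegrable f volume a b) : 0 ≤ trapezoidal_error f 1 a b := by
  rcases hab.eq_or_lt with rfl | hlt
  · simp
  have below_chord : ∀ t ∈ Set.Icc a b, f t ≤ f a + (t - a) * ((f b - f a) / (b - a)) := by
    intro t ht
    rcases ht.1.eq_or_lt with rfl | hat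
    · simp
    have := hf.secant_mono (Set.left_mem_Icc.2 hab) ht (Set.right_mem_Icc.2 hab) hat.ne' hlt.ne'
      ht.2
    rw [div_le_iff₀ (sub_pos.2 hat)] at this
    linarith
  have hint := intervalIntegral.integral_mono_on hab hfi
    (Continuous.intervalIntegrable (by fun_prop) _ _) below_chord
  rw [intervalIntegral_affine] at hint
  have : (b - a) ^ 2 / 2 * ((f b - f a) / (b - a)) = (b - a) / 2 * (f b - f a) := by
    field_simp [sub_ne_zero.2 hlt.ne']
  rw [trapezoidal_error_one_eq]
  linarith

lemma trapezoidal_error_one_le_of_convexOn (hh : 0 < h)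
    (hf : ConvexOn ℝ (Set.Icc (a - h) (a + h)) f) (hfi : IntervalIntegrable f volume a (a + h)) :
    trapezoidal_error f 1 a (a + h) ≤ h / 2 * ((f (a + h) - f a) - (f a - f (a - h))) := by
  have above_chord : ∀ t ∈ Set.Icc a (a + h), f a + (t - a) * ((f a - f (a - h)) / h) ≤ f t := by
    intro t ht
    rcases ht.1.eq_or_lt with rfl | hat
    · simp
    have := hf.secant_mono (a := a) (x := a - h) (y := t) ⟨by linarith, by linarith⟩
      ⟨by linarith, by linarith⟩ ⟨by linarith, ht.2⟩ (by linarith) hat.ne' (by linarith)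
    rw [le_div_iff₀ (sub_pos.2 hat), sub_sub_cancel_left, div_neg, ← neg_div, neg_sub] at this
    linarith
  have hint := intervalIntegral.integral_mono_on (by linarith)
    (Continuous.intervalIntegrable (by fun_prop) _ _) hfi above_chord
  rw [intervalIntegral_affine, add_sub_cancel_left] at hint
  have : h ^ 2 / 2 * ((f a - f (a - h)) / h) = h / 2 * (f a - f (a - h)) := by field_simp
  rw [trapezoidal_error_one_eq, add_sub_cancel_left]
  linarith

lemma trapezoidal_error_one_le_of_antitoneOn (hab : a ≤ b) (hf : AntitoneOn f (Set.Icc a b)) :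
    trapezoidal_error f 1 a b ≤ (b - a) / 2 * (f a - f b) := by
  have hint : ∫ _ in a..b, f b ≤ ∫ t in a..b, f t :=
    intervalIntegral.integral_mono_on hab (by simp)
      (hf.mono (Set.uIcc_of_le hab).subset).intervalIntegrable
      fun t ht => hf ht (Set.right_mem_Icc.2 hab) ht.2
  rw [intervalIntegral.integral_const, smul_eq_mul] at hint
  rw [trapezoidal_error_one_eq]
  linarith

lemma abs_trapezoidal_error_one_le {C : ℝ} (hab : a ≤ b) (hf : ∀ t ∈ Set.Icc a b, |f t| ≤ C) :
    |trapezoidal_error f 1 a b| ≤ 2 * (b - a) * C := by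
  have hint : ‖∫ t in a..b, f t‖ ≤ C * |b - a| :=
    intervalIntegral.norm_integral_le_of_norm_le_const fun t ht =>
      hf t (Set.Ioc_subset_Icc_self (Set.uIoc_of_le hab ▸ ht))
  have hends : |(b - a) / 2 * (f a + f b)| ≤ (b - a) / 2 * (C + C) := by
    rw [abs_mul, abs_of_nonneg (by linarith)]
    gcongr
    exact (abs_add_le _ _).trans
      (add_le_add (hf a (Set.left_mem_Icc.2 hab)) (hf b (Set.right_mem_Icc.2 hab)))
  rw [Real.norm_eq_abs, abs_of_nonneg (sub_nonneg.2 hab)] at hint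
  rw [trapezoidal_error_one_eq]
  linarith [abs_sub ((b - a) / 2 * (f a + f b)) (∫ t in a..b, f t)]

lemma sum_trapezoidal_error_one (n : ℕ) (hf : IntervalIntegrable f volume a (a + n * h)) :
    ∑ j ∈ range n, trapezoidal_error f 1 (a + j * h) (a + (j + 1) * h) =
      trapezoidal_error f n a (a + n * h) := by
  rcases n.eq_zero_or_pos with rfl | hn
  · simp
  · exact sum_trapezoidal_error_adjacent_intervals hn hf

lemma trapezoidal_integral_eq_sum (f : ℝ → ℝ) (n : ℕ) (a h : ℝ) :
    trapezoidal_integral f n a (a + n * h) =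
      h * (∑ j ∈ range n, f (a + j * h) + (f (a + n * h) - f a) / 2) := by
  rcases n.eq_zero_or_pos with rfl | hn
  · simp
  rw [← sum_trapezoidal_integral_adjacent_intervals hn, mul_add, mul_sum]
  have htele := sum_range_sub (fun j : ℕ => f (a + j * h)) n
  simp only [Nat.cast_zero, zero_mul, add_zero] at htele
  rw [← htele, sum_div, mul_sum, ← sum_add_distrib]
  refine sum_congr rfl fun j _ => ?_
  rw [trapezoidal_integral_one]
  push_cast
  ring

lemma trapezoidal_error_eq_sum (f : ℝ → ℝ) (n : ℕ) (a h : ℝ) :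
    trapezoidal_error f n a (a + n * h) =
      h * (∑ j ∈ range n, f (a + j * h) + (f (a + n * h) - f a) / 2) -
        ∫ t in a..(a + n * h), f t := by
  rw [trapezoidal_error, trapezoidal_integral_eq_sum]

lemma trapezoidal_error_add (n : ℕ) (hf : IntervalIntegrable f volume a b)
    (hg : IntervalIntegrable g volume a b) :
    trapezoidal_error (fun t => f t + g t) n a b =
      trapezoidal_error f n a b + trapezoidal_error g n a b := by
  simp only [trapezoidal_error, trapezoidal_integral, intervalIntegral.integral_add hf hg,
    sum_add_distrib]
  ring

lemma trapezoidal_error_const_mul (c : ℝ) (n : ℕ) :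
    trapezoidal_error (fun t => c * f t) n a b = c * trapezoidal_error f n a b := by
  simp only [trapezoidal_error, trapezoidal_integral, intervalIntegral.integral_const_mul,
    ← mul_sum]
  ring

lemma trapezoidal_error_comp_mul_left {c : ℝ} (hc : c ≠ 0) (n : ℕ) :
    trapezoidal_error (fun t => f (c * t)) n a b =
      c⁻¹ * trapezoidal_error f n (c * a) (c * b) := by
  simp only [trapezoidal_error, trapezoidal_integral,
    intervalIntegral.integral_comp_mul_left f hc, smul_eq_mul]
  have hnode : ∀ k : ℕ, c * (a + (k + 1) * (b - a) / n) =
      c * a + (k + 1) * (c * b - c * a) / n := fun k => by ring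
  simp only [hnode]
  field_simp

lemma trapezoidal_error_nonneg (n : ℕ) (hh : 0 ≤ h)
    (hf : ConvexOn ℝ (Set.Icc a (a + n * h)) f)
    (hfi : IntervalIntegrable f volume a (a + n * h)) :
    0 ≤ trapezoidal_error f n a (a + n * h) := by
  rw [← sum_trapezoidal_error_one n hfi]
  refine sum_nonneg fun j hj => ?_
  have hjn : (j : ℝ) + 1 ≤ n := by exact_mod_cast mem_range.1 hj
  have hsub : Set.Icc (a + j * h) (a + (j + 1) * h) ⊆ Set.Icc a (a + n * h) :=
    Set.Icc_subset_Icc (by nlinarith [j.cast_nonneg (α := ℝ)]) (by nlinarith)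
  have hle : a + j * h ≤ a + (j + 1) * h := by linarith
  refine trapezoidal_error_one_nonneg hle (hf.subset hsub (convex_Icc _ _)) (hfi.mono_set ?_)
  rwa [Set.uIcc_of_le hle, Set.uIcc_of_le (by nlinarith [n.cast_nonneg (α := ℝ)])]

lemma trapezoidal_error_succ_le_of_convexOn (n : ℕ) (hh : 0 < h)
    (hf : ConvexOn ℝ (Set.Icc a (a + (n + 1) * h)) f)
    (hfi : IntervalIntegrable f volume a (a + (n + 1) * h)) :
    trapezoidal_error f (n + 1) a (a + (n + 1) * h) ≤ trapezoidal_error f 1 a (a + h) +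
      h / 2 * ((f (a + (n + 1) * h) - f (a + n * h)) - (f (a + h) - f a)) := by
  have hcell : ∀ j ∈ range n,
      trapezoidal_error f 1 (a + ((j + 1 : ℕ) : ℝ) * h) (a + (((j + 1 : ℕ) : ℝ) + 1) * h) ≤
        h / 2 * ((f (a + ((j + 1 : ℕ) + 1) * h) - f (a + (j + 1 : ℕ) * h)) -
          (f (a + (j + 1) * h) - f (a + j * h))) := by
    intro j hj
    have hjn : (j : ℝ) + 1 ≤ n := by exact_mod_cast mem_range.1 hj
    have hj0 : (0 : ℝ) ≤ j * h := by positivity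
    have hend : (j + 1 + 1) * h ≤ (n + 1) * h := by gcongr
    have := trapezoidal_error_one_le_of_convexOn (a := a + (j + 1) * h) hh
      (hf.subset (Set.Icc_subset_Icc (by linarith) (by linarith)) (convex_Icc _ _))
      (hfi.mono_set (by
        rw [Set.uIcc_of_le (by linarith), Set.uIcc_of_le (by linarith)]
        exact Set.Icc_subset_Icc (by linarith) (by linarith)))
    push_cast
    rwa [show a + ((j : ℝ) + 1) * h + h = a + (j + 1 + 1) * h by ring,
      show a + ((j : ℝ) + 1) * h - h = a + j * h by ring] at this
  have htele := sum_range_sub (fun j : ℕ => f (a + (j + 1) * h) - f (a + j * h)) n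
  have hsum := sum_trapezoidal_error_one (n + 1) (f := f) (a := a) (h := h) (by exact_mod_cast hfi)
  rw [sum_range_succ'] at hsum
  simp only [Nat.cast_zero, zero_mul, add_zero, zero_add, one_mul] at hsum htele
  have := sum_le_sum hcell
  rw [← mul_sum] at this
  push_cast at this hsum htele
  rw [htele] at this
  linarith

lemma trapezoidal_error_le_of_convexOn_antitoneOn (n : ℕ) (hh : 0 < h)
    (hf : ConvexOn ℝ (Set.Ici a) f) (hanti : AntitoneOn f (Set.Ici a)) :
    trapezoidal_error f n a (a + n * h) ≤ h * (f a - f (a + h)) := by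
  have hsub : ∀ b, Set.Icc a b ⊆ Set.Ici a := fun b => Set.Icc_subset_Ici_self
  have hdrop : 0 ≤ f a - f (a + h) :=
    sub_nonneg.2 (hanti Set.self_mem_Ici (by simp [hh.le]) (by linarith))
  cases n with
  | zero => simpa using mul_nonneg hh.le hdrop
  | succ n =>
    have hnh : 0 ≤ (n : ℝ) * h := by positivity
    have hfi : IntervalIntegrable f volume a (a + (n + 1) * h) := by
      refine (hanti.mono ?_).intervalIntegrable
      rw [Set.uIcc_of_le (by linarith)]
      exact hsub _
    have htotal := trapezoidal_error_succ_le_of_convexOn n hh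
      (hf.subset (hsub _) (convex_Icc _ _)) hfi
    have hfirst := trapezoidal_error_one_le_of_antitoneOn (b := a + h) (by linarith)
      (hanti.mono (hsub _))
    have hlast : f (a + (n + 1) * h) ≤ f (a + n * h) :=
      hanti (by simpa using hnh) (by simp; linarith) (by linarith)
    push_cast
    nlinarith

lemma trapezoidal_error_comp_add_right (f : ℝ → ℝ) (n : ℕ) (a b d : ℝ) :
    trapezoidal_error (fun t => f (t + d)) n a b = trapezoidal_error f n (a + d) (b + d) := by
  have hnode : ∀ k : ℕ, a + (k + 1) * (b - a) / n + d =
      a + d + (k + 1) * (b + d - (a + d)) / n := fun k => by ring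
  simp only [trapezoidal_error, trapezoidal_integral,
    intervalIntegral.integral_comp_add_right (fun t => f t), hnode, add_sub_add_right_eq_sub]

lemma trapezoidal_error_succ (n : ℕ)
    (hf : IntervalIntegrable f volume a (a + (n + 1) * h)) :
    trapezoidal_error f (n + 1) a (a + (n + 1) * h) = trapezoidal_error f 1 a (a + h) +
      trapezoidal_error f n (a + h) (a + h + n * h) := by
  have hshift : ∀ j : ℕ, trapezoidal_error f 1 (a + (j + 1 : ℕ) * h) (a + ((j + 1 : ℕ) + 1) * h) =
      trapezoidal_error f 1 (a + h + j * h) (a + h + (j + 1) * h) := fun j => by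
    push_cast
    ring_nf
  have htail : IntervalIntegrable f volume (a + h) (a + h + n * h) := by
    have hend : a + h + n * h = a + (n + 1) * h := by ring
    refine hf.mono_set ?_
    rw [hend, Set.uIcc_subset_uIcc_iff_mem]
    refine ⟨?_, Set.right_mem_uIcc⟩
    rcases le_total 0 h with hh | hh
    · exact Set.mem_uIcc.2 (.inl ⟨by linarith, by nlinarith [n.cast_nonneg (α := ℝ)]⟩)
    · exact Set.mem_uIcc.2 (.inr ⟨by nlinarith [n.cast_nonneg (α := ℝ)], by linarith⟩)
  have hsum := sum_trapezoidal_error_one (n + 1) (by exact_mod_cast hf)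
  rw [sum_range_succ', sum_congr rfl fun j _ => hshift j, sum_trapezoidal_error_one n htail] at hsum
  simp only [Nat.cast_add, Nat.cast_one, Nat.cast_zero, zero_mul, add_zero, zero_add,
    one_mul] at hsum
  rw [← hsum, add_comm]

lemma add_natCast_mul_mem_Icc {j n : ℕ} (hh : 0 ≤ h) (hj : j ≤ n) :
    a + j * h ∈ Set.Icc a (a + n * h) :=
  ⟨le_add_of_nonneg_right (by positivity), by gcongr⟩

lemma trapezoidal_error_congr (n : ℕ) (hh : 0 ≤ h)
    (hfg : Set.EqOn f g (Set.Icc a (a + n * h))) :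
    trapezoidal_error f n a (a + n * h) = trapezoidal_error g n a (a + n * h) := by
  have hle : a ≤ a + n * h := le_add_of_nonneg_right (by positivity)
  rw [trapezoidal_error_eq_sum, trapezoidal_error_eq_sum,
    sum_congr rfl fun j hj => hfg (add_natCast_mul_mem_Icc hh (mem_range.1 hj).le),
    hfg (Set.right_mem_Icc.2 hle), hfg (Set.left_mem_Icc.2 hle),
    intervalIntegral.integral_congr ((Set.uIcc_of_le hle).symm ▸ hfg)]

lemma hasSum_trapezoidal_error {f : ℕ → ℝ → ℝ} {F : ℝ → ℝ} {C : ℕ → ℝ} (n : ℕ)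
    (hh : 0 ≤ h) (hcont : ∀ m, ContinuousOn (f m) (Set.Icc a (a + n * h)))
    (hbound : ∀ m, ∀ t ∈ Set.Icc a (a + n * h), |f m t| ≤ C m) (hC : Summable C)
    (hsum : ∀ t ∈ Set.Icc a (a + n * h), HasSum (fun m => f m t) (F t)) :
    HasSum (fun m => trapezoidal_error (f m) n a (a + n * h))
      (trapezoidal_error F n a (a + n * h)) := by
  have hle : a ≤ a + n * h := le_add_of_nonneg_right (by positivity)
  have hsub : Set.uIoc a (a + n * h) ⊆ Set.Icc a (a + n * h) := by
    rw [Set.uIoc_of_le hle]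
    exact Set.Ioc_subset_Icc_self
  simp only [trapezoidal_error_eq_sum]
  refine ((HasSum.add
    (hasSum_sum fun j hj => hsum _ (add_natCast_mul_mem_Icc hh (mem_range.1 hj).le))
    (((hsum _ (Set.right_mem_Icc.2 hle)).sub (hsum _ (Set.left_mem_Icc.2 hle))).div_const 2)
    ).mul_left h).sub ?_
  exact intervalIntegral.hasSum_integral_of_dominated_convergence (fun m _ => C m)
    (fun m => ((hcont m).mono hsub).aestronglyMeasurable measurableSet_uIoc)
    (fun m => .of_forall fun t ht => hbound m t (hsub ht))
    (.of_forall fun _ _ => hC) (by simp) (.of_forall fun t ht => hsum t (hsub ht))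

lemma abs_trapezoidal_error_le_of_sub_convexOn_antitoneOn {u v : ℝ → ℝ} {c : ℝ} (n : ℕ)
    (hh : 0 < h) (hc : 0 ≤ c) (hf : ∀ y ∈ Set.Ici a, f y = -c * u y + 2 * v y)
    (hu : ConvexOn ℝ (Set.Ici a) u) (hu' : AntitoneOn u (Set.Ici a))
    (hv : ConvexOn ℝ (Set.Ici a) v) (hv' : AntitoneOn v (Set.Ici a)) :
    |trapezoidal_error f n a (a + n * h)| ≤
      h * (|f a| + |f (a + h)| + 2 * c * (u a - u (a + h))) := by
  have hsub : Set.uIcc a (a + n * h) ⊆ Set.Ici a := by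
    rw [Set.uIcc_of_le (le_add_of_nonneg_right (by positivity))]
    exact Set.Icc_subset_Ici_self
  have hint : ∀ {w : ℝ → ℝ}, AntitoneOn w (Set.Ici a) →
      IntervalIntegrable w volume a (a + n * h) :=
    fun hw => (hw.mono hsub).intervalIntegrable
  have hnonneg : ∀ {w : ℝ → ℝ}, ConvexOn ℝ (Set.Ici a) w → AntitoneOn w (Set.Ici a) →
      0 ≤ trapezoidal_error w n a (a + n * h) := fun hw hw' =>
    trapezoidal_error_nonneg n hh.le (hw.subset Set.Icc_subset_Ici_self (convex_Icc _ _)) (hint hw')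
  have hsplit : trapezoidal_error f n a (a + n * h) =
      -c * trapezoidal_error u n a (a + n * h) + 2 * trapezoidal_error v n a (a + n * h) := by
    rw [trapezoidal_error_congr n hh.le fun y hy => hf y hy.1,
      trapezoidal_error_add n ((hint hu').const_mul _) ((hint hv').const_mul _),
      trapezoidal_error_const_mul, trapezoidal_error_const_mul]
  have hule := trapezoidal_error_le_of_convexOn_antitoneOn n hh hu hu'
  have hvle := trapezoidal_error_le_of_convexOn_antitoneOn n hh hv hv'
  have hdrop : 0 ≤ c * (u a - u (a + h)) :=
    mul_nonneg hc (sub_nonneg.2 (hu' Set.self_mem_Ici (by simp [hh.le]) (by linarith)))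
  have hvdrop : 2 * (v a - v (a + h)) ≤ |f a| + |f (a + h)| + c * (u a - u (a + h)) := by
    have hfa := hf a Set.self_mem_Ici
    have hfah := hf (a + h) (by simp [hh.le])
    linarith [le_abs_self (f a), neg_abs_le (f (a + h))]
  have hcu := mul_le_mul_of_nonneg_left hule hc
  have hcu0 := mul_nonneg hc (hnonneg hu hu')
  have hends : 0 ≤ h * (|f a| + |f (a + h)| + c * (u a - u (a + h))) := by positivity
  rw [hsplit, abs_le]
  constructor
  · linarith [hnonneg hv hv', mul_nonneg hh.le hdrop]
  · linarith [mul_le_mul_of_nonneg_left hvdrop hh.le, mul_nonneg hh.le hdrop]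

end Trapezoid

section SquareRoots

lemma one_div_sqrt_sub_nonneg {s t : ℝ} (hs : 0 < s) (hst : s ≤ t) : 0 ≤ 1 / √s - 1 / √t :=
  sub_nonneg.2 (one_div_le_one_div_of_le (Real.sqrt_pos.2 hs) (Real.sqrt_le_sqrt hst))

lemma one_div_sqrt_sub_le {s t : ℝ} (hs : 0 < s) (hst : s ≤ t) :
    1 / √s - 1 / √t ≤ (t - s) / √s ^ 3 := by
  have ha : 0 < √s := Real.sqrt_pos.2 hs
  have hab : √s ≤ √t := Real.sqrt_le_sqrt hst
  have ha2 : s = √s ^ 2 := (Real.sq_sqrt hs.le).symm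
  have hb2 : t = √t ^ 2 := (Real.sq_sqrt (hs.le.trans hst)).symm
  generalize √s = a at *
  generalize √t = b at *
  subst ha2 hb2
  have hb : 0 < b := ha.trans_le hab
  rw [div_sub_div _ _ ha.ne' hb.ne', div_le_div_iff₀ (by positivity) (by positivity)]
  have : 0 ≤ (b - a) * (a * ((b + a) * b - a ^ 2)) :=
    mul_nonneg (by linarith) (mul_nonneg ha.le (by nlinarith))
  linarith

lemma sqrt_sub_sqrt_le {s t : ℝ} (hs : 0 < s) (hst : s ≤ t) : √t - √s ≤ (t - s) / √s := by
  have ha : 0 < √s := Real.sqrt_pos.2 hs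
  rw [le_div_iff₀ ha]
  nlinarith [Real.sqrt_le_sqrt hst, Real.sq_sqrt hs.le, Real.sq_sqrt (hs.le.trans hst)]

lemma two_mul_sqrt_add_one_sub_sqrt {u : ℝ} (hu : 0 ≤ u) :
    2 * (√(u + 1) - √u) = 2 / (√u + √(u + 1)) := by
  have : 0 < √(u + 1) := Real.sqrt_pos.2 (by linarith)
  rw [eq_div_iff (by positivity)]
  nlinarith [Real.sq_sqrt hu, Real.sq_sqrt (show 0 ≤ u + 1 by linarith)]

lemma two_mul_sqrt_add_one_sub_sqrt_le {u : ℝ} (hu : 0 < u) :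
    2 * (√(u + 1) - √u) ≤ 1 / √u := by
  have ha : 0 < √u := Real.sqrt_pos.2 hu
  rw [two_mul_sqrt_add_one_sub_sqrt hu.le, div_le_div_iff₀ (by positivity) ha]
  linarith [Real.sqrt_le_sqrt (show u ≤ u + 1 by linarith)]

lemma one_div_sqrt_add_one_le {u : ℝ} (hu : 0 ≤ u) :
    1 / √(u + 1) ≤ 2 * (√(u + 1) - √u) := by
  have hb : 0 < √(u + 1) := Real.sqrt_pos.2 (by linarith)
  rw [two_mul_sqrt_add_one_sub_sqrt hu, div_le_div_iff₀ hb (by positivity)]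
  linarith [Real.sqrt_le_sqrt (show u ≤ u + 1 by linarith)]

lemma tendsto_one_div_sqrt_atTop :
    Filter.Tendsto (fun x : ℝ => 1 / √x) Filter.atTop (nhds 0) := by
  simpa [Function.comp_def] using tendsto_inv_atTop_zero.comp Real.tendsto_sqrt_atTop

lemma sqrt_two_mul_le (x : ℝ) : √(2 * x) ≤ 2 * √x := by
  rw [Real.sqrt_mul zero_le_two]
  gcongr
  exact Real.sqrt_le_iff.2 ⟨zero_le_two, by norm_num⟩

lemma le_sqrt_self {x : ℝ} (hx0 : 0 ≤ x) (hx1 : x ≤ 1) : x ≤ √x :=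
  Real.le_sqrt_of_sq_le (by nlinarith)

lemma antitoneOn_one_div_sqrt : AntitoneOn (fun t : ℝ => 1 / √t) (Set.Ioi 0) :=
  fun _ hs _ _ hst => sub_nonneg.1 (one_div_sqrt_sub_nonneg hs hst)

lemma continuousOn_one_div_sqrt : ContinuousOn (fun t : ℝ => 1 / √t) (Set.Ioi 0) :=
  continuousOn_const.div (by fun_prop) fun _ ht => (Real.sqrt_pos.2 ht).ne'

lemma convexOn_one_div {S : Set ℝ} {f : ℝ → ℝ} (hf : ConcaveOn ℝ S f)
    (hpos : ∀ y ∈ S, 0 < f y) : ConvexOn ℝ S (fun y => 1 / f y) := by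
  have hinv : ConvexOn ℝ (Set.Ioi (0 : ℝ)) (fun t => t ^ (-1 : ℤ)) := convexOn_zpow (-1)
  simp only [one_div, ← zpow_neg_one]
  refine ⟨hf.1, fun x hx y hy a b ha hb hab => ?_⟩
  have hcomb : 0 < a • f x + b • f y := hinv.1 (hpos x hx) (hpos y hy) ha hb hab
  refine le_trans ?_ (hinv.2 (hpos x hx) (hpos y hy) ha hb hab)
  simp only [zpow_neg_one]
  exact inv_anti₀ hcomb (hf.2 hx hy ha hb hab)

lemma convexOn_one_div_sqrt : ConvexOn ℝ (Set.Ioi 0) (fun t : ℝ => 1 / √t) :=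
  convexOn_one_div
    (Real.strictConcaveOn_sqrt.concaveOn.subset Set.Ioi_subset_Ici_self (convex_Ioi 0))
    fun _ hy => Real.sqrt_pos.2 hy

lemma integral_one_div_sqrt {a b : ℝ} (ha : 0 ≤ a) (hb : 0 ≤ b) :
    ∫ t in a..b, 1 / √t = 2 * (√b - √a) := by
  have hcongr : ∫ t in a..b, 1 / √t = ∫ t in a..b, t ^ (-1 / 2 : ℝ) := by
    refine intervalIntegral.integral_congr fun t ht => ?_
    have ht0 : 0 ≤ t := (le_inf ha hb).trans ht.1
    simp only [Real.sqrt_eq_rpow, one_div, ← Real.rpow_neg ht0]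
    norm_num
  rw [hcongr, integral_rpow (Or.inl (by norm_num)), Real.sqrt_eq_rpow, Real.sqrt_eq_rpow]
  norm_num
  ring

end SquareRoots

section HurwitzHalf

/-- The Hurwitz zeta value `ζ(1/2, x)` for real `x > 0`: the constant term in the expansion
`∑_{j < N} (x + j)^(-1/2) = 2 √(x + N) + ζ(1/2, x) + o(1)`, written as an absolutely convergent
series. -/
noncomputable def hurwitzHalf (x : ℝ) : ℝ :=
  -2 * √x + ∑' n : ℕ, (1 / √(x + n) - 2 * (√(x + n + 1) - √(x + n)))

variable {x s t : ℝ}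

lemma sum_one_div_sqrt_sub_eq (x : ℝ) (N : ℕ) :
    ∑ n ∈ range N, (1 / √(x + n) - 2 * (√(x + n + 1) - √(x + n))) =
      ∑ n ∈ range N, 1 / √(x + n) - 2 * (√(x + N) - √x) := by
  have htele := sum_range_sub (fun n : ℕ => √(x + n)) N
  push_cast at htele
  simp only [← add_assoc, add_zero] at htele
  rw [sum_sub_distrib, ← mul_sum, htele]

lemma tendsto_sum_one_div_sqrt_sub (hx : 0 < x) :
    Filter.Tendsto (fun N : ℕ => ∑ n ∈ range N, 1 / √(x + n) - 2 * √(x + N)) Filter.atTop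
      (nhds (hurwitzHalf x)) := by
  have hnonneg : ∀ n : ℕ, 0 ≤ 1 / √(x + n) - 2 * (√(x + n + 1) - √(x + n)) := fun n =>
    sub_nonneg.2 (two_mul_sqrt_add_one_sub_sqrt_le (by positivity))
  have hbounded : ∀ N : ℕ,
      ∑ n ∈ range N, (1 / √(x + n) - 2 * (√(x + n + 1) - √(x + n))) ≤ 1 / √x := by
    intro N
    calc _ ≤ ∑ n ∈ range N, (1 / √(x + n) - 1 / √(x + (n + 1 : ℕ))) := by
          refine sum_le_sum fun n _ => sub_le_sub_left ?_ _
          rw [Nat.cast_succ, ← add_assoc]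
          exact one_div_sqrt_add_one_le (by positivity)
      _ = 1 / √x - 1 / √(x + N) := by
          rw [sum_range_sub' (fun n : ℕ => 1 / √(x + n)), Nat.cast_zero, add_zero]
      _ ≤ 1 / √x := sub_le_self _ (by positivity)
  have hsum := (summable_of_sum_range_le hnonneg hbounded).hasSum.tendsto_sum_nat
  refine (hsum.const_add (-2 * √x)).congr fun N => ?_
  rw [sum_one_div_sqrt_sub_eq]
  ring

lemma hurwitzHalf_eq_sum_add (hx : 0 < x) (N : ℕ) :
    hurwitzHalf x = ∑ j ∈ range N, 1 / √(x + j) + hurwitzHalf (x + N) := by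
  have hshift := (Filter.tendsto_add_atTop_iff_nat N).2 (tendsto_sum_one_div_sqrt_sub hx)
  have htail := (tendsto_sum_one_div_sqrt_sub (x := x + N) (by positivity)).const_add
    (∑ j ∈ range N, 1 / √(x + j))
  refine tendsto_nhds_unique (hshift.congr fun M => ?_) htail
  rw [add_comm M N, sum_range_add]
  push_cast
  simp only [← add_assoc]
  ring

lemma hurwitzHalf_eq_one_div_sqrt_add (hx : 0 < x) :
    hurwitzHalf x = 1 / √x + hurwitzHalf (x + 1) := by
  simpa using hurwitzHalf_eq_sum_add hx 1

lemma sum_one_div_sqrt_sub_eq_trapezoidal_error (hx : 0 < x) (N : ℕ) :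
    ∑ n ∈ range N, 1 / √(x + n) - 2 * √(x + N) =
      -2 * √x + 1 / (2 * √x) - 1 / (2 * √(x + N)) +
        trapezoidal_error (fun t => 1 / √t) N x (x + N) := by
  have h := trapezoidal_error_eq_sum (fun t => 1 / √t) N x 1
  simp only [mul_one, one_mul] at h
  rw [h, integral_one_div_sqrt hx.le (by positivity)]
  ring

lemma trapezoidal_error_one_div_sqrt_mem_Icc (hx : 0 < x) (N : ℕ) :
    trapezoidal_error (fun t => 1 / √t) N x (x + N) ∈ Set.Icc 0 (1 / √x ^ 3) := by
  have hsub : Set.Ici x ⊆ Set.Ioi 0 := Set.Ici_subset_Ioi.2 hx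
  have hconv := convexOn_one_div_sqrt.subset hsub (convex_Ici x)
  have hanti := antitoneOn_one_div_sqrt.mono hsub
  constructor
  · have := trapezoidal_error_nonneg (a := x) (h := 1) N zero_le_one
      (hconv.subset Set.Icc_subset_Ici_self (convex_Icc _ _))
      ((hanti.mono (by rw [Set.uIcc_of_le (by simp)]; exact Set.Icc_subset_Ici_self)
        ).intervalIntegrable)
    rwa [mul_one] at this
  · have := trapezoidal_error_le_of_convexOn_antitoneOn N one_pos hconv hanti
    have hstep := one_div_sqrt_sub_le hx (show x ≤ x + 1 by linarith)
    simp only [mul_one, one_mul, add_sub_cancel_left] at this hstep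
    exact this.trans hstep

lemma hurwitzHalf_sub_mem_Icc (hx : 0 < x) :
    hurwitzHalf x - (-2 * √x + 1 / (2 * √x)) ∈ Set.Icc 0 (1 / √x ^ 3) := by
  have hend : Filter.Tendsto (fun N : ℕ => 1 / (2 * √(x + N))) Filter.atTop (nhds 0) := by
    have := ((tendsto_one_div_sqrt_atTop.comp (Filter.tendsto_atTop_add_const_left _ x
      tendsto_natCast_atTop_atTop)).const_mul (1 / 2))
    rw [mul_zero] at this
    exact this.congr fun N => by simp [mul_comm]
  have hlim := ((tendsto_sum_one_div_sqrt_sub hx).add hend).sub_const (-2 * √x + 1 / (2 * √x))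
  rw [add_zero] at hlim
  refine isClosed_Icc.mem_of_tendsto hlim (Filter.Eventually.of_forall fun N => ?_)
  rw [sum_one_div_sqrt_sub_eq_trapezoidal_error hx]
  convert trapezoidal_error_one_div_sqrt_mem_Icc hx N using 1
  ring

lemma tendsto_hurwitzHalf_add_two_mul_sqrt :
    Filter.Tendsto (fun x : ℝ => hurwitzHalf x + 2 * √x) Filter.atTop (nhds 0) := by
  have hinv := tendsto_one_div_sqrt_atTop
  have hupper : Filter.Tendsto (fun x : ℝ => 1 / 2 * (1 / √x) + (1 / √x) ^ 3)
      Filter.atTop (nhds 0) := by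
    simpa using (hinv.const_mul (1 / 2 : ℝ)).add (hinv.pow 3)
  have hcubed : ∀ x : ℝ, 1 / √x ^ 3 = (1 / √x) ^ 3 := fun x => (one_div_pow _ 3).symm
  have hhalf : ∀ x : ℝ, 1 / (2 * √x) = 1 / 2 * (1 / √x) := fun x => (one_div_mul_one_div _ _).symm
  refine squeeze_zero' ?_ ?_ hupper
  · filter_upwards [Filter.eventually_gt_atTop 0] with x hx
    have : 0 ≤ 1 / (2 * √x) := by positivity
    linarith [(hurwitzHalf_sub_mem_Icc hx).1]
  · filter_upwards [Filter.eventually_gt_atTop 0] with x hx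
    have := (hurwitzHalf_sub_mem_Icc hx).2
    rw [hcubed, hhalf] at this
    linarith

lemma tendsto_sqrt_add_sub_sqrt_add (s t : ℝ) :
    Filter.Tendsto (fun x : ℝ => √(t + x) - √(s + x)) Filter.atTop (nhds 0) := by
  wlog hst : s ≤ t generalizing s t
  · simpa using (this t s (le_of_not_ge hst)).neg
  have hbound : Filter.Tendsto (fun x : ℝ => (t - s) * (1 / √(s + x))) Filter.atTop (nhds 0) := by
    simpa using (tendsto_one_div_sqrt_atTop.comp
      (Filter.tendsto_atTop_add_const_left _ s Filter.tendsto_id)).const_mul (t - s)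
  refine squeeze_zero' (.of_forall fun x => sub_nonneg.2 (Real.sqrt_le_sqrt (by linarith))) ?_
    hbound
  filter_upwards [Filter.eventually_gt_atTop (-s)] with x hx
  refine (sqrt_sub_sqrt_le (by linarith) (by linarith)).trans_eq ?_
  rw [add_sub_add_right_eq_sub, mul_one_div]

lemma hasSum_hurwitzHalf_sub (hs : 0 < s) (hst : s ≤ t) :
    HasSum (fun j : ℕ => 1 / √(s + j) - 1 / √(t + j)) (hurwitzHalf s - hurwitzHalf t) := by
  rw [hasSum_iff_tendsto_nat_of_nonneg
    fun j => one_div_sqrt_sub_nonneg (by positivity) (by linarith)]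
  have hlim := ((tendsto_sum_one_div_sqrt_sub hs).sub
    (tendsto_sum_one_div_sqrt_sub (hs.trans_le hst))).sub
    (((tendsto_sqrt_add_sub_sqrt_add s t).comp tendsto_natCast_atTop_atTop).const_mul 2)
  rw [mul_zero, sub_zero] at hlim
  refine hlim.congr fun N => ?_
  rw [sum_sub_distrib, Function.comp_apply]
  ring

lemma summable_one_div_sqrt_cube : Summable (fun m : ℕ => 1 / √((m : ℝ) + 1) ^ 3) := by
  refine ((summable_nat_add_iff 1).2 (Real.summable_one_div_nat_rpow.2
    (show (1 : ℝ) < 3 / 2 by norm_num))).congr fun m => ?_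
  rw [Real.sqrt_eq_rpow, ← Real.rpow_mul_natCast (by positivity)]
  norm_num

/-- The constant `ζ(3/2)`, in terms of which the error terms below are bounded. -/
noncomputable def zetaThreeHalves : ℝ := ∑' m : ℕ, 1 / √((m : ℝ) + 1) ^ 3

lemma one_le_zetaThreeHalves : 1 ≤ zetaThreeHalves := by
  simpa [zetaThreeHalves] using summable_one_div_sqrt_cube.le_tsum 0 fun j _ => by positivity

lemma hurwitzHalf_antitoneOn : AntitoneOn hurwitzHalf (Set.Ioi 0) := fun s hs _ _ hst =>
  sub_nonneg.1 ((hasSum_hurwitzHalf_sub hs hst).nonneg fun j =>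
    one_div_sqrt_sub_nonneg (add_pos_of_pos_of_nonneg hs j.cast_nonneg) (by linarith))

lemma hurwitzHalf_sub_le (hs : 1 ≤ s) (hst : s ≤ t) :
    hurwitzHalf s - hurwitzHalf t ≤ zetaThreeHalves * (t - s) := by
  refine hasSum_le (fun j => ?_) (hasSum_hurwitzHalf_sub (by linarith) hst)
    (summable_one_div_sqrt_cube.hasSum.mul_right (t - s))
  refine (one_div_sqrt_sub_le (by positivity) (by linarith)).trans ?_
  rw [add_sub_add_right_eq_sub, div_eq_mul_one_div, mul_comm]
  refine mul_le_mul_of_nonneg_right ?_ (by linarith)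
  rw [add_comm s]
  gcongr

lemma continuousOn_hurwitzHalf_Ici_one : ContinuousOn hurwitzHalf (Set.Ici 1) := by
  have hlip : LipschitzOnWith (Real.toNNReal zetaThreeHalves) hurwitzHalf (Set.Ici 1) := by
    refine LipschitzOnWith.of_dist_le_mul fun x hx y hy => ?_
    rw [Real.coe_toNNReal _ (zero_le_one.trans one_le_zetaThreeHalves)]
    wlog hxy : x ≤ y generalizing x y
    · rw [dist_comm, dist_comm x y]
      exact this y hy x hx (le_of_not_ge hxy)
    have hanti := hurwitzHalf_antitoneOn (Set.Ici_subset_Ioi.2 one_pos hx)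
      (Set.Ici_subset_Ioi.2 one_pos hy) hxy
    rw [Real.dist_eq, Real.dist_eq, abs_of_nonneg (sub_nonneg.2 hanti), abs_sub_comm,
      abs_of_nonneg (sub_nonneg.2 hxy)]
    exact hurwitzHalf_sub_le hx hxy
  exact hlip.continuousOn

lemma continuousOn_hurwitzHalf : ContinuousOn hurwitzHalf (Set.Ioi 0) := by
  refine (continuousOn_one_div_sqrt.add (continuousOn_hurwitzHalf_Ici_one.comp (by fun_prop)
    fun x hx => ?_)).congr fun x hx => hurwitzHalf_eq_one_div_sqrt_add hx
  simpa using (Set.mem_Ioi.1 hx).le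

end HurwitzHalf

section KernelProfile

/-- The profile `B(t) = 2 / (1 + √t + √(1 - t))` of the reciprocity kernel: for `0 < m ≤ y` the
summand `kernelTerm m y` is `-1/√m + B(m/y)/√y`. -/
noncomputable def kernelProfile (t : ℝ) : ℝ := 2 * (1 / (1 + √t + √(1 - t)))

variable {t e h : ℝ}

lemma continuous_kernelProfile : Continuous kernelProfile :=
  continuous_const.mul (continuous_const.div (by fun_prop) fun _ => by positivity)

lemma intervalIntegrable_kernelProfile (a b : ℝ) :
    IntervalIntegrable kernelProfile MeasureTheory.volume a b :=
  continuous_kernelProfile.intervalIntegrable a b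

lemma kernelProfile_zero : kernelProfile 0 = 1 := by norm_num [kernelProfile]

lemma kernelProfile_one_sub (t : ℝ) : kernelProfile (1 - t) = kernelProfile t := by
  rw [kernelProfile, kernelProfile, sub_sub_cancel, add_right_comm]

lemma concaveOn_sqrt_one_sub : ConcaveOn ℝ (Set.Icc 0 1) (fun t : ℝ => √(1 - t)) := by
  have hcomp := Real.strictConcaveOn_sqrt.concaveOn.comp_affineMap
    (AffineMap.lineMap (1 : ℝ) (0 : ℝ))
  have hfun : Real.sqrt ∘ (AffineMap.lineMap (1 : ℝ) (0 : ℝ)) = fun t : ℝ => √(1 - t) := by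
    ext t
    simp [AffineMap.lineMap_apply, sub_eq_neg_add]
  rw [hfun] at hcomp
  exact hcomp.subset (fun t ht => by simp [AffineMap.lineMap_apply, ht.2]) (convex_Icc 0 1)

lemma convexOn_kernelProfile : ConvexOn ℝ (Set.Icc 0 1) kernelProfile := by
  have hsqrt : ConcaveOn ℝ (Set.Icc (0 : ℝ) 1) (fun t => √t) :=
    Real.strictConcaveOn_sqrt.concaveOn.subset (fun _ ht => ht.1) (convex_Icc _ _)
  have hden := ((concaveOn_const (1 : ℝ) (convex_Icc _ _)).add hsqrt).add concaveOn_sqrt_one_sub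
  exact (convexOn_one_div hden fun t _ =>
    show (0 : ℝ) < 1 + √t + √(1 - t) by positivity).smul zero_le_two

lemma kernelProfile_le_one (ht : t ∈ Set.Icc 0 1) : kernelProfile t ≤ 1 := by
  have hden : 1 ≤ √t + √(1 - t) := by
    nlinarith [mul_nonneg (Real.sqrt_nonneg t) (Real.sqrt_nonneg (1 - t)), Real.sq_sqrt ht.1,
      Real.sq_sqrt (sub_nonneg.2 ht.2), Real.sqrt_nonneg t, Real.sqrt_nonneg (1 - t)]
  rw [kernelProfile, mul_one_div, div_le_one (by positivity)]
  linarith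

lemma one_sub_kernelProfile_le (ht : t ∈ Set.Icc 0 1) : 1 - kernelProfile t ≤ √t / 2 := by
  have hle : √(1 - t) ≤ 1 := Real.sqrt_le_one.2 (by linarith [ht.1])
  have hsq : √t * √t = t := Real.mul_self_sqrt ht.1
  have hsq' : √(1 - t) * √(1 - t) = 1 - t := Real.mul_self_sqrt (by linarith [ht.2])
  rw [kernelProfile, mul_one_div, sub_le_iff_le_add, ← sub_le_iff_le_add',
    le_div_iff₀ (by positivity)]
  nlinarith [mul_nonneg (Real.sqrt_nonneg t) (Real.sqrt_nonneg (1 - t)), Real.sqrt_nonneg t,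
    Real.sqrt_nonneg (1 - t)]

lemma one_sub_kernelProfile_le' (ht : t ∈ Set.Icc 0 1) :
    1 - kernelProfile t ≤ √(1 - t) / 2 := by
  rw [← kernelProfile_one_sub t]
  exact one_sub_kernelProfile_le ⟨sub_nonneg.2 ht.2, sub_le_self 1 ht.1⟩

lemma hasDerivAt_kernelProfile_antideriv (ht : t ∈ Set.Ioo 0 1) :
    HasDerivAt (fun t => 2 * √t - 2 * √(1 - t) - Real.arcsin (2 * t - 1)) (kernelProfile t) t := by
  have h1t : 0 < 1 - t := sub_pos.2 ht.2
  have hsqrt : HasDerivAt (fun t : ℝ => √t) (1 / (2 * √t)) t := Real.hasDerivAt_sqrt ht.1.ne'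
  have hsqrt' : HasDerivAt (fun t : ℝ => √(1 - t)) (-1 / (2 * √(1 - t))) t :=
    ((hasDerivAt_id t).const_sub 1).sqrt h1t.ne'
  have hlin : HasDerivAt (fun t : ℝ => 2 * t - 1) 2 t := by
    simpa using ((hasDerivAt_id t).const_mul 2).sub_const 1
  have harcsin := (Real.hasDerivAt_arcsin (x := 2 * t - 1) (by linarith [ht.1])
    (by linarith)).comp t hlin
  refine (((hsqrt.const_mul 2).sub (hsqrt'.const_mul 2)).sub harcsin).congr_deriv ?_
  have hprod : √(1 - (2 * t - 1) ^ 2) = 2 * (√t * √(1 - t)) := by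
    rw [show 1 - (2 * t - 1) ^ 2 = 2 ^ 2 * (t * (1 - t)) by ring, Real.sqrt_mul (by norm_num),
      Real.sqrt_sq zero_le_two, Real.sqrt_mul ht.1.le]
  have hcircle : √t ^ 2 + √(1 - t) ^ 2 = 1 := by
    rw [Real.sq_sqrt ht.1.le, Real.sq_sqrt h1t.le]
    ring
  have ha : 0 < √t := Real.sqrt_pos.2 ht.1
  have hb : 0 < √(1 - t) := Real.sqrt_pos.2 h1t
  rw [hprod, kernelProfile]
  generalize √t = a at *
  generalize √(1 - t) = b at *
  field_simp
  nlinarith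

lemma integral_kernelProfile : ∫ t in (0 : ℝ)..1, kernelProfile t = 4 - π := by
  rw [intervalIntegral.integral_eq_sub_of_hasDerivAt_of_le zero_le_one
    (Continuous.continuousOn (by fun_prop)) (fun _ => hasDerivAt_kernelProfile_antideriv)
    (intervalIntegrable_kernelProfile 0 1)]
  norm_num
  ring

lemma integral_kernelProfile_tail_mem_Icc (he : e ∈ Set.Icc 0 1) :
    ∫ t in e..1, kernelProfile t ∈ Set.Icc ((1 - e) * (1 - √(1 - e) / 2)) (1 - e) := by
  have hlower : ∫ _ in e..1, (1 - √(1 - e) / 2) ≤ ∫ t in e..1, kernelProfile t := by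
    refine intervalIntegral.integral_mono_on he.2 (by simp)
      (intervalIntegrable_kernelProfile _ _) fun t ht => ?_
    have := one_sub_kernelProfile_le' ⟨he.1.trans ht.1, ht.2⟩
    have : √(1 - t) ≤ √(1 - e) := Real.sqrt_le_sqrt (by linarith [ht.1])
    linarith
  have hupper : ∫ t in e..1, kernelProfile t ≤ ∫ _ in e..1, (1 : ℝ) :=
    intervalIntegral.integral_mono_on he.2 (intervalIntegrable_kernelProfile _ _) (by simp)
      fun t ht => kernelProfile_le_one ⟨he.1.trans ht.1, ht.2⟩
  rw [intervalIntegral.integral_const, smul_eq_mul] at hlower hupper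
  exact ⟨hlower, by simpa using hupper⟩

lemma integral_kernelProfile_sub_mem_Icc (he : e ∈ Set.Icc 0 1) :
    (∫ t in (0 : ℝ)..e, kernelProfile t) - (3 - π + e) ∈
      Set.Icc 0 ((1 - e) * √(1 - e) / 2) := by
  have hsplit := intervalIntegral.integral_add_adjacent_intervals
    (intervalIntegrable_kernelProfile 0 e) (intervalIntegrable_kernelProfile e 1)
  have htail := integral_kernelProfile_tail_mem_Icc he
  rw [integral_kernelProfile] at hsplit
  constructor <;> linarith [htail.1, htail.2]

lemma trapezoidal_error_one_kernelProfile_le (hh : h ∈ Set.Icc 0 1) :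
    trapezoidal_error kernelProfile 1 0 h ≤ h * √h / 2 := by
  have hreflect : ∫ t in (0 : ℝ)..h, kernelProfile t = ∫ t in (1 - h)..1, kernelProfile t := by
    have := intervalIntegral.integral_comp_sub_left kernelProfile (1 : ℝ) (a := 0) (b := h)
    simpa only [kernelProfile_one_sub, sub_zero] using this
  have htail := (integral_kernelProfile_tail_mem_Icc (e := 1 - h)
    ⟨sub_nonneg.2 hh.2, sub_le_self 1 hh.1⟩).1
  rw [sub_sub_cancel] at htail
  rw [trapezoidal_error_one_eq, hreflect, kernelProfile_zero]
  linarith [mul_le_mul_of_nonneg_left (kernelProfile_le_one hh) hh.1]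

lemma trapezoidal_error_kernelProfile_mem_Icc (hh : 0 < h) {n : ℕ} (hn : (n + 1) * h ≤ 1)
    (hn' : 1 ≤ (n + 2) * h) :
    trapezoidal_error kernelProfile (n + 1) 0 ((n + 1) * h) ∈ Set.Icc 0 (5 / 4 * (h * √h)) := by
  have hnh : 0 ≤ n * h := by positivity
  have hsub : Set.Icc 0 (0 + (n + 1) * h) ⊆ Set.Icc 0 1 := Set.Icc_subset_Icc_right (by linarith)
  have hconv := convexOn_kernelProfile.subset hsub (convex_Icc _ _)
  constructor
  · have := trapezoidal_error_nonneg (a := 0) (n + 1) hh.le (by push_cast; exact hconv)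
      (intervalIntegrable_kernelProfile _ _)
    simpa using this
  have hbound := trapezoidal_error_succ_le_of_convexOn n hh hconv
    (intervalIntegrable_kernelProfile _ _)
  simp only [zero_add, kernelProfile_zero] at hbound
  have hfirst := trapezoidal_error_one_kernelProfile_le (h := h) ⟨hh.le, by linarith⟩
  have hstart := one_sub_kernelProfile_le (t := h) ⟨hh.le, by linarith⟩
  have hlast := kernelProfile_le_one (t := (n + 1) * h) ⟨by positivity, hn⟩
  have hpenult := one_sub_kernelProfile_le' (t := n * h) ⟨hnh, by linarith⟩
  have hsqrt : √(1 - n * h) ≤ 2 * √h := by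
    rw [← Real.sqrt_sq zero_le_two, ← Real.sqrt_mul (by norm_num)]
    exact Real.sqrt_le_sqrt (by linarith)
  have := mul_le_mul_of_nonneg_left (show kernelProfile ((n + 1) * h) - kernelProfile (n * h) -
    (kernelProfile h - 1) ≤ 3 / 2 * √h by linarith) (half_pos hh).le
  linarith

lemma abs_sum_kernelProfile_sub_le (hh : 0 < h) {n : ℕ} (hn : (n + 1) * h ≤ 1)
    (hn' : 1 ≤ (n + 2) * h) :
    |h * ∑ m ∈ range (n + 1), kernelProfile ((m + 1) * h) - (3 - π + (n + 1) * h)| ≤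
      2 * (h * √h) := by
  have hshift : ∑ m ∈ range (n + 1), kernelProfile ((m + 1) * h) =
      ∑ j ∈ range (n + 1), kernelProfile (j * h) + (kernelProfile ((n + 1) * h) - 1) := by
    have hsucc := sum_range_succ (fun j : ℕ => kernelProfile (j * h)) (n + 1)
    rw [sum_range_succ'] at hsucc
    push_cast [zero_mul, kernelProfile_zero] at hsucc
    linarith
  have herr := trapezoidal_error_eq_sum kernelProfile (n + 1) 0 h
  push_cast at herr
  simp only [zero_add, kernelProfile_zero] at herr
  have hnh : (n + 1) * h ∈ Set.Icc 0 1 := ⟨by positivity, hn⟩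
  have htrap := trapezoidal_error_kernelProfile_mem_Icc hh hn hn'
  have hint := integral_kernelProfile_sub_mem_Icc hnh
  have hgap : √(1 - (n + 1) * h) ≤ √h := Real.sqrt_le_sqrt (by linarith)
  have hgap' : (1 - (n + 1) * h) * √(1 - (n + 1) * h) ≤ h * √h :=
    mul_le_mul (by linarith) hgap (Real.sqrt_nonneg _) hh.le
  have hend := mul_le_mul_of_nonneg_left (kernelProfile_le_one hnh) hh.le
  have hend' := mul_le_mul_of_nonneg_left ((one_sub_kernelProfile_le' hnh).trans
    (div_le_div_of_nonneg_right hgap zero_le_two)) hh.le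
  rw [hshift, abs_le]
  constructor <;> linarith [htrap.1, htrap.2, hint.1, hint.2]

end KernelProfile

section ReciprocityKernel

/-- The summand `-√(y - m) / (√m (√y + √m))` of the reciprocity kernel; for `0 < m ≤ y` it is
`(√m - √y) / (√m √(y - m))`, the singularity at `m = y` being removed, and it vanishes for
`y ≤ m`. -/
noncomputable def kernelTerm (m y : ℝ) : ℝ := -√(y - m) / (√m * (√y + √m))

variable {m n y : ℝ}

lemma kernelTerm_eq_zero (h : y ≤ m) : kernelTerm m y = 0 := by
  rw [kernelTerm, Real.sqrt_eq_zero_of_nonpos (sub_nonpos.2 h), neg_zero, zero_div]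

lemma kernelTerm_eq_neg_add (hm : 0 < m) (h : m ≤ y) :
    kernelTerm m y = -(1 / √m) + 2 / (√m + √y + √(y - m)) := by
  have hpyth : √m ^ 2 + √(y - m) ^ 2 = √y ^ 2 := by
    rw [Real.sq_sqrt hm.le, Real.sq_sqrt (sub_nonneg.2 h), Real.sq_sqrt (hm.le.trans h)]
    ring
  have ha : 0 < √m := Real.sqrt_pos.2 hm
  have hb : 0 < √y := Real.sqrt_pos.2 (hm.trans_le h)
  have hc : 0 ≤ √(y - m) := Real.sqrt_nonneg _
  rw [kernelTerm]
  generalize √m = a at *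
  generalize √y = b at *
  generalize √(y - m) = c at *
  field_simp
  nlinarith

/-- For `y ≤ m` both sides vanish, because `√(y - m) = 0` and `1 / 0 = 0`. -/
lemma kernelTerm_eq_sub (hm : 0 < m) (y : ℝ) :
    kernelTerm m y = 1 / √(y - m) - 1 / √m * √y * (1 / √(y - m)) := by
  rcases le_or_gt y m with h | h
  · rw [kernelTerm_eq_zero h, Real.sqrt_eq_zero_of_nonpos (sub_nonpos.2 h), div_zero, mul_zero,
      sub_zero]
  have hpyth : √m ^ 2 + √(y - m) ^ 2 = √y ^ 2 := by
    rw [Real.sq_sqrt hm.le, Real.sq_sqrt (sub_nonneg.2 h.le), Real.sq_sqrt (hm.trans h).le]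
    ring
  have ha : 0 < √m := Real.sqrt_pos.2 hm
  have hb : 0 < √y := Real.sqrt_pos.2 (hm.trans h)
  have hc : 0 < √(y - m) := Real.sqrt_pos.2 (sub_pos.2 h)
  rw [kernelTerm]
  generalize √m = a at *
  generalize √y = b at *
  generalize √(y - m) = c at *
  field_simp
  nlinarith

lemma kernelTerm_eq_kernelProfile (hm : 0 < m) (h : m ≤ y) :
    kernelTerm m y = -(1 / √m) + 1 / √y * kernelProfile (m / y) := by
  have hy : 0 < y := hm.trans_le h
  rw [kernelTerm_eq_neg_add hm h, kernelProfile, one_sub_div hy.ne', Real.sqrt_div hm.le,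
    Real.sqrt_div (sub_nonneg.2 h)]
  congr 1
  field_simp
  ring

lemma abs_kernelTerm_le (hm : 0 < m) : |kernelTerm m y| ≤ √(y - m) / m / 2 := by
  rcases le_total y m with h | h
  · rw [kernelTerm_eq_zero h, abs_zero]
    positivity
  · have ha : 0 < √m := Real.sqrt_pos.2 hm
    have hab : √m ≤ √y := Real.sqrt_le_sqrt h
    rw [kernelTerm, neg_div, abs_neg, abs_of_nonneg (by positivity), div_div]
    refine div_le_div_of_nonneg_left (Real.sqrt_nonneg _) (by positivity) ?_
    nlinarith [Real.sq_sqrt hm.le]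

lemma continuous_kernelTerm (hm : 0 < m) : Continuous (kernelTerm m) := by
  exact Continuous.div (by fun_prop) (by fun_prop) fun y => by positivity

/-- The sum of `kernelTerm m y` over the integers `1 ≤ m ≤ y`. -/
noncomputable def kernelSum (y : ℝ) : ℝ := ∑ m ∈ range ⌊y⌋₊, kernelTerm (m + 1) y

lemma kernelSum_eq_sum {N : ℕ} (hy : y ≤ N + 1) :
    kernelSum y = ∑ m ∈ range N, kernelTerm (m + 1) y := by
  have hvanish : ∀ K : ℕ, y ≤ K + 1 → ∀ m ∉ range K, kernelTerm (m + 1) y = 0 := by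
    refine fun K hK m hm => kernelTerm_eq_zero (hK.trans ?_)
    gcongr
    simpa using hm
  rcases le_total ⌊y⌋₊ N with h | h
  · exact sum_subset (range_mono h) fun m _ => hvanish _ (Nat.lt_floor_add_one y).le m
  · exact (sum_subset (range_mono h) fun m _ => hvanish N hy m).symm

lemma continuous_kernelSum : Continuous kernelSum := by
  refine continuous_iff_continuousAt.2 fun y => ?_
  have hc : Continuous fun z => ∑ m ∈ range (⌊y⌋₊ + 1), kernelTerm (m + 1) z :=
    continuous_finsetSum _ fun m _ => continuous_kernelTerm (by positivity)
  refine hc.continuousAt.congr ?_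
  have hy : y < ⌊y⌋₊ + 1 + 1 := (Nat.lt_floor_add_one y).trans (lt_add_one _)
  filter_upwards [gt_mem_nhds hy] with z hz
  exact (kernelSum_eq_sum (N := ⌊y⌋₊ + 1) (by push_cast; exact hz.le)).symm

/-- The function `E` for which the defect of the reciprocity law at `x` involves
`∑_{v ≥ 1} v^(-1/2) E(x v)`; the terms other than `kernelSum` make it `O(1/y)`. -/
noncomputable def recipKernel (y : ℝ) : ℝ :=
  hurwitzHalf y + π * √y + hurwitzHalf 1 + kernelSum y

lemma continuousOn_recipKernel : ContinuousOn recipKernel (Set.Ioi 0) :=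
  ((continuousOn_hurwitzHalf.add (by fun_prop)).add continuousOn_const).add
    continuous_kernelSum.continuousOn

lemma sum_one_div_sqrt_succ (N : ℕ) :
    ∑ m ∈ range N, 1 / √((m : ℝ) + 1) = hurwitzHalf 1 - hurwitzHalf (1 + N) := by
  rw [hurwitzHalf_eq_sum_add one_pos N, add_sub_cancel_right]
  simp only [add_comm]

lemma kernelSum_eq_add_sum_kernelProfile (hy : 0 < y) :
    kernelSum y = hurwitzHalf (1 + ⌊y⌋₊) - hurwitzHalf 1 +
      √y * (1 / y * ∑ m ∈ range ⌊y⌋₊, kernelProfile ((m + 1) * (1 / y))) := by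
  rw [← neg_sub, ← sum_one_div_sqrt_succ, ← mul_assoc, mul_one_div, Real.sqrt_div_self', mul_sum,
    ← sum_neg_distrib, ← sum_add_distrib]
  refine sum_congr rfl fun m hm => ?_
  have hm : (m : ℝ) + 1 ≤ y := le_trans (by exact_mod_cast mem_range.1 hm) (Nat.floor_le hy.le)
  rw [kernelTerm_eq_kernelProfile (by positivity) hm, mul_one_div]

lemma abs_hurwitzHalf_one_add_le (hy : 0 < y) :
    |hurwitzHalf (1 + y) + 2 * √y + 1 / (2 * √y)| ≤ 1 / √y ^ 3 := by
  have hmem := hurwitzHalf_sub_mem_Icc hy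
  rw [hurwitzHalf_eq_one_div_sqrt_add hy, add_comm y] at hmem
  have hhalf : 1 / √y = 1 / (2 * √y) + 1 / (2 * √y) := by
    field_simp
    norm_num
  rw [abs_of_nonneg] <;> linarith [hmem.1, hmem.2]

lemma one_div_le_two_div (hn : 1 ≤ n) (hy : y ≤ n + 1) (hny : n ≤ y) : 1 / n ≤ 2 / y := by
  rw [div_le_div_iff₀ (by linarith) (by linarith)]
  linarith

lemma one_div_sqrt_cube_le_one_div (hn : 1 ≤ n) : 1 / √n ^ 3 ≤ 1 / n := by
  refine one_div_le_one_div_of_le (by linarith) ?_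
  nlinarith [Real.sq_sqrt (zero_le_one.trans hn), Real.one_le_sqrt.2 hn]

lemma sqrt_sub_two_mul_sqrt_add_mem_Icc (hn : 1 ≤ n) (hny : n ≤ y) (hy : y ≤ n + 1) :
    √y - 2 * √n + n / √y ∈ Set.Icc 0 (1 / n) := by
  have ha : 1 ≤ √n := Real.one_le_sqrt.2 hn
  have hab : √n ≤ √y := Real.sqrt_le_sqrt hny
  have hb : 0 < √y := by linarith
  have hsquare : √y - 2 * √n + n / √y = (√y - √n) ^ 2 / √y := by
    rw [eq_div_iff hb.ne', add_mul, div_mul_cancel₀ _ hb.ne', sub_sq,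
      Real.sq_sqrt (zero_le_one.trans hn)]
    ring
  have hdiff : √y - √n ≤ 1 / √n := (sqrt_sub_sqrt_le (by linarith) hny).trans
    (div_le_div_of_nonneg_right (by linarith) (by linarith))
  rw [hsquare]
  refine ⟨by positivity, ?_⟩
  calc (√y - √n) ^ 2 / √y ≤ (1 / √n) ^ 2 / 1 :=
        div_le_div₀ (by positivity) (pow_le_pow_left₀ (by linarith) hdiff 2) one_pos (by linarith)
    _ = 1 / n := by rw [div_one, one_div_pow, Real.sq_sqrt (zero_le_one.trans hn)]

lemma abs_kernelSum_sub_le (hy : 1 ≤ y) :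
    |kernelSum y - (hurwitzHalf (1 + ⌊y⌋₊) - hurwitzHalf 1 +
      (3 * √y - π * √y + ⌊y⌋₊ / √y))| ≤ 2 / y := by
  have hy0 : 0 < y := one_pos.trans_le hy
  rw [kernelSum_eq_add_sum_kernelProfile hy0, add_sub_add_left_eq_sub]
  obtain ⟨k, hk⟩ : ∃ k, ⌊y⌋₊ = k + 1 :=
    Nat.exists_eq_succ_of_ne_zero (Nat.floor_pos.2 hy).ne'
  have hky : (k : ℝ) + 1 ≤ y := by exact_mod_cast hk ▸ Nat.floor_le hy0.le
  have hyk : y < (k : ℝ) + 1 + 1 := by exact_mod_cast hk ▸ Nat.lt_floor_add_one y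
  have hriemann := abs_sum_kernelProfile_sub_le (h := 1 / y) (n := k) (by positivity)
    (by rwa [mul_one_div, div_le_one hy0])
    (by rw [mul_one_div, one_le_div hy0]; linarith)
  rw [hk]
  push_cast
  set S := 1 / y * ∑ m ∈ range (k + 1), kernelProfile ((m + 1) * (1 / y))
  have hb : 0 < √y := Real.sqrt_pos.2 hy0
  have hfactor : √y * S - (3 * √y - π * √y + (k + 1) / √y) =
      √y * (S - (3 - π + (k + 1) * (1 / y))) := by
    rw [div_eq_mul_one_div _ √y, ← Real.sqrt_div_self']
    ring
  rw [hfactor, abs_mul, abs_of_pos hb]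
  refine (mul_le_mul_of_nonneg_left hriemann hb.le).trans_eq ?_
  rw [Real.sqrt_div' _ hy0.le, Real.sqrt_one]
  field_simp

lemma abs_recipKernel_le_of_one_le (hy : 1 ≤ y) : |recipKernel y| ≤ 8 / y := by
  have hy0 : 0 < y := one_pos.trans_le hy
  have hn1 : (1 : ℝ) ≤ ⌊y⌋₊ := by exact_mod_cast Nat.floor_pos.2 hy
  have hny : (⌊y⌋₊ : ℝ) ≤ y := Nat.floor_le hy0.le
  have hyn : y ≤ ⌊y⌋₊ + 1 := (Nat.lt_floor_add_one y).le
  have hsum := abs_le.1 (abs_kernelSum_sub_le hy)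
  generalize (⌊y⌋₊ : ℝ) = n at *
  have hn0 : 0 < n := by linarith
  have hn2 : 1 / n ≤ 2 / y := one_div_le_two_div hn1 hyn hny
  have hZy := hurwitzHalf_sub_mem_Icc hy0
  have hZn := abs_le.1 (abs_hurwitzHalf_one_add_le hn0)
  have hcubey := one_div_sqrt_cube_le_one_div hy
  have hcuben := one_div_sqrt_cube_le_one_div hn1
  have hsquare := sqrt_sub_two_mul_sqrt_add_mem_Icc hn1 hny hyn
  have hinv := one_div_sqrt_sub_nonneg hn0 hny
  have hinv' : 1 / √n - 1 / √y ≤ 1 / n := (one_div_sqrt_sub_le hn0 hny).trans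
    ((div_le_div_of_nonneg_right (by linarith) (by positivity)).trans hcuben)
  rw [mul_comm (2 : ℝ) √n, ← div_div] at hZn
  rw [mul_comm (2 : ℝ) √y, ← div_div] at hZy
  have hscale : ∀ c : ℝ, c / y = c * (1 / y) := fun c => div_eq_mul_one_div c y
  rw [hscale 2] at hsum hn2
  rw [recipKernel, hscale, abs_le]
  constructor <;> linarith [hZy.1, hZy.2, hsquare.1, hsquare.2]

lemma recipKernel_eq_of_le_one (hy0 : 0 < y) (hy : y ≤ 1) :
    recipKernel y = 1 / √y + hurwitzHalf (y + 1) + π * √y + hurwitzHalf 1 := by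
  rw [recipKernel, kernelSum_eq_sum (N := 0) (by simpa using hy),
    hurwitzHalf_eq_one_div_sqrt_add hy0, sum_range_zero, add_zero]

/-- A constant `C` with `|recipKernel y| ≤ C / y` for all `y > 0`. -/
noncomputable def recipKernelBound : ℝ := 8 + 2 * |hurwitzHalf 1| + zetaThreeHalves

lemma recipKernelBound_pos : 0 < recipKernelBound := by
  have := one_le_zetaThreeHalves
  unfold recipKernelBound
  positivity

lemma abs_recipKernel_le (hy0 : 0 < y) : |recipKernel y| ≤ recipKernelBound / y := by
  have hK := one_le_zetaThreeHalves
  have hZ := abs_nonneg (hurwitzHalf 1)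
  rcases le_total 1 y with hy | hy
  · refine (abs_recipKernel_le_of_one_le hy).trans (div_le_div_of_nonneg_right ?_ hy0.le)
    rw [recipKernelBound]
    linarith
  · have hlip := hurwitzHalf_sub_le (s := 1) (t := y + 1) le_rfl (by linarith)
    have hanti := hurwitzHalf_antitoneOn (a := 1) (b := y + 1) (by simp) (by simp; linarith)
      (by linarith)
    have hb : 0 < √y := Real.sqrt_pos.2 hy0
    have hb1 : √y ≤ 1 := Real.sqrt_le_one.2 hy
    have hinv : 1 / √y ≤ 1 / y :=
      one_div_le_one_div_of_le hy0 (by nlinarith [Real.sq_sqrt hy0.le])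
    have hinv1 : 1 ≤ 1 / y := (one_le_div hy0).2 hy
    have hpi : π * √y ≤ 4 := by nlinarith [Real.pi_le_four, Real.pi_pos]
    have hpi0 : 0 ≤ π * √y := by positivity
    have hbound : 1 / y + (2 * |hurwitzHalf 1| + zetaThreeHalves + 4) ≤ recipKernelBound / y := by
      rw [div_eq_mul_one_div recipKernelBound, recipKernelBound]
      nlinarith
    refine le_trans ?_ hbound
    have hKy : zetaThreeHalves * (y + 1 - 1) ≤ zetaThreeHalves := by nlinarith
    have hinv0 : 0 < 1 / √y := by positivity
    rw [recipKernel_eq_of_le_one hy0 hy, abs_le]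
    constructor <;> linarith [le_abs_self (hurwitzHalf 1), neg_abs_le (hurwitzHalf 1)]

end ReciprocityKernel

section PeriodicHurwitz

/-- The `1`-periodic extension of `hurwitzHalf` from `(0, 1]` to `ℝ`. -/
noncomputable def hurwitzHalfPeriodic (y : ℝ) : ℝ := hurwitzHalf (y - ⌈y⌉ + 1)

variable {k : ℕ} {y : ℝ}

lemma hurwitzHalfPeriodic_add_intCast (y : ℝ) (n : ℤ) :
    hurwitzHalfPeriodic (y + n) = hurwitzHalfPeriodic y := by
  rw [hurwitzHalfPeriodic, hurwitzHalfPeriodic, Int.ceil_add_intCast, Int.cast_add,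
    add_sub_add_right_eq_sub]

lemma hurwitzHalfPeriodic_of_mem_Ioc (hy : y ∈ Set.Ioc 0 1) :
    hurwitzHalfPeriodic y = hurwitzHalf y := by
  have hceil : ⌈y⌉ = 1 := Int.ceil_eq_iff.2 (by simpa using hy)
  rw [hurwitzHalfPeriodic, hceil, Int.cast_one, sub_add_cancel]

lemma hurwitzHalfPeriodic_zero : hurwitzHalfPeriodic 0 = hurwitzHalf 1 := by
  simp [hurwitzHalfPeriodic]

lemma sum_range_sub_succ (f : ℝ → ℝ) (t : ℝ) (n : ℕ) :
    ∑ m ∈ range n, f (t + n - (m + 1)) = ∑ j ∈ range n, f (t + j) := by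
  rw [← sum_range_reflect]
  refine sum_congr rfl fun m hm => ?_
  rw [Nat.sub_sub, Nat.cast_sub (by have := mem_range.1 hm; omega)]
  push_cast
  ring_nf

/-- The inner sum may run over any range containing all `m` with `m + 1 < y`, because
`1 / √t = 0` for `t ≤ 0`. -/
lemma hurwitzHalfPeriodic_eq_add_sum (hy : 0 < y) {N : ℕ} (hN : y ≤ N + 1) :
    hurwitzHalfPeriodic y = hurwitzHalf y + ∑ m ∈ range N, 1 / √(y - (m + 1)) := by
  obtain ⟨n, hn⟩ : ∃ n : ℕ, ⌈y⌉₊ = n + 1 :=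
    Nat.exists_eq_succ_of_ne_zero (Nat.ceil_pos.2 hy).ne'
  have hceil : (⌈y⌉ : ℝ) = n + 1 := by
    rw [← natCast_ceil_eq_intCast_ceil hy.le, hn, Nat.cast_succ]
  have hny : (n : ℝ) < y := Nat.lt_ceil.1 (hn ▸ n.lt_succ_self)
  have hnN : n ≤ N := by
    have : ⌈y⌉₊ ≤ N + 1 := Nat.ceil_le.2 (by exact_mod_cast hN)
    omega
  have htail : ∀ m ∈ range N, m ∉ range n → 1 / √(y - (m + 1)) = 0 := by
    intro m _ hm
    have hyn : y ≤ n + 1 := by exact_mod_cast hn ▸ Nat.le_ceil y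
    have hnm : (n : ℝ) ≤ m := by simpa using hm
    rw [Real.sqrt_eq_zero_of_nonpos (by linarith), div_zero]
  rw [← sum_subset (range_mono hnN) htail, hurwitzHalfPeriodic, hceil,
    show y - (n + 1) + 1 = y - n by ring, hurwitzHalf_eq_sum_add (sub_pos.2 hny) n,
    ← sum_range_sub_succ (fun t => 1 / √t), sub_add_cancel, add_comm]

/-- The values of `hurwitzHalfPeriodic` at the fractions with denominator `k`, as a function of
the numerator modulo `k`. -/
noncomputable def hurwitzHalfMod (k : ℕ) (j : ZMod k) : ℝ := hurwitzHalfPeriodic (j.val / k)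

lemma hurwitzHalfMod_intCast [NeZero k] (c : ℤ) :
    hurwitzHalfMod k c = hurwitzHalfPeriodic (c / k) := by
  have hk : (k : ℝ) ≠ 0 := NeZero.ne _
  have hdecomp : (c : ℝ) = ((c : ZMod k).val : ℝ) + k * (c / k : ℤ) := by
    have : ((c : ZMod k).val : ℤ) + k * (c / k) = c := by
      rw [ZMod.val_intCast, Int.emod_add_mul_ediv]
    exact_mod_cast this.symm
  have hdiv : (c : ℝ) / k = ((c : ZMod k).val : ℝ) / k + (c / k : ℤ) := by
    rw [div_add' _ _ _ hk, mul_comm _ (k : ℝ), ← hdecomp]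
  rw [hdiv, hurwitzHalfPeriodic_add_intCast, hurwitzHalfMod]

lemma sum_range_natCast_zmod [NeZero k] {R : Type*} [AddCommMonoid R] (f : ZMod k → R) :
    ∑ n ∈ range k, f n = ∑ j, f j :=
  sum_nbij' (fun n => (n : ZMod k)) (fun j => j.val) (fun _ _ => mem_univ _)
    (fun j _ => mem_range.2 (ZMod.val_lt j)) (fun _ hn => ZMod.val_cast_of_lt (mem_range.1 hn))
    (fun j _ => ZMod.natCast_zmod_val j) fun _ _ => rfl

lemma sum_range_natCast_add_one_zmod [NeZero k] {R : Type*} [AddCommMonoid R] (f : ZMod k → R) :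
    ∑ n ∈ range k, f (n + 1) = ∑ j, f j := by
  rw [sum_range_natCast_zmod fun j => f (j + 1)]
  exact Fintype.sum_equiv (Equiv.addRight 1) _ _ fun _ => rfl

lemma sum_zmod_unit_mul [NeZero k] {R : Type*} [AddCommMonoid R] (f : ZMod k → R)
    (u : (ZMod k)ˣ) : ∑ j, f (u * j) = ∑ j, f j :=
  Fintype.sum_equiv (Units.mulLeft u) _ _ fun _ => rfl

lemma hurwitzHalfMod_add_one [NeZero k] {n : ℕ} (hn : n < k) :
    hurwitzHalfMod k (n + 1) = hurwitzHalf ((n + 1) / k) := by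
  have hk : (0 : ℝ) < k := Nat.cast_pos.2 (NeZero.pos k)
  have hcast := hurwitzHalfMod_intCast (k := k) (n + 1)
  push_cast at hcast
  rw [hcast, hurwitzHalfPeriodic_of_mem_Ioc]
  exact ⟨by positivity, (div_le_one hk).2 (by exact_mod_cast hn)⟩

/-- The twisted sum `F(a, k) = k^(-1/2) ∑_{n mod k} ζ(1/2, {a n / k}) ζ(1/2, {n / k})` with
`{·}` taking values in `(0, 1]`. For prime `k` it is the twisted second moment `M_0*(a, k)`. -/
noncomputable def twistedSum (a : ℤ) (k : ℕ) : ℝ :=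
  1 / √k * ∑ n ∈ range k, hurwitzHalfPeriodic (a * n / k) * hurwitzHalfPeriodic (n / k)

lemma twistedSum_eq_sum_zmod (a : ℤ) (k : ℕ) [NeZero k] :
    twistedSum a k = 1 / √k * ∑ j, hurwitzHalfMod k (a * j) * hurwitzHalfMod k j := by
  rw [twistedSum, ← sum_range_natCast_zmod]
  congr 1
  refine sum_congr rfl fun n _ => ?_
  have hnum := hurwitzHalfMod_intCast (k := k) (a * n)
  have hnum' := hurwitzHalfMod_intCast (k := k) n
  push_cast at hnum hnum'
  rw [hnum, hnum']

lemma twistedSum_eq_sum_hurwitzHalf (a : ℤ) (hk : 0 < k) :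
    twistedSum a k =
      1 / √k * ∑ n ∈ range k,
        hurwitzHalfPeriodic (a * (n + 1) / k) * hurwitzHalf ((n + 1) / k) := by
  have : NeZero k := ⟨hk.ne'⟩
  rw [twistedSum_eq_sum_zmod, ← sum_range_natCast_add_one_zmod]
  congr 1
  refine sum_congr rfl fun n hn => ?_
  have hnum := hurwitzHalfMod_intCast (k := k) (a * (n + 1))
  push_cast at hnum
  rw [hnum, hurwitzHalfMod_add_one (mem_range.1 hn)]

lemma sum_range_mul_eq (f : ℕ → ℝ) (k N : ℕ) :
    ∑ v ∈ range (k * N), f v = ∑ n ∈ range k, ∑ j ∈ range N, f (k * j + n) := by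
  rw [sum_comm]
  induction N with
  | zero => simp
  | succ N ih => rw [Nat.mul_succ, sum_range_add, ih, sum_range_succ]

lemma one_div_sqrt_mul_add (hk : 0 < k) (j n : ℕ) :
    1 / √((k * j + n : ℕ) + 1) = 1 / √k * (1 / √((n + 1) / k + j)) := by
  have hk' : (0 : ℝ) < k := Nat.cast_pos.2 hk
  rw [one_div_mul_one_div, ← Real.sqrt_mul hk'.le]
  congr 2
  push_cast
  field_simp
  ring

lemma tendsto_hurwitzHalf_add_natCast (t : ℝ) :
    Filter.Tendsto (fun N : ℕ => hurwitzHalf (t + N) + 2 * √N) Filter.atTop (nhds 0) := by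
  have hshift := tendsto_hurwitzHalf_add_two_mul_sqrt.comp
    (Filter.tendsto_atTop_add_const_left _ t tendsto_natCast_atTop_atTop)
  have hroot := ((tendsto_sqrt_add_sub_sqrt_add t 0).comp tendsto_natCast_atTop_atTop).const_mul 2
  have hsum := hshift.add hroot
  rw [mul_zero, add_zero] at hsum
  refine hsum.congr fun N => ?_
  simp only [Function.comp_apply, zero_add]
  ring

lemma sum_periodic_div_sqrt (hk : 0 < k) {c : ℕ → ℝ} (hc : Function.Periodic c k) (N : ℕ) :
    ∑ v ∈ range (k * N), 1 / √(v + 1) * c v =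
      1 / √k * ∑ n ∈ range k,
        c n * (hurwitzHalf ((n + 1) / k) - hurwitzHalf ((n + 1) / k + N)) := by
  rw [sum_range_mul_eq (fun v => 1 / √((v : ℝ) + 1) * c v), mul_sum]
  refine sum_congr rfl fun n _ => ?_
  rw [hurwitzHalf_eq_sum_add (x := ((n : ℝ) + 1) / k) (by positivity) N, add_sub_cancel_right,
    mul_sum, mul_sum]
  refine sum_congr rfl fun j _ => ?_
  rw [one_div_sqrt_mul_add hk, add_comm (k * j), mul_comm k, show c (n + j * k) = c n from
    hc.nsmul j n]
  ring

lemma tendsto_sum_periodic_div_sqrt (hk : 0 < k) {c : ℕ → ℝ} (hc : Function.Periodic c k) :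
    Filter.Tendsto (fun N : ℕ => ∑ v ∈ range (k * N), 1 / √(v + 1) * c v -
      2 * √N * (1 / √k * ∑ n ∈ range k, c n)) Filter.atTop
      (nhds (1 / √k * ∑ n ∈ range k, c n * hurwitzHalf ((n + 1) / k))) := by
  have htail : Filter.Tendsto
      (fun N : ℕ => ∑ n ∈ range k, c n * (hurwitzHalf ((n + 1) / k + N) + 2 * √N))
      Filter.atTop (nhds (∑ n ∈ range k, c n * 0)) :=
    tendsto_finsetSum _ fun n _ => (tendsto_hurwitzHalf_add_natCast _).const_mul _
  simp only [mul_zero, sum_const_zero] at htail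
  have hlim := (htail.const_mul (1 / √k)).const_sub
    (1 / √k * ∑ n ∈ range k, c n * hurwitzHalf ((n + 1) / k))
  rw [mul_zero, sub_zero] at hlim
  refine hlim.congr fun N => ?_
  rw [sum_periodic_div_sqrt hk hc]
  simp only [mul_sub, mul_add, sum_sub_distrib, sum_add_distrib, ← sum_mul]
  ring

lemma sum_hurwitzHalf_div (hk : 0 < k) :
    ∑ n ∈ range k, hurwitzHalf ((n + 1) / k) = √k * hurwitzHalf 1 := by
  have hblocks := tendsto_sum_periodic_div_sqrt hk (c := fun _ => 1) fun _ => rfl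
  have hdirect := ((tendsto_hurwitzHalf_add_natCast 1).comp
    (Filter.tendsto_id.const_mul_atTop' hk)).const_sub (hurwitzHalf 1)
  have heq := tendsto_nhds_unique hblocks (hdirect.congr fun N => ?_)
  · simp only [one_mul, sub_zero] at heq
    rw [← heq]
    field_simp
  · simp only [mul_one, sum_const, card_range, nsmul_eq_mul, Function.comp_apply, id_eq,
      sum_one_div_sqrt_succ]
    push_cast
    rw [one_div_mul_eq_div, Real.div_sqrt, Real.sqrt_mul k.cast_nonneg]
    ring

lemma sum_hurwitzHalfPeriodic_mul_div {a : ℤ} (hk : 0 < k) (hcop : IsCoprime a k) :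
    ∑ n ∈ range k, hurwitzHalfPeriodic (a * (n + 1) / k) = √k * hurwitzHalf 1 := by
  have : NeZero k := ⟨hk.ne'⟩
  calc ∑ n ∈ range k, hurwitzHalfPeriodic (a * (n + 1) / k)
      = ∑ n ∈ range k, hurwitzHalfMod k (a * (n + 1)) := by
        refine sum_congr rfl fun n _ => ?_
        have hnum := hurwitzHalfMod_intCast (k := k) (a * (n + 1))
        push_cast at hnum
        exact hnum.symm
    _ = ∑ j, hurwitzHalfMod k (ZMod.unitOfIsCoprime a hcop * j) :=
        sum_range_natCast_add_one_zmod fun j : ZMod k => hurwitzHalfMod k ((a : ZMod k) * j)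
    _ = ∑ n ∈ range k, hurwitzHalfMod k (n + 1) := by
        rw [sum_zmod_unit_mul, sum_range_natCast_add_one_zmod]
    _ = √k * hurwitzHalf 1 := by
        rw [← sum_hurwitzHalf_div hk]
        exact sum_congr rfl fun n hn => hurwitzHalfMod_add_one (mem_range.1 hn)

lemma tendsto_twistedSum {a : ℤ} (hk : 0 < k) (hcop : IsCoprime a k) :
    Filter.Tendsto (fun N : ℕ => ∑ v ∈ range (k * N),
      1 / √(v + 1) * hurwitzHalfPeriodic (a * (v + 1) / k) - 2 * √N * hurwitzHalf 1)
      Filter.atTop (nhds (twistedSum a k)) := by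
  have hk' : (0 : ℝ) < k := Nat.cast_pos.2 hk
  have hperiodic : Function.Periodic (fun v : ℕ => hurwitzHalfPeriodic (a * (v + 1) / k)) k := by
    intro v
    refine Eq.trans (congrArg _ ?_) (hurwitzHalfPeriodic_add_intCast _ a)
    push_cast
    field_simp
    ring
  have hlim := tendsto_sum_periodic_div_sqrt hk hperiodic
  rw [twistedSum_eq_sum_hurwitzHalf a hk]
  rwa [sum_hurwitzHalfPeriodic_mul_div hk hcop, ← mul_assoc (1 / √(k : ℝ)),
    one_div_mul_cancel (Real.sqrt_pos.2 hk').ne', one_mul] at hlim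

end PeriodicHurwitz

section Reciprocity

variable {x y : ℝ}

/-- The series `D(x) = ∑_{v ≥ 1} E(x v) / √v`, where `E = recipKernel`. It carries the part of the
reciprocity formula that is not elementary. -/
noncomputable def recipSeries (x : ℝ) : ℝ := ∑' v : ℕ, 1 / √(v + 1) * recipKernel (x * (v + 1))

lemma abs_recipSeries_term_le (hx : 0 < x) (v : ℕ) :
    |1 / √((v : ℝ) + 1) * recipKernel (x * (v + 1))| ≤
      recipKernelBound / x * (1 / √((v : ℝ) + 1) ^ 3) := by
  have hv : (0 : ℝ) < v + 1 := by positivity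
  rw [abs_mul, abs_of_nonneg (by positivity)]
  calc 1 / √((v : ℝ) + 1) * |recipKernel (x * (v + 1))|
      ≤ 1 / √((v : ℝ) + 1) * (recipKernelBound / (x * (v + 1))) :=
        mul_le_mul_of_nonneg_left (abs_recipKernel_le (by positivity)) (by positivity)
    _ = recipKernelBound / x * (1 / √((v : ℝ) + 1) ^ 3) := by
        rw [pow_succ, Real.sq_sqrt hv.le]
        field_simp

lemma summable_recipSeries_term (hx : 0 < x) :
    Summable fun v : ℕ => 1 / √((v : ℝ) + 1) * recipKernel (x * (v + 1)) :=
  .of_norm_bounded (summable_one_div_sqrt_cube.mul_left _) (abs_recipSeries_term_le hx)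

lemma abs_recipSeries_le (hx : 0 < x) :
    |recipSeries x| ≤ recipKernelBound * zetaThreeHalves / x := by
  rw [mul_div_right_comm]
  exact tsum_of_norm_bounded (f := fun v : ℕ => 1 / √((v : ℝ) + 1) * recipKernel (x * (v + 1)))
    (summable_one_div_sqrt_cube.hasSum.mul_left _) (abs_recipSeries_term_le hx)

lemma continuousOn_recipSeries : ContinuousOn recipSeries (Set.Ioi 0) := by
  have away_from_zero : ∀ c : ℝ, 0 < c → ContinuousOn recipSeries (Set.Ioi c) := by
    intro c hc
    refine continuousOn_tsum (u := fun v : ℕ => recipKernelBound / c * (1 / √((v : ℝ) + 1) ^ 3))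
      (fun v => ?_) (summable_one_div_sqrt_cube.mul_left _) fun v x hx => ?_
    · refine continuousOn_const.mul (continuousOn_recipKernel.comp (by fun_prop) fun x hx => ?_)
      have hx0 : 0 < x := hc.trans hx
      exact Set.mem_Ioi.2 (by positivity)
    · have hcx : c ≤ x := (Set.mem_Ioi.1 hx).le
      refine (abs_recipSeries_term_le (hc.trans_le hcx) v).trans ?_
      have := recipKernelBound_pos
      gcongr
  intro x hx
  have hx0 : 0 < x := hx
  exact ((away_from_zero (x / 2) (half_pos hx0)).continuousAt
    (Ioi_mem_nhds (half_lt_self hx0))).continuousWithinAt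

/-- The value of `F(h, k) - F(-k, h)` at `x = h / k`; see `twistedSum_sub_twistedSum`. -/
noncomputable def recipFun (x : ℝ) : ℝ := π / 2 * √x - hurwitzHalf 1 ^ 2 + recipSeries x

lemma tendsto_sqrt_mul_recipKernel :
    Filter.Tendsto (fun y : ℝ => √y * recipKernel y) Filter.atTop (nhds 0) := by
  have hbound := tendsto_one_div_sqrt_atTop.const_mul recipKernelBound
  rw [mul_zero] at hbound
  refine squeeze_zero_norm' ?_ hbound
  filter_upwards [Filter.eventually_gt_atTop 0] with y hy
  rw [norm_mul, Real.norm_of_nonneg (Real.sqrt_nonneg y), Real.norm_eq_abs]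
  calc √y * |recipKernel y| ≤ √y * (recipKernelBound / y) :=
        mul_le_mul_of_nonneg_left (abs_recipKernel_le hy) (Real.sqrt_nonneg y)
    _ = recipKernelBound * (1 / √y) := by rw [← Real.sqrt_div_self']; ring

/-- The convolution `∑_{r + s = M} 1 / √(r s)`, a Riemann sum for `B(1/2, 1/2) = π`; the terms with
`r = 0` or `s = 0` vanish, because `1 / 0 = 0`. -/
noncomputable def betaSum (M : ℕ) : ℝ := ∑ r ∈ range (M + 1), 1 / √r * (1 / √(M - r))

lemma sqrt_mul_betaSum {M : ℕ} (hM : 0 < M) :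
    √M * betaSum M = π * √M + 2 * hurwitzHalf 1 - recipKernel M := by
  obtain ⟨N, rfl⟩ := Nat.exists_eq_succ_of_ne_zero hM.ne'
  have hbeta : betaSum (N + 1) =
      ∑ m ∈ range (N + 1), 1 / √((m : ℝ) + 1) * (1 / √((N + 1 : ℕ) - (m + 1))) := by
    rw [betaSum, sum_range_succ']
    simp
  have hroots : ∑ m ∈ range (N + 1), 1 / √(((N + 1 : ℕ) : ℝ) - (m + 1)) =
      hurwitzHalf 1 - hurwitzHalf (N + 1 : ℕ) := by
    have hreflect := sum_range_sub_succ (fun t => 1 / √t) 0 (N + 1)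
    simp only [zero_add] at hreflect
    rw [hreflect, sum_range_succ', Nat.cast_zero, Real.sqrt_zero, div_zero, add_zero]
    push_cast
    rw [sum_one_div_sqrt_succ, add_comm (1 : ℝ)]
  have hkernel : kernelSum (N + 1 : ℕ) =
      hurwitzHalf 1 - hurwitzHalf (N + 1 : ℕ) - √(N + 1 : ℕ) * betaSum (N + 1) := by
    rw [kernelSum_eq_sum (N := N + 1) (by simp), ← hroots, hbeta, mul_sum, ← sum_sub_distrib]
    refine sum_congr rfl fun m _ => ?_
    rw [kernelTerm_eq_sub (by positivity)]
    ring
  rw [recipKernel, hkernel]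
  ring

lemma tendsto_betaSum : Filter.Tendsto betaSum Filter.atTop (nhds π) := by
  have hroot := tendsto_one_div_sqrt_atTop.comp tendsto_natCast_atTop_atTop
  have hkernel := tendsto_sqrt_mul_recipKernel.comp tendsto_natCast_atTop_atTop
  have hlim := (((hkernel.mul hroot).const_sub (2 * hurwitzHalf 1)).mul hroot).const_add π
  rw [mul_zero, add_zero] at hlim
  refine hlim.congr' ?_
  filter_upwards [Filter.eventually_gt_atTop 0] with M hM
  have hbeta := sqrt_mul_betaSum hM
  simp only [Function.comp_apply]
  field_simp
  linarith

/-- By the symmetry `r ↔ M - r`, the weight `r` may be replaced by its average `M / 2`. -/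
lemma sum_sqrt_div_sqrt_sub (M : ℕ) :
    ∑ r ∈ range (M + 1), √r * (1 / √((M : ℝ) - r)) = M / 2 * betaSum M := by
  have hweight : ∑ r ∈ range (M + 1), √r * (1 / √((M : ℝ) - r)) =
      ∑ r ∈ range (M + 1), (r : ℝ) * (1 / √r * (1 / √((M : ℝ) - r))) :=
    sum_congr rfl fun r _ => by rw [← mul_assoc, mul_one_div (r : ℝ), Real.div_sqrt]
  have hflip : ∑ r ∈ range (M + 1), (r : ℝ) * (1 / √r * (1 / √((M : ℝ) - r))) =
      ∑ r ∈ range (M + 1), ((M : ℝ) - r) * (1 / √r * (1 / √((M : ℝ) - r))) := by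
    rw [← sum_flip]
    refine sum_congr rfl fun r hr => ?_
    rw [Nat.cast_sub (mem_range_succ_iff.1 hr), sub_sub_cancel, mul_comm (1 / √((M : ℝ) - r))]
  have hsum : ∑ r ∈ range (M + 1), (r : ℝ) * (1 / √r * (1 / √((M : ℝ) - r))) +
      ∑ r ∈ range (M + 1), ((M : ℝ) - r) * (1 / √r * (1 / √((M : ℝ) - r))) = M * betaSum M := by
    rw [← sum_add_distrib, betaSum, mul_sum]
    exact sum_congr rfl fun r _ => by ring
  linarith

lemma one_div_sqrt_natCast_sub_le_one (M r : ℕ) : 1 / √((M : ℝ) - r) ≤ 1 := by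
  rcases le_or_gt M r with h | h
  · have hle : (M : ℝ) ≤ r := Nat.cast_le.2 h
    rw [Real.sqrt_eq_zero_of_nonpos (sub_nonpos.2 hle), div_zero]
    exact zero_le_one
  · have hle : (r : ℝ) + 1 ≤ M := by exact_mod_cast h
    exact div_le_one_of_le₀ (Real.one_le_sqrt.2 (by linarith)) (Real.sqrt_nonneg _)

lemma tendsto_sum_div_sqrt_sub {g : ℕ → ℝ} (hg : Summable fun r => |g r|) :
    Filter.Tendsto (fun M : ℕ => ∑ r ∈ range (M + 1), 1 / √((M : ℝ) - r) * g r)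
      Filter.atTop (nhds 0) := by
  have hlim := tendsto_tsum_of_dominated_convergence (𝓕 := Filter.atTop)
    (f := fun M r : ℕ => 1 / √((M : ℝ) - r) * g r) (g := fun _ => 0) hg (fun r => ?_)
    (.of_forall fun M r => ?_)
  · rw [tsum_zero] at hlim
    refine hlim.congr fun M => tsum_eq_sum fun r hr => ?_
    have hle : (M : ℝ) ≤ r := Nat.cast_le.2 (by simp at hr; omega)
    rw [Real.sqrt_eq_zero_of_nonpos (sub_nonpos.2 hle), div_zero, zero_mul]
  · have hroot := (tendsto_one_div_sqrt_atTop.comp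
      (Filter.tendsto_atTop_add_const_right _ (-r : ℝ) tendsto_natCast_atTop_atTop)).mul_const (g r)
    rwa [zero_mul] at hroot
  · rw [norm_mul, Real.norm_of_nonneg (by positivity)]
    exact mul_le_of_le_one_left (norm_nonneg _) (one_div_sqrt_natCast_sub_le_one M r)

lemma summable_abs_hurwitzHalf_one_add (hx : 0 < x) :
    Summable fun r : ℕ => |hurwitzHalf (1 + r / x) + 2 * √(r / x) + 1 / (2 * √(r / x))| := by
  rw [← summable_nat_add_iff 1]
  refine .of_nonneg_of_le (fun r => abs_nonneg _) (fun r => ?_)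
    (summable_one_div_sqrt_cube.mul_left (√x ^ 3))
  refine (abs_hurwitzHalf_one_add_le (by positivity)).trans_eq ?_
  rw [Real.sqrt_div (by positivity)]
  push_cast
  field_simp

lemma sum_hurwitzHalf_one_add_div_sqrt_sub (x : ℝ) {M : ℕ} (hM : 0 < M) :
    ∑ r ∈ range (M + 1), 1 / √((M : ℝ) - r) * hurwitzHalf (1 + r / x) +
        (π * M / √x + 2 * hurwitzHalf 1 * (√M / √x)) =
      ∑ r ∈ range (M + 1), 1 / √((M : ℝ) - r) *
        (hurwitzHalf (1 + r / x) + 2 * √(r / x) + 1 / (2 * √(r / x))) +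
      1 / √x * (√M * recipKernel M) - √x / 2 * betaSum M := by
  have hterm : ∀ r : ℕ, 1 / √((M : ℝ) - r) * hurwitzHalf (1 + r / x) =
      1 / √((M : ℝ) - r) * (hurwitzHalf (1 + r / x) + 2 * √(r / x) + 1 / (2 * √(r / x))) -
      2 / √x * (√r * (1 / √((M : ℝ) - r))) - √x / 2 * (1 / √r * (1 / √((M : ℝ) - r))) := by
    intro r
    have hinv : 1 / (2 * (√(r : ℝ) / √x)) = √x / 2 * (1 / √(r : ℝ)) := by
      rw [one_div, mul_inv, inv_div]
      ring
    rw [Real.sqrt_div r.cast_nonneg, hinv]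
    ring
  have hbeta : M * betaSum M = π * M + 2 * hurwitzHalf 1 * √M - √M * recipKernel M := by
    have hsq : √(M : ℝ) * √M = M := Real.mul_self_sqrt M.cast_nonneg
    linear_combination √(M : ℝ) * sqrt_mul_betaSum hM + (π - betaSum M) * hsq
  rw [sum_congr rfl fun r _ => hterm r, sum_sub_distrib, sum_sub_distrib, ← mul_sum, ← mul_sum,
    sum_sqrt_div_sqrt_sub, ← betaSum]
  linear_combination -(1 / √x) * hbeta

lemma tendsto_sum_hurwitzHalf_one_add_div_sqrt_sub (hx : 0 < x) :
    Filter.Tendsto (fun M : ℕ =>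
      ∑ r ∈ range (M + 1), 1 / √((M : ℝ) - r) * hurwitzHalf (1 + r / x) +
        (π * M / √x + 2 * hurwitzHalf 1 * (√M / √x))) Filter.atTop (nhds (-(π / 2 * √x))) := by
  have hkernel := (tendsto_sqrt_mul_recipKernel.comp tendsto_natCast_atTop_atTop).const_mul (1 / √x)
  have hlim := ((tendsto_sum_div_sqrt_sub (summable_abs_hurwitzHalf_one_add hx)).add hkernel).sub
    (tendsto_betaSum.const_mul (√x / 2))
  rw [mul_zero, add_zero, show 0 - √x / 2 * π = -(π / 2 * √x) by ring] at hlim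
  refine hlim.congr' ?_
  filter_upwards [Filter.eventually_gt_atTop 0] with M hM
  exact (sum_hurwitzHalf_one_add_div_sqrt_sub x hM).symm

lemma hurwitzHalfPeriodic_eq_one_add_add_sum (hy : 0 ≤ y) {N : ℕ} (hN : y ≤ N) :
    hurwitzHalfPeriodic y = hurwitzHalf (1 + y) + ∑ m ∈ range N, 1 / √(y - m) := by
  rcases hy.eq_or_lt with rfl | hy
  · have hvanish : ∀ m : ℕ, 1 / √(0 - (m : ℝ)) = 0 := fun m => by
      rw [Real.sqrt_eq_zero_of_nonpos (by simp), div_zero]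
    simp only [hvanish, sum_const_zero, hurwitzHalfPeriodic_zero, add_zero]
  · obtain ⟨n, rfl⟩ : ∃ n, N = n + 1 :=
      Nat.exists_eq_succ_of_ne_zero (by rintro rfl; simp at hN; linarith)
    rw [hurwitzHalfPeriodic_eq_add_sum hy (N := n) (by exact_mod_cast hN),
      hurwitzHalf_eq_one_div_sqrt_add hy, sum_range_succ', Nat.cast_zero, sub_zero, add_comm 1 y]
    push_cast
    ring

lemma sum_periodic_mul_div_sqrt (hx : 0 < x) {M V : ℕ} (hM : (M : ℝ) = x * V) :
    ∑ v ∈ range V, 1 / √((v : ℝ) + 1) * hurwitzHalfPeriodic (x * (v + 1)) =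
      ∑ v ∈ range V, 1 / √((v : ℝ) + 1) * hurwitzHalf (x * (v + 1)) +
      ∑ v ∈ range V, 1 / √((v : ℝ) + 1) * ∑ m ∈ range M, 1 / √(x * (v + 1) - (m + 1)) := by
  rw [← sum_add_distrib]
  refine sum_congr rfl fun v hv => ?_
  have hvV : (v : ℝ) + 1 ≤ V := by exact_mod_cast mem_range.1 hv
  rw [hurwitzHalfPeriodic_eq_add_sum (N := M) (by positivity) (by rw [hM]; nlinarith), mul_add]

lemma sum_one_div_sqrt_sub_natCast (hx : 0 < x) (c : ℝ) (V : ℕ) :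
    ∑ v ∈ range V, 1 / √(V - c / x - v) = ∑ v ∈ range V, √x * (1 / √(x * (v + 1) - c)) := by
  have hreflect := sum_range_sub_succ (fun t => 1 / √(V - c / x - t)) 0 V
  simp only [zero_add] at hreflect
  rw [← hreflect]
  refine sum_congr rfl fun v _ => ?_
  have hscale : x * (v + 1) - c = x * (V - c / x - (V - (v + 1))) := by
    field_simp
    ring
  have hs : √x ≠ 0 := (Real.sqrt_pos.2 hx).ne'
  rw [hscale, Real.sqrt_mul hx.le, ← one_div_mul_one_div, ← mul_assoc,
    mul_one_div_cancel hs, one_mul]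

lemma sum_periodic_neg_div_div_sqrt (hx : 0 < x) {M V : ℕ} (hM : (M : ℝ) = x * V) :
    ∑ m ∈ range M, 1 / √((m : ℝ) + 1) * hurwitzHalfPeriodic (-(m + 1) / x) =
      ∑ r ∈ range (M + 1), 1 / √((M : ℝ) - r) * hurwitzHalf (1 + r / x) +
      ∑ m ∈ range M, 1 / √((m : ℝ) + 1) *
        ∑ v ∈ range V, √x * (1 / √(x * (v + 1) - (m + 1))) := by
  have hreflect : ∑ r ∈ range (M + 1), 1 / √((M : ℝ) - r) * hurwitzHalf (1 + r / x) =
      ∑ m ∈ range M, 1 / √((m : ℝ) + 1) * hurwitzHalf (1 + (M - (m + 1)) / x) := by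
    rw [sum_range_succ, sub_self, Real.sqrt_zero, div_zero, zero_mul, add_zero]
    have hflip := sum_range_sub_succ
      (fun t => 1 / √((M : ℝ) - t) * hurwitzHalf (1 + t / x)) 0 M
    simp only [zero_add, sub_sub_cancel] at hflip
    exact hflip.symm
  rw [hreflect, ← sum_add_distrib]
  refine sum_congr rfl fun m hm => ?_
  have hmM : (m : ℝ) + 1 ≤ M := by exact_mod_cast mem_range.1 hm
  have hshift : hurwitzHalfPeriodic (-((m : ℝ) + 1) / x) =
      hurwitzHalfPeriodic ((M - (m + 1)) / x) := by
    rw [← hurwitzHalfPeriodic_add_intCast _ V, hM]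
    congr 1
    push_cast
    field_simp
    ring
  have hV : ((M : ℝ) - (m + 1)) / x = V - (m + 1) / x := by
    rw [hM]
    field_simp
  have hle : ((M : ℝ) - (m + 1)) / x ≤ V :=
    hV.trans_le (sub_le_self _ (by positivity))
  rw [hshift, hurwitzHalfPeriodic_eq_one_add_add_sum (div_nonneg (by linarith) hx.le) hle, mul_add,
    hV, sum_one_div_sqrt_sub_natCast hx]

/-- The inner sums are matched through
`1 / √m · √x / √(x v - m) = 1 / √v · √(x v) / √(m (x v - m))`, and the right-hand side is `1 / √v`
times `1 / √(x v - m)` less a term of `kernelSum (x v)`. -/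
lemma sum_periodic_sub_sum_periodic (hx : 0 < x) {M V : ℕ} (hM : (M : ℝ) = x * V) :
    ∑ v ∈ range V, 1 / √((v : ℝ) + 1) * hurwitzHalfPeriodic (x * (v + 1)) -
        ∑ m ∈ range M, 1 / √((m : ℝ) + 1) * hurwitzHalfPeriodic (-(m + 1) / x) =
      ∑ v ∈ range V, 1 / √((v : ℝ) + 1) * (hurwitzHalf (x * (v + 1)) + kernelSum (x * (v + 1))) -
      ∑ r ∈ range (M + 1), 1 / √((M : ℝ) - r) * hurwitzHalf (1 + r / x) := by
  have hkernel : ∀ v ∈ range V, kernelSum (x * (v + 1)) =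
      ∑ m ∈ range M, 1 / √(x * (v + 1) - (m + 1)) - √x * √((v : ℝ) + 1) *
        ∑ m ∈ range M, 1 / √((m : ℝ) + 1) * (1 / √(x * (v + 1) - (m + 1))) := by
    intro v hv
    have hvV : (v : ℝ) + 1 ≤ V := by exact_mod_cast mem_range.1 hv
    rw [kernelSum_eq_sum (N := M) (by rw [hM]; nlinarith), mul_sum, ← sum_sub_distrib]
    refine sum_congr rfl fun m _ => ?_
    rw [kernelTerm_eq_sub (by positivity), Real.sqrt_mul hx.le]
    ring
  have hexchange : ∑ m ∈ range M, 1 / √((m : ℝ) + 1) *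
        ∑ v ∈ range V, √x * (1 / √(x * (v + 1) - (m + 1))) =
      ∑ v ∈ range V, √x * ∑ m ∈ range M, 1 / √((m : ℝ) + 1) * (1 / √(x * (v + 1) - (m + 1))) := by
    simp only [mul_sum]
    rw [sum_comm]
    exact sum_congr rfl fun v _ => sum_congr rfl fun m _ => by ring
  have hterm : ∀ v ∈ range V,
      1 / √((v : ℝ) + 1) * (hurwitzHalf (x * (v + 1)) + kernelSum (x * (v + 1))) =
      1 / √((v : ℝ) + 1) * hurwitzHalf (x * (v + 1)) +
        1 / √((v : ℝ) + 1) * ∑ m ∈ range M, 1 / √(x * (v + 1) - (m + 1)) -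
        √x * ∑ m ∈ range M, 1 / √((m : ℝ) + 1) * (1 / √(x * (v + 1) - (m + 1))) := by
    intro v hv
    rw [hkernel v hv]
    field_simp
    ring
  rw [sum_periodic_mul_div_sqrt hx hM, sum_periodic_neg_div_div_sqrt hx hM, hexchange,
    sum_congr rfl hterm, sum_sub_distrib, sum_add_distrib]
  ring

lemma sum_hurwitzHalf_add_kernelSum_div_sqrt (hx : 0 < x) (V : ℕ) :
    ∑ v ∈ range V, 1 / √((v : ℝ) + 1) * (hurwitzHalf (x * (v + 1)) + kernelSum (x * (v + 1))) =
      ∑ v ∈ range V, 1 / √((v : ℝ) + 1) * recipKernel (x * (v + 1)) - π * √x * V -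
        hurwitzHalf 1 * (hurwitzHalf 1 - hurwitzHalf (1 + V)) := by
  have hterm : ∀ v : ℕ,
      1 / √((v : ℝ) + 1) * (hurwitzHalf (x * (v + 1)) + kernelSum (x * (v + 1))) =
      1 / √((v : ℝ) + 1) * recipKernel (x * (v + 1)) - π * √x -
        hurwitzHalf 1 * (1 / √((v : ℝ) + 1)) := by
    intro v
    rw [recipKernel, Real.sqrt_mul hx.le]
    field_simp
    ring
  rw [sum_congr rfl fun v _ => hterm v, sum_sub_distrib, sum_sub_distrib,
    ← mul_sum _ _ (hurwitzHalf 1), sum_one_div_sqrt_succ, sum_const, card_range, nsmul_eq_mul]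
  ring

theorem twistedSum_sub_twistedSum {h k : ℕ} (hh : 0 < h) (hk : 0 < k) (hcop : Nat.Coprime h k) :
    twistedSum h k - twistedSum (-k) h = recipFun (h / k) := by
  have hh' : (0 : ℝ) < h := Nat.cast_pos.2 hh
  have hk' : (0 : ℝ) < k := Nat.cast_pos.2 hk
  have hx : (0 : ℝ) < h / k := div_pos hh' hk'
  have hcop' : IsCoprime (h : ℤ) k := Nat.isCoprime_iff_coprime.2 hcop
  have hlattice := (tendsto_twistedSum hk hcop').sub (tendsto_twistedSum hh hcop'.symm.neg_left)
  have hkN := Filter.tendsto_id.const_mul_atTop' hk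
  have hhN := Filter.tendsto_id.const_mul_atTop' hh
  have hseries := (summable_recipSeries_term hx).hasSum.tendsto_sum_nat.comp hkN
  have hbeta := (tendsto_sum_hurwitzHalf_one_add_div_sqrt_sub hx).comp hhN
  have htail := ((tendsto_hurwitzHalf_add_natCast 1).comp hkN).const_mul (hurwitzHalf 1)
  have hlim := ((hseries.sub_const (hurwitzHalf 1 ^ 2)).add htail).sub hbeta
  rw [mul_zero, add_zero] at hlim
  refine (tendsto_nhds_unique (hlattice.congr fun N => ?_) hlim).trans ?_
  · have hM : ((h * N : ℕ) : ℝ) = h / k * (k * N : ℕ) := by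
      push_cast
      field_simp
    have hroot : √((h * N : ℕ) : ℝ) / √((h : ℝ) / k) = √(k * N : ℕ) := by
      rw [hM, Real.sqrt_mul hx.le, mul_div_cancel_left₀ _ (Real.sqrt_pos.2 hx).ne']
    have hpi : π * ((h * N : ℕ) : ℝ) / √((h : ℝ) / k) = π * √((h : ℝ) / k) * (k * N : ℕ) := by
      rw [hM, ← mul_assoc, mul_div_right_comm, mul_div_assoc, Real.div_sqrt]
    have hmain := sum_periodic_sub_sum_periodic hx hM
    rw [sum_hurwitzHalf_add_kernelSum_div_sqrt hx] at hmain
    have hleft : ∀ v : ℕ, ((h : ℤ) : ℝ) * (v + 1) / k = h / k * (v + 1) := fun v => by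
      rw [Int.cast_natCast, mul_div_right_comm]
    have hright : ∀ m : ℕ, ((-k : ℤ) : ℝ) * (m + 1) / h = -(m + 1) / (h / k) := fun m => by
      push_cast
      field_simp
    simp only [Function.comp_apply, id_eq, hroot, hpi, hleft, hright]
    linear_combination hmain
  · rw [recipFun, recipSeries]
    ring

end Reciprocity

section KernelRemainder

variable {m x y : ℝ}

/-- A summand `y^(-1/2) * kernelTerm m y` of the normalized reciprocity kernel. The summands of
`(hurwitzHalf (1 + y) - hurwitzHalf 1) / √y` are its translates by `m`. -/
noncomputable def normalizedTerm (m y : ℝ) : ℝ := 1 / √y * kernelTerm m y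

lemma normalizedTerm_eq_zero (hy : y ≤ m) : normalizedTerm m y = 0 := by
  rw [normalizedTerm, kernelTerm_eq_zero hy, mul_zero]

lemma normalizedTerm_add_self (hm : 0 < m) (hy : 0 ≤ y) :
    normalizedTerm m (y + m) = 1 / √y * (1 / √(y + m) - 1 / √m) := by
  have : 0 < √(y + m) := Real.sqrt_pos.2 (by linarith)
  rw [normalizedTerm, kernelTerm_eq_sub hm, add_sub_cancel_right]
  field_simp

lemma normalizedTerm_eq (hm : 0 < m) (hy : m ≤ y) :
    normalizedTerm m y =
      -(1 / √m) * (1 / √y) + 2 * (1 / √y * (1 / (√m + √y + √(y - m)))) := by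
  rw [normalizedTerm, kernelTerm_eq_neg_add hm hy]
  ring

lemma abs_normalizedTerm_le (hm : 0 < m) (y : ℝ) :
    |normalizedTerm m y| ≤ √(y - m) * (1 / √m ^ 3) := by
  rcases le_total y m with h | h
  · rw [normalizedTerm_eq_zero h, abs_zero]
    positivity
  have hsq : √m ^ 2 = m := Real.sq_sqrt hm.le
  have hle : √m ≤ √y := Real.sqrt_le_sqrt h
  rw [normalizedTerm, abs_mul, abs_of_nonneg (by positivity)]
  calc 1 / √y * |kernelTerm m y| ≤ 1 / √m * (√(y - m) / m) := by
        gcongr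
        exact (abs_kernelTerm_le hm).trans (half_le_self (by positivity))
    _ = 1 / √m * (√(y - m) / √m ^ 2) := by rw [hsq]
    _ = √(y - m) * (1 / √m ^ 3) := by field_simp

lemma continuousOn_normalizedTerm (hm : 0 < m) :
    ContinuousOn (normalizedTerm m) (Set.Ioi 0) :=
  continuousOn_one_div_sqrt.mul (continuous_kernelTerm hm).continuousOn

lemma antitoneOn_one_div_add_sqrt_add_sqrt (hm : 0 < m) :
    AntitoneOn (fun y => 1 / (√m + √y + √(y - m))) (Set.Ici m) := fun s _ t _ hst =>
  one_div_le_one_div_of_le (by positivity) (by gcongr)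

lemma convexOn_one_div_add_sqrt_add_sqrt (hm : 0 < m) :
    ConvexOn ℝ (Set.Ici m) fun y => 1 / (√m + √y + √(y - m)) := by
  have hsqrt := Real.strictConcaveOn_sqrt.concaveOn
  have hshift : ConcaveOn ℝ (Set.Ici m) fun y => √(y - m) := by
    simpa [Function.comp_def, sub_eq_add_neg] using hsqrt.translate_left (-m)
  exact convexOn_one_div
    (((concaveOn_const _ (convex_Ici m)).add (hsqrt.subset (Set.Ici_subset_Ici.2 hm.le)
      (convex_Ici m))).add hshift) fun y _ => by positivity

lemma abs_trapezoidal_error_normalizedTerm_le_of_le {a h : ℝ} (n : ℕ) (hm : 1 ≤ m)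
    (hh : 0 < h) (hh1 : h ≤ 1) (hma : m ≤ a) (ham : a ≤ m + h) :
    |trapezoidal_error (normalizedTerm m) n a (a + n * h)| ≤ 5 * (h * √h) * (1 / √m ^ 3) := by
  have hm0 : 0 < m := by linarith
  have hroot : 1 ≤ √m := Real.one_le_sqrt.2 hm
  have hpos : Set.Ici a ⊆ Set.Ioi 0 := Set.Ici_subset_Ioi.2 (hm0.trans_le hma)
  have hsub : Set.Ici a ⊆ Set.Ici m := Set.Ici_subset_Ici.2 hma
  have huc := convexOn_one_div_sqrt.subset hpos (convex_Ici a)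
  have hua := antitoneOn_one_div_sqrt.mono hpos
  have hwc := (convexOn_one_div_add_sqrt_add_sqrt hm0).subset hsub (convex_Ici a)
  have hwa := (antitoneOn_one_div_add_sqrt_add_sqrt hm0).mono hsub
  have huw : AntitoneOn (fun y => 1 / √y * (1 / (√m + √y + √(y - m)))) (Set.Ici a) :=
    fun _ hs _ ht hst => mul_le_mul (hua hs ht hst) (hwa hs ht hst) (by positivity) (by positivity)
  have hgen := abs_trapezoidal_error_le_of_sub_convexOn_antitoneOn n hh
    (show 0 ≤ 1 / √m by positivity) (fun y hy => normalizedTerm_eq hm0 (hsub hy)) huc hua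
    (huc.mul hwc (fun _ _ => by positivity) (fun _ _ => by positivity) (hua.monovaryOn hwa)) huw
  have hfa : |normalizedTerm m a| ≤ √h * (1 / √m ^ 3) := by
    refine (abs_normalizedTerm_le hm0 a).trans ?_
    gcongr
    linarith
  have hfah : |normalizedTerm m (a + h)| ≤ 2 * √h * (1 / √m ^ 3) := by
    refine (abs_normalizedTerm_le hm0 (a + h)).trans ?_
    gcongr
    exact (Real.sqrt_le_sqrt (by linarith)).trans (sqrt_two_mul_le h)
  have hdrop : 1 / √m * (1 / √a - 1 / √(a + h)) ≤ √h * (1 / √m ^ 3) := by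
    have hle := one_div_sqrt_sub_le (hm0.trans_le hma) (le_add_of_nonneg_right hh.le)
    have hnonneg := one_div_sqrt_sub_nonneg (hm0.trans_le hma) (le_add_of_nonneg_right hh.le)
    calc 1 / √m * (1 / √a - 1 / √(a + h)) ≤ 1 * ((a + h - a) / √a ^ 3) :=
          mul_le_mul ((div_le_one (by linarith)).2 hroot) hle hnonneg zero_le_one
      _ = h * (1 / √a ^ 3) := by ring
      _ ≤ √h * (1 / √m ^ 3) := by
        gcongr
        exact le_sqrt_self hh.le hh1
  calc _ ≤ h * (|normalizedTerm m a| + |normalizedTerm m (a + h)| +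
        2 * (1 / √m * (1 / √a - 1 / √(a + h)))) := by rw [← mul_assoc 2]; exact hgen
    _ ≤ h * (√h * (1 / √m ^ 3) + 2 * √h * (1 / √m ^ 3) + 2 * (√h * (1 / √m ^ 3))) := by gcongr
    _ = _ := by ring

lemma abs_trapezoidal_error_normalizedTerm_le {a h : ℝ} (n : ℕ) (hm : 1 ≤ m)
    (hh : 0 < h) (hh1 : h ≤ 1) (ha : 0 < a) (ham : a ≤ m + h) :
    |trapezoidal_error (normalizedTerm m) n a (a + n * h)| ≤ 7 * (h * √h) * (1 / √m ^ 3) := by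
  have hm0 : 0 < m := by linarith
  have hT : 0 ≤ (h * √h) * (1 / √m ^ 3) := by positivity
  induction n generalizing a with
  | zero => simpa using by positivity
  | succ n ih =>
    rcases le_or_gt m a with hma | ham'
    · have := abs_trapezoidal_error_normalizedTerm_le_of_le (n + 1) hm hh hh1 hma ham
      linarith
    have hint : IntervalIntegrable (normalizedTerm m) MeasureTheory.volume a
        (a + (n + 1) * h) :=
      ((continuousOn_normalizedTerm hm0).mono fun y hy =>
        (lt_min ha (by positivity)).trans_le hy.1).intervalIntegrable
    push_cast
    rw [trapezoidal_error_succ n hint]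
    rcases le_or_gt (a + h) m with hahm | hahm
    · have hcell : |trapezoidal_error (normalizedTerm m) 1 a (a + h)| ≤ 2 * (a + h - a) * 0 :=
        abs_trapezoidal_error_one_le (by linarith) fun t ht => by
          rw [normalizedTerm_eq_zero (ht.2.trans hahm), abs_zero]
      rw [mul_zero, abs_nonpos_iff] at hcell
      rw [hcell, zero_add]
      exact ih (by linarith) (by linarith)
    · have hcell : |trapezoidal_error (normalizedTerm m) 1 a (a + h)| ≤
          2 * (a + h - a) * (√h * (1 / √m ^ 3)) :=
        abs_trapezoidal_error_one_le (by linarith) fun t ht =>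
          (abs_normalizedTerm_le hm0 t).trans (by gcongr; linarith [ht.2])
      have htail := abs_trapezoidal_error_normalizedTerm_le_of_le n hm hh hh1 hahm.le (by linarith)
      calc _ ≤ 2 * (a + h - a) * (√h * (1 / √m ^ 3)) + 5 * (h * √h) * (1 / √m ^ 3) :=
            (abs_add_le _ _).trans (add_le_add hcell htail)
        _ = _ := by ring

/-- The part of `y^(-1/2) * recipKernel y` that vanishes at `y = 0`. -/
noncomputable def kernelRemainder (y : ℝ) : ℝ :=
  1 / √y * (hurwitzHalf (1 + y) - hurwitzHalf 1 + kernelSum y)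

lemma hasSum_kernelTerm (y : ℝ) : HasSum (fun j : ℕ => kernelTerm (j + 1) y) (kernelSum y) :=
  hasSum_sum_of_ne_finset_zero fun j hj => kernelTerm_eq_zero <| by
    rw [mem_range, not_lt] at hj
    have hjy : (⌊y⌋₊ : ℝ) ≤ j := by exact_mod_cast hj
    linarith [Nat.lt_floor_add_one y]

lemma hasSum_kernelRemainder (hy : 0 ≤ y) :
    HasSum (fun j : ℕ => normalizedTerm (j + 1) (y + (j + 1)) + normalizedTerm (j + 1) y)
      (kernelRemainder y) := by
  have hzeta := (hasSum_hurwitzHalf_sub one_pos (le_add_of_nonneg_right hy)).neg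
  have hsum := (hzeta.add (hasSum_kernelTerm y)).mul_left (1 / √y)
  rw [neg_sub] at hsum
  refine hsum.congr_fun fun j => ?_
  rw [normalizedTerm_add_self (by positivity) hy, normalizedTerm, add_comm (j : ℝ) 1,
    show y + (1 + j) = 1 + y + j by ring]
  ring

lemma abs_normalizedTerm_add_le (j : ℕ) {x : ℝ} (hyx : y ≤ x) :
    |normalizedTerm (j + 1) (y + (j + 1)) + normalizedTerm (j + 1) y| ≤
      2 * √x * (1 / √((j : ℝ) + 1) ^ 3) := by
  have hj : (0 : ℝ) < j + 1 := by positivity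
  calc _ ≤ √(y + (j + 1) - (j + 1)) * (1 / √((j : ℝ) + 1) ^ 3) +
        √(y - (j + 1)) * (1 / √((j : ℝ) + 1) ^ 3) :=
        (abs_add_le _ _).trans
          (add_le_add (abs_normalizedTerm_le hj _) (abs_normalizedTerm_le hj _))
    _ ≤ √x * (1 / √((j : ℝ) + 1) ^ 3) + √x * (1 / √((j : ℝ) + 1) ^ 3) := by
        gcongr <;> linarith
    _ = _ := by ring

lemma abs_kernelRemainder_le (hy : 0 ≤ y) : |kernelRemainder y| ≤ 2 * zetaThreeHalves * √y := by
  have hbound := (hasSum_kernelRemainder hy).norm_le_of_bounded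
    (summable_one_div_sqrt_cube.hasSum.mul_left (2 * √y))
    fun j => abs_normalizedTerm_add_le j le_rfl
  exact hbound.trans_eq (by rw [zetaThreeHalves]; ring)

lemma continuousOn_kernelRemainder_Ioi : ContinuousOn kernelRemainder (Set.Ioi 0) := by
  have hzeta : ContinuousOn (fun y : ℝ => hurwitzHalf (1 + y)) (Set.Ioi 0) :=
    continuousOn_hurwitzHalf.comp (by fun_prop) fun y hy => add_pos one_pos (Set.mem_Ioi.1 hy)
  exact continuousOn_one_div_sqrt.mul
    ((hzeta.sub continuousOn_const).add continuous_kernelSum.continuousOn)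

lemma continuousOn_kernelRemainder : ContinuousOn kernelRemainder (Set.Ici 0) := by
  intro y hy
  rcases (Set.mem_Ici.1 hy).eq_or_lt with rfl | hpos
  · have hzero : kernelRemainder 0 = 0 := by simp [kernelRemainder]
    have hbound : Filter.Tendsto (fun y => 2 * zetaThreeHalves * √y) (nhdsWithin 0 (Set.Ici 0))
        (nhds 0) :=
      ((by fun_prop : Continuous fun y => 2 * zetaThreeHalves * √y).tendsto' 0 0
        (by simp)).mono_left
        nhdsWithin_le_nhds
    rw [ContinuousWithinAt, hzero]
    refine squeeze_zero_norm' ?_ hbound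
    filter_upwards [self_mem_nhdsWithin] with z hz using abs_kernelRemainder_le hz
  · exact (continuousOn_kernelRemainder_Ioi.continuousAt (Ioi_mem_nhds hpos)).continuousWithinAt

lemma abs_integral_kernelRemainder_le (hx : 0 ≤ x) :
    |∫ t in (0 : ℝ)..x, kernelRemainder t| ≤ 2 * zetaThreeHalves * (x * √x) := by
  have hbound := intervalIntegral.norm_integral_le_of_norm_le_const (a := 0) (b := x)
    (f := kernelRemainder) (C := 2 * zetaThreeHalves * √x) fun t ht => by
      rw [Set.uIoc_of_le hx] at ht
      have := one_le_zetaThreeHalves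
      exact (abs_kernelRemainder_le ht.1.le).trans (by gcongr; exact ht.2)
  rw [Real.norm_eq_abs, sub_zero, abs_of_nonneg hx] at hbound
  exact hbound.trans_eq (by ring)

lemma hasSum_trapezoidal_error_kernelRemainder (hx : 0 < x) (n : ℕ) :
    HasSum (fun j : ℕ =>
        trapezoidal_error (normalizedTerm (j + 1)) n (x + (j + 1)) (x + (j + 1) + n * x) +
          trapezoidal_error (normalizedTerm (j + 1)) n x (x + n * x))
      (trapezoidal_error kernelRemainder n x (x + n * x)) := by
  have hpos : Set.Icc x (x + n * x) ⊆ Set.Ioi 0 := fun y hy => hx.trans_le hy.1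
  have hcont (j : ℕ) : ContinuousOn (normalizedTerm (j + 1)) (Set.Ioi 0) :=
    continuousOn_normalizedTerm (by positivity)
  have hcont' (j : ℕ) : ContinuousOn (fun y => normalizedTerm (j + 1) (y + (j + 1)))
      (Set.Ioi 0) :=
    (hcont j).comp (by fun_prop) fun y hy => add_pos (Set.mem_Ioi.1 hy) (by positivity)
  have hint {f : ℝ → ℝ} (hf : ContinuousOn f (Set.Ioi 0)) :
      IntervalIntegrable f MeasureTheory.volume x (x + n * x) :=
    (hf.mono hpos).intervalIntegrable_of_Icc (le_add_of_nonneg_right (by positivity))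
  refine (hasSum_trapezoidal_error n hx.le
    (f := fun j y => normalizedTerm (j + 1) (y + (j + 1)) + normalizedTerm (j + 1) y)
    (fun j => ((hcont' j).add (hcont j)).mono hpos)
    (fun j t ht => abs_normalizedTerm_add_le j ht.2) (summable_one_div_sqrt_cube.mul_left _)
    fun t ht => hasSum_kernelRemainder (hpos ht).le).congr_fun fun j => ?_
  rw [trapezoidal_error_add n (hint (hcont' j)) (hint (hcont j)),
    trapezoidal_error_comp_add_right, add_right_comm x _ (_ : ℝ)]

lemma abs_trapezoidal_error_kernelRemainder_le (hx : 0 < x) (hx1 : x ≤ 1) (n : ℕ) :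
    |trapezoidal_error kernelRemainder n x (x + n * x)| ≤ 14 * zetaThreeHalves * (x * √x) := by
  refine ((hasSum_trapezoidal_error_kernelRemainder hx n).norm_le_of_bounded
    (summable_one_div_sqrt_cube.hasSum.mul_left (14 * (x * √x))) fun j => ?_).trans_eq
    (by rw [zetaThreeHalves]; ring)
  have hj : (1 : ℝ) ≤ j + 1 := by simp
  refine (norm_add_le _ _).trans ?_
  simp only [Real.norm_eq_abs]
  linarith [abs_trapezoidal_error_normalizedTerm_le n hj hx hx1
    (show 0 < x + (j + 1) by positivity) (by linarith),
    abs_trapezoidal_error_normalizedTerm_le n hj hx hx1 hx (by linarith)]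

end KernelRemainder

section SmallArguments

open MeasureTheory

variable {x y : ℝ}

lemma trapezoidal_error_one_div (hx : 0 < x) (n : ℕ) :
    trapezoidal_error (fun y => 1 / y) n x (x + n * x) =
      (harmonic n - Real.log (n + 1)) + (1 / ((n : ℝ) + 1) - 1) / 2 := by
  have hsum : ∑ j ∈ range n, 1 / (x + j * x) = harmonic n / x := by
    simp only [harmonic, Rat.cast_sum, Rat.cast_inv, Rat.cast_natCast, sum_div]
    refine sum_congr rfl fun j _ => ?_
    push_cast
    field_simp
    ring
  have hend : x + n * x = (n + 1) * x := by ring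
  rw [trapezoidal_error_eq_sum, hsum, integral_one_div_of_pos hx (by positivity), hend,
    mul_div_cancel_right₀ _ hx.ne']
  field_simp
  ring

lemma tendsto_trapezoidal_error_one_div (hx : 0 < x) :
    Filter.Tendsto (fun n : ℕ => trapezoidal_error (fun y => 1 / y) n x (x + n * x))
      Filter.atTop (nhds (eulerMascheroniConstant - 1 / 2)) := by
  simp only [trapezoidal_error_one_div hx]
  have hend := ((tendsto_one_div_add_atTop_nhds_zero_nat (𝕜 := ℝ)).sub_const 1).div_const 2
  convert Real.tendsto_harmonic_sub_log_add_one.add hend using 2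
  ring

lemma tendsto_trapezoidal_error_one_div_sqrt (hx : 0 < x) :
    Filter.Tendsto (fun n : ℕ => trapezoidal_error (fun y => 1 / √y) n x (x + n * x))
      Filter.atTop (nhds (√x * (hurwitzHalf 1 + 3 / 2))) := by
  have hscale (n : ℕ) : trapezoidal_error (fun y => 1 / √y) n x (x + n * x) =
      √x * trapezoidal_error (fun y => 1 / √y) n 1 (1 + n) := by
    have hfun : (fun y => 1 / √(x * y)) = fun y => 1 / √x * (1 / √y) := by
      funext y
      rw [Real.sqrt_mul hx.le, one_div_mul_one_div]
    have hcomp := trapezoidal_error_comp_mul_left (f := fun y => 1 / √y) (a := 1) (b := 1 + n)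
      hx.ne' n
    rw [hfun, trapezoidal_error_const_mul, mul_one, mul_one_add, mul_comm x n] at hcomp
    rw [eq_comm, inv_mul_eq_iff_eq_mul₀ hx.ne'] at hcomp
    rw [hcomp, ← mul_assoc, mul_one_div, Real.div_sqrt]
  have hone (n : ℕ) : trapezoidal_error (fun y => 1 / √y) n 1 (1 + n) =
      (∑ j ∈ range n, 1 / √((1 : ℝ) + j) - 2 * √(1 + n)) + 3 / 2 + 1 / √(1 + n) / 2 := by
    have hsum := sum_one_div_sqrt_sub_eq_trapezoidal_error one_pos n
    rw [Real.sqrt_one] at hsum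
    rw [hsum, div_div, mul_comm _ (2 : ℝ)]
    ring
  have hinv : Filter.Tendsto (fun n : ℕ => 1 / √(1 + (n : ℝ))) Filter.atTop (nhds 0) :=
    tendsto_one_div_sqrt_atTop.comp
      (Filter.tendsto_atTop_add_const_left _ _ tendsto_natCast_atTop_atTop)
  simp only [hscale, hone]
  simpa using (((tendsto_sum_one_div_sqrt_sub one_pos).add_const (3 / 2)).add
    (hinv.div_const 2)).const_mul √x

/-- The summand of `√x * recipSeries x`, viewed as a Riemann sum of mesh `x`. -/
noncomputable def normalizedKernel (y : ℝ) : ℝ := 1 / √y * recipKernel y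

lemma normalizedKernel_eq (hy : 0 < y) :
    normalizedKernel y = 1 / y + 2 * hurwitzHalf 1 * (1 / √y) + (π + kernelRemainder y) := by
  have hinv : 1 / y = 1 / √y * (1 / √y) := by rw [one_div_mul_one_div, Real.mul_self_sqrt hy.le]
  rw [normalizedKernel, recipKernel, kernelRemainder, hurwitzHalf_eq_one_div_sqrt_add hy,
    add_comm 1 y, hinv]
  field_simp
  ring

lemma continuousOn_normalizedKernel : ContinuousOn normalizedKernel (Set.Ioi 0) :=
  continuousOn_one_div_sqrt.mul continuousOn_recipKernel

lemma intervalIntegrable_of_continuousOn_Ioi {f : ℝ → ℝ} {a b : ℝ}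
    (hf : ContinuousOn f (Set.Ioi 0)) (ha : 0 < a) (hb : 0 < b) :
    IntervalIntegrable f volume a b :=
  (hf.mono fun _ ht => (lt_min ha hb).trans_le ht.1).intervalIntegrable

lemma abs_normalizedKernel_le (hy : 0 < y) :
    |normalizedKernel y| ≤ recipKernelBound * (1 / √y ^ 3) := by
  calc |normalizedKernel y| = 1 / √y * |recipKernel y| := by
        rw [normalizedKernel, abs_mul, abs_of_pos (by positivity)]
    _ ≤ 1 / √y * (recipKernelBound / √y ^ 2) := by
        rw [Real.sq_sqrt hy.le]
        gcongr
        exact abs_recipKernel_le hy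
    _ = _ := by field_simp

lemma integrableOn_normalizedKernel (hx : 0 < x) : IntegrableOn normalizedKernel (Set.Ioi x) := by
  have hpow := (integrableOn_Ioi_rpow_of_lt (by norm_num : (-(3 / 2) : ℝ) < -1) hx).const_mul
    recipKernelBound
  refine hpow.mono'
    ((continuousOn_normalizedKernel.mono (Set.Ioi_subset_Ioi hx.le)).aestronglyMeasurable
      measurableSet_Ioi) ?_
  filter_upwards [ae_restrict_mem measurableSet_Ioi] with y hy
  have hy0 : 0 < y := hx.trans hy
  refine (abs_normalizedKernel_le hy0).trans_eq ?_
  rw [Real.sqrt_eq_rpow, ← Real.rpow_mul_natCast hy0.le, one_div, ← Real.rpow_neg hy0.le]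
  norm_num

lemma tendsto_normalizedKernel_atTop :
    Filter.Tendsto normalizedKernel Filter.atTop (nhds 0) := by
  have hbound : Filter.Tendsto (fun y : ℝ => recipKernelBound * (1 / √y) ^ 3) Filter.atTop
      (nhds 0) := by
    simpa using (tendsto_one_div_sqrt_atTop.pow 3).const_mul recipKernelBound
  refine squeeze_zero_norm' ?_ hbound
  filter_upwards [Filter.eventually_gt_atTop 0] with y hy
  rw [one_div_pow]
  exact abs_normalizedKernel_le hy

lemma tendsto_sum_normalizedKernel (hx : 0 < x) :
    Filter.Tendsto (fun n : ℕ => x * ∑ j ∈ range n, normalizedKernel (x + j * x)) Filter.atTop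
      (nhds (√x * recipSeries x)) := by
  refine ((summable_recipSeries_term hx).hasSum.tendsto_sum_nat.const_mul √x).congr fun n => ?_
  rw [mul_sum, mul_sum]
  refine sum_congr rfl fun j _ => ?_
  rw [normalizedKernel, show x + j * x = x * (j + 1) by ring, Real.sqrt_mul hx.le,
    ← one_div_mul_one_div]
  nth_rewrite 1 [← Real.div_sqrt (x := x)]
  ring

lemma trapezoidal_error_normalizedKernel (hx : 0 < x) (n : ℕ) :
    trapezoidal_error normalizedKernel n x (x + n * x) =
      trapezoidal_error (fun y => 1 / y) n x (x + n * x) +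
        2 * hurwitzHalf 1 * trapezoidal_error (fun y => 1 / √y) n x (x + n * x) +
        trapezoidal_error kernelRemainder n x (x + n * x) := by
  have hend : 0 < x + n * x := by positivity
  have hinv : IntervalIntegrable (fun y : ℝ => 1 / y) volume x (x + n * x) :=
    intervalIntegrable_of_continuousOn_Ioi
      (continuousOn_const.div continuousOn_id fun _ hy => (Set.mem_Ioi.1 hy).ne') hx hend
  have hroot := (intervalIntegrable_of_continuousOn_Ioi continuousOn_one_div_sqrt hx
    hend).const_mul (2 * hurwitzHalf 1)
  have hrem := intervalIntegrable_of_continuousOn_Ioi continuousOn_kernelRemainder_Ioi hx hend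
  have hconst : trapezoidal_error (fun _ : ℝ => π) n x (x + n * x) = 0 := by
    rw [trapezoidal_error_eq_sum]
    simp
    ring
  rw [trapezoidal_error_congr n hx.le fun y hy => normalizedKernel_eq (hx.trans_le hy.1),
    trapezoidal_error_add n (hinv.add hroot) (intervalIntegrable_const.add hrem),
    trapezoidal_error_add n hinv hroot, trapezoidal_error_const_mul,
    trapezoidal_error_add n (by simp) hrem, hconst, zero_add]

/-- The constant in the expansion of `recipFun` at `0`, in the form in which the summation
formula produces it. It equals `-log (8 * π)`. -/
noncomputable def recipConst : ℝ :=
  4 * hurwitzHalf 1 + π + (∫ t in (0 : ℝ)..1, kernelRemainder t) +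
    ∫ t in Set.Ioi 1, normalizedKernel t

lemma integral_normalizedKernel (hx : 0 < x) :
    ∫ t in Set.Ioi x, normalizedKernel t =
      recipConst - Real.log x - 4 * hurwitzHalf 1 * √x - π * x -
        ∫ t in (0 : ℝ)..x, kernelRemainder t := by
  have hrem (b : ℝ) (hb : 0 ≤ b) : IntervalIntegrable kernelRemainder volume 0 b :=
    (continuousOn_kernelRemainder.mono fun _ ht => ht.1).intervalIntegrable_of_Icc hb
  have hrem1 := (hrem x hx.le).symm.trans (hrem 1 zero_le_one)
  have hinv : IntervalIntegrable (fun y : ℝ => 1 / y) volume x 1 :=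
    intervalIntegrable_of_continuousOn_Ioi
      (continuousOn_const.div continuousOn_id fun _ hy => (Set.mem_Ioi.1 hy).ne') hx one_pos
  have hroot := (intervalIntegrable_of_continuousOn_Ioi continuousOn_one_div_sqrt hx
    one_pos).const_mul (2 * hurwitzHalf 1)
  have hone : ∫ t in x..1, normalizedKernel t =
      ∫ t in x..1, (1 / t + 2 * hurwitzHalf 1 * (1 / √t) + (π + kernelRemainder t)) :=
    intervalIntegral.integral_congr fun t ht =>
      normalizedKernel_eq ((lt_min hx one_pos).trans_le ht.1)
  rw [← intervalIntegral.integral_interval_add_Ioi (integrableOn_normalizedKernel hx)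
      (integrableOn_normalizedKernel one_pos), hone,
    intervalIntegral.integral_add (hinv.add hroot) (intervalIntegrable_const.add hrem1),
    intervalIntegral.integral_add hinv hroot,
    intervalIntegral.integral_add intervalIntegrable_const hrem1,
    integral_one_div_of_pos hx one_pos, intervalIntegral.integral_const_mul,
    integral_one_div_sqrt hx.le zero_le_one, intervalIntegral.integral_const,
    ← intervalIntegral.integral_interval_sub_left (hrem 1 zero_le_one) (hrem x hx.le),
    recipConst, Real.sqrt_one, one_div, Real.log_inv, smul_eq_mul]
  ring

lemma tendsto_trapezoidal_error_normalizedKernel (hx : 0 < x) :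
    Filter.Tendsto (fun n : ℕ => trapezoidal_error normalizedKernel n x (x + n * x)) Filter.atTop
      (nhds (√x * recipSeries x - x * (normalizedKernel x / 2) -
        ∫ t in Set.Ioi x, normalizedKernel t)) := by
  have hend : Filter.Tendsto (fun n : ℕ => x + n * x) Filter.atTop Filter.atTop :=
    Filter.tendsto_atTop_add_const_left _ _ (tendsto_natCast_atTop_atTop.atTop_mul_const hx)
  have hvalue := ((tendsto_normalizedKernel_atTop.comp hend).sub_const
    (normalizedKernel x)).div_const 2
  have hintegral := intervalIntegral_tendsto_integral_Ioi x (integrableOn_normalizedKernel hx) hend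
  convert ((tendsto_sum_normalizedKernel hx).add (hvalue.const_mul x)).sub hintegral using 2
  · rw [trapezoidal_error_eq_sum, mul_add, Function.comp_apply]
  · ring

lemma tendsto_trapezoidal_error_kernelRemainder (hx : 0 < x) :
    Filter.Tendsto (fun n : ℕ => trapezoidal_error kernelRemainder n x (x + n * x)) Filter.atTop
      (nhds (√x * recipSeries x -
        (eulerMascheroniConstant - Real.log x + recipConst + 2 * hurwitzHalf 1 ^ 2 * √x -
          π * x / 2) - (x * kernelRemainder x / 2 - ∫ t in (0 : ℝ)..x, kernelRemainder t))) := by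
  have hlim := ((tendsto_trapezoidal_error_normalizedKernel hx).sub
    (tendsto_trapezoidal_error_one_div hx)).sub
    ((tendsto_trapezoidal_error_one_div_sqrt hx).const_mul (2 * hurwitzHalf 1))
  convert hlim using 2
  · rw [trapezoidal_error_normalizedKernel hx]
    ring
  · have hinv : x * (1 / x) = 1 := mul_one_div_cancel hx.ne'
    have hroot : x * (1 / √x) = √x := by rw [mul_one_div, Real.div_sqrt]
    rw [integral_normalizedKernel hx, normalizedKernel_eq hx]
    linear_combination 1 / 2 * hinv + hurwitzHalf 1 * hroot

lemma abs_sqrt_mul_recipSeries_sub_le (hx : 0 < x) (hx1 : x ≤ 1) :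
    |√x * recipSeries x - (eulerMascheroniConstant - Real.log x + recipConst +
      2 * hurwitzHalf 1 ^ 2 * √x - π * x / 2)| ≤ 17 * zetaThreeHalves * (x * √x) := by
  have herror := le_of_tendsto (tendsto_trapezoidal_error_kernelRemainder hx).abs
    (Filter.Eventually.of_forall (abs_trapezoidal_error_kernelRemainder_le hx hx1))
  have hvalue : |x * kernelRemainder x / 2| ≤ zetaThreeHalves * (x * √x) := by
    rw [abs_div, abs_mul, abs_of_pos hx, abs_two]
    linarith [mul_le_mul_of_nonneg_left (abs_kernelRemainder_le hx.le) hx.le]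
  have hintegral := abs_integral_kernelRemainder_le hx.le
  rw [abs_le] at *
  constructor <;> linarith [herror.1, herror.2, hvalue.1, hvalue.2, hintegral.1, hintegral.2]

lemma abs_recipFun_sub_le (hx : 0 < x) (hx1 : x ≤ 1) :
    |recipFun x - 1 / √x * (eulerMascheroniConstant - Real.log x + recipConst) -
      hurwitzHalf 1 ^ 2| ≤ 17 * zetaThreeHalves * x := by
  have hroot : 0 < √x := Real.sqrt_pos.2 hx
  refine le_of_mul_le_mul_left ?_ hroot
  calc _ = |√x * (recipFun x - 1 / √x * (eulerMascheroniConstant - Real.log x + recipConst) -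
          hurwitzHalf 1 ^ 2)| := by rw [abs_mul, abs_of_pos hroot]
    _ = |√x * recipSeries x - (eulerMascheroniConstant - Real.log x + recipConst +
          2 * hurwitzHalf 1 ^ 2 * √x - π * x / 2)| := by
        congr 1
        have hinv : √x * (1 / √x) = 1 := mul_one_div_cancel hroot.ne'
        rw [recipFun]
        linear_combination π / 2 * Real.mul_self_sqrt hx.le -
          (eulerMascheroniConstant - Real.log x + recipConst) * hinv
    _ ≤ 17 * zetaThreeHalves * (x * √x) := abs_sqrt_mul_recipSeries_sub_le hx hx1
    _ = _ := by ring

end SmallArguments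

section RiemannSum

variable {f : ℝ → ℝ} {ε : ℝ}

lemma abs_one_div_mul_sum_sub_integral_le {N : ℕ} (hN : 0 < N)
    (hf : ContinuousOn f (Set.Icc 0 1))
    (hosc : ∀ s ∈ Set.Icc (0 : ℝ) 1, ∀ t ∈ Set.Icc (0 : ℝ) 1, |s - t| ≤ 1 / N → |f s - f t| ≤ ε) :
    |1 / (N : ℝ) * ∑ n ∈ range N, f ((n + 1) / N) - ∫ t in (0 : ℝ)..1, f t| ≤ ε := by
  have hN' : (0 : ℝ) < N := Nat.cast_pos.2 hN
  have hlen (n : ℕ) : ((n : ℝ) + 1) / N - n / N = 1 / N := by ring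
  have hle (n : ℕ) : (n : ℝ) / N ≤ (n + 1) / N := by gcongr; linarith
  have hsub (n : ℕ) (hn : n < N) : Set.Icc ((n : ℝ) / N) ((n + 1) / N) ⊆ Set.Icc 0 1 := by
    have hn' : (n : ℝ) + 1 ≤ N := by exact_mod_cast hn
    exact Set.Icc_subset_Icc (by positivity) ((div_le_one hN').2 hn')
  have hint (n : ℕ) (hn : n < N) : IntervalIntegrable f MeasureTheory.volume (n / N)
      ((n + 1) / N) :=
    (hf.mono (hsub n hn)).intervalIntegrable_of_Icc (hle n)
  have hsplit : ∫ t in (0 : ℝ)..1, f t =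
      ∑ n ∈ range N, ∫ t in (n / N : ℝ)..((n + 1) / N), f t := by
    have hadj := intervalIntegral.sum_integral_adjacent_intervals (f := f)
      (μ := MeasureTheory.volume) (a := fun n : ℕ => (n : ℝ) / N) (n := N) fun n hn => by
        simpa using hint n hn
    simpa [div_self hN'.ne'] using hadj.symm
  have hcell (n : ℕ) (hn : n ∈ range N) :
      |1 / (N : ℝ) * f ((n + 1) / N) - ∫ t in (n / N : ℝ)..((n + 1) / N), f t| ≤ ε * (1 / N) := by
    have hn' := mem_range.1 hn
    have hconst : 1 / (N : ℝ) * f ((n + 1) / N) =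
        ∫ _ in (n / N : ℝ)..((n + 1) / N), f ((n + 1) / N) := by
      rw [intervalIntegral.integral_const, hlen, smul_eq_mul]
    rw [hconst, ← intervalIntegral.integral_sub intervalIntegrable_const (hint n hn')]
    have hwidth : ε * (1 / N) = ε * |((n : ℝ) + 1) / N - n / N| := by
      rw [hlen, abs_of_pos (by positivity)]
    rw [hwidth]
    refine intervalIntegral.norm_integral_le_of_norm_le_const (E := ℝ) fun t ht => ?_
    rw [Set.uIoc_of_le (hle n)] at ht
    refine hosc _ (hsub n hn' (Set.right_mem_Icc.2 (hle n))) _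
      (hsub n hn' (Set.Ioc_subset_Icc_self ht)) ?_
    rw [abs_of_nonneg (sub_nonneg.2 ht.2), ← hlen n]
    linarith [ht.1]
  rw [hsplit, mul_sum, ← sum_sub_distrib]
  refine (abs_sum_le_sum_abs _ _).trans ((sum_le_sum hcell).trans_eq ?_)
  rw [sum_const, card_range, nsmul_eq_mul]
  field_simp

lemma tendsto_one_div_mul_sum (hf : ContinuousOn f (Set.Icc 0 1)) :
    Filter.Tendsto (fun N : ℕ => 1 / (N : ℝ) * ∑ n ∈ range N, f ((n + 1) / N)) Filter.atTop
      (nhds (∫ t in (0 : ℝ)..1, f t)) := by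
  have huniform := Metric.uniformContinuousOn_iff.1
    (isCompact_Icc.uniformContinuousOn_of_continuous hf)
  rw [Metric.tendsto_atTop']
  intro ε hε
  obtain ⟨δ, hδ, hosc⟩ := huniform (ε / 2) (half_pos hε)
  obtain ⟨N, hN⟩ := exists_nat_gt (1 / δ)
  have hN0 : (0 : ℝ) < N := (one_div_pos.2 hδ).trans hN
  refine ⟨N, fun M hM => (abs_one_div_mul_sum_sub_integral_le (by omega) hf
    fun s hs t ht hst => (hosc s hs t ht ?_).le).trans_lt (half_lt_self hε)⟩
  calc |s - t| ≤ 1 / M := hst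
    _ ≤ 1 / N := by gcongr
    _ < δ := (one_div_lt hδ hN0).1 hN

end RiemannSum

section LogarithmicSums

open MeasureTheory

variable {t : ℝ}

lemma concaveOn_log_one_add_sqrt :
    ConcaveOn ℝ (Set.Ici 0) fun t => Real.log (1 + √t) := by
  refine ⟨convex_Ici 0, fun x hx y hy a b ha hb hab => ?_⟩
  have hlog := strictConcaveOn_log_Ioi.concaveOn.2 (x := 1 + √x) (y := 1 + √y)
    (Set.mem_Ioi.2 (by positivity)) (Set.mem_Ioi.2 (by positivity)) ha hb hab
  have hsqrt := Real.strictConcaveOn_sqrt.concaveOn.2 hx hy ha hb hab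
  simp only [smul_eq_mul] at hlog hsqrt ⊢
  refine hlog.trans (Real.log_le_log ?_ ?_)
  · nlinarith [mul_nonneg ha (Real.sqrt_nonneg x), mul_nonneg hb (Real.sqrt_nonneg y)]
  · linarith

lemma monotone_log_one_add_sqrt : Monotone fun t => Real.log (1 + √t) := fun _ _ hst =>
  Real.log_le_log (by positivity) (by gcongr)

lemma continuous_log_one_add_sqrt : Continuous fun t => Real.log (1 + √t) :=
  Continuous.log (by fun_prop) fun t => by positivity

lemma integral_log_one_add_sqrt : ∫ t in (0 : ℝ)..1, Real.log (1 + √t) = 1 / 2 := by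
  have hcont := continuous_log_one_add_sqrt
  rw [intervalIntegral.integral_eq_sub_of_hasDerivAt_of_le
    (f := fun t => t * Real.log (1 + √t) - t / 2 + √t - Real.log (1 + √t)) zero_le_one
    (Continuous.continuousOn (by fun_prop)) (fun t ht => ?_) (hcont.intervalIntegrable _ _)]
  · norm_num
    ring
  · have hroot : 0 < √t := Real.sqrt_pos.2 ht.1
    have hsqrt := Real.hasDerivAt_sqrt ht.1.ne'
    have hlog := (hsqrt.const_add 1).log (by positivity)
    refine (((((hasDerivAt_id t).mul hlog).sub ((hasDerivAt_id t).div_const 2)).add hsqrt).sub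
      hlog).congr_deriv ?_
    have hsq : √t ^ 2 = t := Real.sq_sqrt ht.1.le
    simp only [id]
    field_simp
    linear_combination -hsq

lemma sum_log_one_add_sqrt {N : ℕ} (hN : 0 < N) :
    ∑ j ∈ range N, Real.log (1 + √((j + 1) / N)) = N / 2 + Real.log 2 / 2 +
      N * trapezoidal_error (fun t => Real.log (1 + √t)) N 0 (0 + N * (1 / N)) := by
  have hN' : (N : ℝ) ≠ 0 := Nat.cast_ne_zero.2 hN.ne'
  have hshift : ∑ j ∈ range N, Real.log (1 + √(0 + j * (1 / N))) + Real.log 2 =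
      ∑ j ∈ range N, Real.log (1 + √((j + 1) / N)) := by
    have hsum := (sum_range_succ (fun j : ℕ => Real.log (1 + √(j / N))) N).symm.trans
      (sum_range_succ' _ N)
    norm_num [div_self hN'] at hsum
    simpa [div_eq_mul_inv] using hsum
  rw [trapezoidal_error_eq_sum, zero_add, mul_one_div_cancel hN', integral_log_one_add_sqrt,
    ← hshift]
  norm_num
  field_simp
  ring

lemma tendsto_mul_trapezoidal_error_log_one_add_sqrt :
    Filter.Tendsto (fun N : ℕ =>
        N * trapezoidal_error (fun t => Real.log (1 + √t)) N 0 (0 + N * (1 / N)))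
      Filter.atTop (nhds 0) := by
  have hbound : Filter.Tendsto (fun N : ℕ => Real.log (1 + √(0 + 1 / N))) Filter.atTop
      (nhds 0) := by
    have hlim := (continuous_log_one_add_sqrt.tendsto (0 + 0)).comp
      (tendsto_one_div_atTop_nhds_zero_nat.const_add 0)
    simpa [Function.comp_def] using hlim
  refine squeeze_zero_norm' ?_ hbound
  filter_upwards [Filter.eventually_gt_atTop 0] with N hN
  have hh : (0 : ℝ) < 1 / N := one_div_pos.2 (Nat.cast_pos.2 hN)
  have hconv : ConvexOn ℝ (Set.Ici 0) fun t => -1 * Real.log (1 + √t) :=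
    concaveOn_log_one_add_sqrt.neg.congr fun t _ => (neg_one_mul _).symm
  have hcont : Continuous fun t => -1 * Real.log (1 + √t) :=
    continuous_const.mul continuous_log_one_add_sqrt
  have hnonneg := trapezoidal_error_nonneg N hh.le (hconv.subset Set.Icc_subset_Ici_self
    (convex_Icc _ _)) (hcont.intervalIntegrable _ _)
  have hle := trapezoidal_error_le_of_convexOn_antitoneOn N hh hconv fun s _ t _ hst => by
    simpa using monotone_log_one_add_sqrt hst
  rw [trapezoidal_error_const_mul] at hnonneg hle
  rw [Real.sqrt_zero, add_zero, Real.log_one, mul_zero, zero_sub] at hle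
  rw [Real.norm_eq_abs, abs_mul, Nat.abs_cast, abs_of_nonpos (by linarith)]
  calc _ ≤ N * (1 / N * Real.log (1 + √(0 + 1 / N))) := by gcongr; linarith
    _ = _ := by field_simp

/-- The summand of the double sums produced by integrating `1 / √(t + i) * (1 / √(t + j))`.
Since `Real.log 0 = 0`, its value at `i = j = 0` is `0`. -/
noncomputable def logSqrtAdd (x y : ℝ) : ℝ := 2 * Real.log (√x + √y)

lemma logSqrtAdd_comm (x y : ℝ) : logSqrtAdd x y = logSqrtAdd y x := by
  rw [logSqrtAdd, logSqrtAdd, add_comm]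

lemma logSqrtAdd_zero_left (ht : 0 ≤ t) : logSqrtAdd 0 t = Real.log t := by
  rw [logSqrtAdd, Real.sqrt_zero, zero_add, Real.log_sqrt ht]
  ring

lemma logSqrtAdd_self (ht : 0 < t) : logSqrtAdd t t = 2 * Real.log 2 + Real.log t := by
  rw [logSqrtAdd, ← two_mul, Real.log_mul two_ne_zero (Real.sqrt_pos.2 ht).ne',
    Real.log_sqrt ht.le]
  ring

lemma logSqrtAdd_eq {x : ℝ} (hx : 0 ≤ x) (ht : 0 < t) :
    logSqrtAdd x t = Real.log t + 2 * Real.log (1 + √(x / t)) := by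
  have hroot : 0 < √t := Real.sqrt_pos.2 ht
  have hfactor : √x + √t = √t * (1 + √(x / t)) := by
    rw [Real.sqrt_div hx]
    field_simp
    ring
  rw [logSqrtAdd, hfactor, Real.log_mul hroot.ne' (by positivity), Real.log_sqrt ht.le]
  ring

lemma hasDerivAt_logSqrtAdd {i j : ℝ} (hi : 0 < t + i) (hj : 0 < t + j) :
    HasDerivAt (fun t => logSqrtAdd (t + i) (t + j)) (1 / √(t + i) * (1 / √(t + j))) t := by
  have hsum := (((hasDerivAt_id t).add_const i).sqrt hi.ne').add
    (((hasDerivAt_id t).add_const j).sqrt hj.ne')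
  refine ((hsum.log (by simp only [Pi.add_apply, id]; positivity)).const_mul 2).congr_deriv ?_
  simp only [Pi.add_apply, id]
  field_simp
  ring

lemma continuousOn_logSqrtAdd {i j : ℝ} (hi : 0 ≤ i) (hij : 0 < i + j) :
    ContinuousOn (fun t => logSqrtAdd (t + i) (t + j)) (Set.Ici 0) := by
  refine continuousOn_const.mul (ContinuousOn.log (by fun_prop) fun t ht => ?_)
  have ht0 : 0 ≤ t := ht
  rcases hi.eq_or_lt with rfl | hpos
  · have : 0 < j := by linarith
    positivity
  · positivity

lemma sum_sum_succ_sub_sum_sum {f : ℕ → ℕ → ℝ} (hf : ∀ i j, f i j = f j i) (N : ℕ) :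
    ∑ i ∈ range N, ∑ j ∈ range N, f (i + 1) (j + 1) - ∑ i ∈ range N, ∑ j ∈ range N, f i j =
      2 * ∑ j ∈ range N, f (j + 1) N - 2 * ∑ j ∈ range N, f 0 (j + 1) + 2 * f 0 N -
        f N N - f 0 0 := by
  have hlast : ∑ i ∈ range (N + 1), ∑ j ∈ range (N + 1), f i j =
      ∑ i ∈ range N, ∑ j ∈ range N, f i j + 2 * ∑ j ∈ range N, f j N + f N N := by
    simp only [sum_range_succ, sum_add_distrib, hf N]
    ring
  have hfirst : ∑ i ∈ range (N + 1), ∑ j ∈ range (N + 1), f i j =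
      ∑ i ∈ range N, ∑ j ∈ range N, f (i + 1) (j + 1) + 2 * ∑ j ∈ range N, f 0 (j + 1) +
        f 0 0 := by
    simp only [sum_range_succ', sum_add_distrib, fun i => hf (i + 1) 0]
    ring
  have hedge : ∑ j ∈ range N, f (j + 1) N + f 0 N = ∑ j ∈ range N, f j N + f N N := by
    rw [← sum_range_succ fun j => f j N, sum_range_succ']
  linear_combination hlast - hfirst - 2 * hedge

end LogarithmicSums

section ReciprocityConstant

open MeasureTheory

variable {t : ℝ} {N : ℕ}

/-- The approximation of `hurwitzHalf` obtained by dropping the tail of its defining series. -/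
noncomputable def hurwitzHalfApprox (N : ℕ) (t : ℝ) : ℝ :=
  ∑ j ∈ range N, 1 / √(t + j) - 2 * √N

lemma abs_hurwitzHalfApprox_sub_le (hN : 0 < N) (ht : 0 < t) (ht1 : t ≤ 1) :
    |hurwitzHalfApprox N t - hurwitzHalf t| ≤ 3 * (1 / √N) := by
  have hN0 : (0 : ℝ) < N := Nat.cast_pos.2 hN
  have hroot : 1 ≤ √(N : ℝ) := Real.one_le_sqrt.2 (by exact_mod_cast hN)
  have hroot' : √(N : ℝ) ≤ √(t + N) := Real.sqrt_le_sqrt (by linarith)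
  have htail := hurwitzHalf_sub_mem_Icc (x := t + N) (by linarith)
  have hshift : √(t + N) - √N ≤ 1 / √N :=
    (sqrt_sub_sqrt_le hN0 (by linarith)).trans (by gcongr; linarith)
  have hhalf : 1 / (2 * √(t + N)) ≤ 1 / √N :=
    one_div_le_one_div_of_le (by positivity) (by linarith)
  have hcube : 1 / √(t + N) ^ 3 ≤ 1 / √N :=
    one_div_le_one_div_of_le (by positivity)
      (hroot'.trans (le_self_pow₀ (hroot.trans hroot') three_ne_zero))
  have hpos : 0 < 1 / (2 * √(t + N)) := by positivity
  rw [hurwitzHalfApprox, hurwitzHalf_eq_sum_add ht N, abs_le]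
  constructor <;> linarith [htail.1, htail.2]

lemma continuousOn_hurwitzHalfApprox : ContinuousOn (hurwitzHalfApprox N) (Set.Ioi 0) := by
  refine ContinuousOn.sub (continuousOn_finsetSum _ fun j _ => ?_) continuousOn_const
  refine continuousOn_one_div_sqrt.comp (by fun_prop) fun t ht => ?_
  have ht0 : 0 < t := ht
  exact Set.mem_Ioi.2 (by positivity)

lemma abs_sq_sub_one_div_le {z B : ℝ} (ht : 0 < t) (hz : |z - 1 / √t| ≤ B) :
    |z ^ 2 - 1 / t| ≤ B ^ 2 + 2 * B * (1 / √t) := by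
  have hinv : 1 / t = (1 / √t) ^ 2 := by rw [one_div_pow, Real.sq_sqrt ht.le]
  have hfactor : z ^ 2 - 1 / t = (z - 1 / √t) ^ 2 + 2 * (z - 1 / √t) * (1 / √t) := by
    rw [hinv]
    ring
  rw [hfactor]
  refine (abs_add_le _ _).trans ?_
  rw [abs_pow, abs_mul, abs_mul, abs_two, abs_of_pos (by positivity : 0 < 1 / √t)]
  gcongr

/-- A bound for `hurwitzHalf t - 1 / √t` and its approximations on `(0, 1]`. -/
noncomputable def hurwitzHalfRegularBound : ℝ := |hurwitzHalf 1| + zetaThreeHalves + 3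

lemma abs_hurwitzHalfApprox_sub_one_div_sqrt_le (hN : 0 < N) (ht : 0 < t) (ht1 : t ≤ 1) :
    |hurwitzHalfApprox N t - 1 / √t| ≤ hurwitzHalfRegularBound := by
  have happrox := abs_hurwitzHalfApprox_sub_le hN ht ht1
  have hrec := hurwitzHalf_eq_one_div_sqrt_add ht
  have hle := hurwitzHalf_antitoneOn (Set.mem_Ioi.2 one_pos)
    (Set.mem_Ioi.2 (by linarith : 0 < t + 1)) (by linarith)
  have hlip := hurwitzHalf_sub_le (s := 1) (t := t + 1) le_rfl (by linarith)
  have hlip' : zetaThreeHalves * (t + 1 - 1) ≤ zetaThreeHalves := by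
    nlinarith [one_le_zetaThreeHalves]
  have hroot : 1 / √(N : ℝ) ≤ 1 := by
    rw [div_le_one (by positivity)]
    exact Real.one_le_sqrt.2 (by exact_mod_cast hN)
  rw [hurwitzHalfRegularBound]
  rw [abs_le] at happrox ⊢
  constructor <;>
    linarith [happrox.1, happrox.2, neg_abs_le (hurwitzHalf 1), le_abs_self (hurwitzHalf 1),
      one_le_zetaThreeHalves]

lemma intervalIntegrable_one_div_sqrt : IntervalIntegrable (fun t : ℝ => 1 / √t) volume 0 1 := by
  have hpow := intervalIntegral.intervalIntegrable_rpow' (a := 0) (b := 1)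
    (by norm_num : (-1 : ℝ) < -(1 / 2))
  refine hpow.congr fun t ht => ?_
  rw [Set.uIoc_of_le zero_le_one] at ht
  simp only [Real.rpow_neg ht.1.le, Real.sqrt_eq_rpow, one_div]

lemma aestronglyMeasurable_hurwitzHalfApprox_sq_sub (N : ℕ) :
    AEStronglyMeasurable (fun t => hurwitzHalfApprox N t ^ 2 - 1 / t)
      (volume.restrict (Set.uIoc 0 1)) := by
  have hcont : ContinuousOn (fun t => hurwitzHalfApprox N t ^ 2 - 1 / t) (Set.Ioi 0) :=
    (continuousOn_hurwitzHalfApprox.pow 2).sub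
      (continuousOn_const.div continuousOn_id fun _ ht => (Set.mem_Ioi.1 ht).ne')
  rw [Set.uIoc_of_le zero_le_one]
  exact (hcont.mono fun t ht => ht.1).aestronglyMeasurable measurableSet_Ioc

lemma abs_hurwitzHalfApprox_sq_sub_le (hN : 0 < N) (ht : t ∈ Set.uIoc 0 1) :
    |hurwitzHalfApprox N t ^ 2 - 1 / t| ≤
      hurwitzHalfRegularBound ^ 2 + 2 * hurwitzHalfRegularBound * (1 / √t) := by
  rw [Set.uIoc_of_le zero_le_one] at ht
  exact abs_sq_sub_one_div_le ht.1 (abs_hurwitzHalfApprox_sub_one_div_sqrt_le hN ht.1 ht.2)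

lemma intervalIntegrable_hurwitzHalfRegularBound :
    IntervalIntegrable (fun t : ℝ =>
      hurwitzHalfRegularBound ^ 2 + 2 * hurwitzHalfRegularBound * (1 / √t)) volume 0 1 :=
  intervalIntegrable_const.add (intervalIntegrable_one_div_sqrt.const_mul _)

lemma intervalIntegrable_hurwitzHalfApprox_sq_sub (hN : 0 < N) :
    IntervalIntegrable (fun t => hurwitzHalfApprox N t ^ 2 - 1 / t) volume 0 1 := by
  refine intervalIntegrable_hurwitzHalfRegularBound.mono_fun'
    (aestronglyMeasurable_hurwitzHalfApprox_sq_sub N) ?_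
  filter_upwards [ae_restrict_mem measurableSet_uIoc] with t ht
  exact abs_hurwitzHalfApprox_sq_sub_le hN ht

lemma tendsto_hurwitzHalfApprox (ht : 0 < t) (ht1 : t ≤ 1) :
    Filter.Tendsto (fun N => hurwitzHalfApprox N t) Filter.atTop (nhds (hurwitzHalf t)) := by
  have hbound : Filter.Tendsto (fun N : ℕ => 3 * (1 / √(N : ℝ))) Filter.atTop (nhds 0) := by
    simpa using (tendsto_one_div_sqrt_atTop.comp tendsto_natCast_atTop_atTop).const_mul 3
  rw [tendsto_iff_dist_tendsto_zero]
  refine squeeze_zero' (Filter.Eventually.of_forall fun _ => dist_nonneg) ?_ hbound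
  filter_upwards [Filter.eventually_gt_atTop 0] with N hN
  exact abs_hurwitzHalfApprox_sub_le hN ht ht1

lemma tendsto_integral_hurwitzHalfApprox_sq_sub :
    Filter.Tendsto (fun N : ℕ => ∫ t in (0 : ℝ)..1, (hurwitzHalfApprox N t ^ 2 - 1 / t))
      Filter.atTop (nhds (∫ t in (0 : ℝ)..1, (hurwitzHalf t ^ 2 - 1 / t))) := by
  refine intervalIntegral.tendsto_integral_filter_of_dominated_convergence _
    (Filter.Eventually.of_forall aestronglyMeasurable_hurwitzHalfApprox_sq_sub) ?_
    intervalIntegrable_hurwitzHalfRegularBound (Filter.Eventually.of_forall fun t ht => ?_)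
  · filter_upwards [Filter.eventually_gt_atTop 0] with N hN
    exact Filter.Eventually.of_forall fun t ht => abs_hurwitzHalfApprox_sq_sub_le hN ht
  · rw [Set.uIoc_of_le zero_le_one] at ht
    exact ((tendsto_hurwitzHalfApprox ht.1 ht.2).pow 2).sub_const _

/-- An antiderivative of `hurwitzHalfApprox N t ^ 2 - 1 / t`, continuous up to `t = 0`. -/
noncomputable def approxSqPrimitive (N : ℕ) (t : ℝ) : ℝ :=
  ∑ p ∈ (range N ×ˢ range N).erase (0, 0), logSqrtAdd (t + p.1) (t + p.2) -
    8 * √N * ∑ j ∈ range N, √(t + j) + 4 * N * t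

lemma continuousOn_approxSqPrimitive : ContinuousOn (approxSqPrimitive N) (Set.Ici 0) := by
  refine ContinuousOn.add (ContinuousOn.sub (continuousOn_finsetSum _ fun p hp => ?_)
    (by fun_prop)) (by fun_prop)
  refine continuousOn_logSqrtAdd p.1.cast_nonneg ?_
  have hp0 : p.1 ≠ 0 ∨ p.2 ≠ 0 := by
    by_contra! hzero
    exact (mem_erase.1 hp).1 (Prod.ext hzero.1 hzero.2)
  exact_mod_cast (by omega : 0 < p.1 + p.2)

lemma hasDerivAt_approxSqPrimitive (hN : 0 < N) (ht : 0 < t) :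
    HasDerivAt (approxSqPrimitive N) (hurwitzHalfApprox N t ^ 2 - 1 / t) t := by
  have hpos (j : ℕ) : 0 < t + j := by positivity
  have hlog := HasDerivAt.fun_sum fun (p : ℕ × ℕ) (_ : p ∈ (range N ×ˢ range N).erase (0, 0)) =>
    hasDerivAt_logSqrtAdd (hpos p.1) (hpos p.2)
  have hsqrt := HasDerivAt.fun_sum fun j (_ : j ∈ range N) =>
    ((hasDerivAt_id t).add_const (j : ℝ)).sqrt (hpos j).ne'
  refine ((hlog.sub (hsqrt.const_mul (8 * √N))).add
    ((hasDerivAt_id t).const_mul (4 * (N : ℝ)))).congr_deriv ?_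
  have hprod : ∑ p ∈ (range N ×ˢ range N).erase (0, 0), 1 / √(t + p.1) * (1 / √(t + p.2)) =
      (∑ j ∈ range N, 1 / √(t + j)) ^ 2 - 1 / t := by
    rw [sum_erase_eq_sub (by simp [hN]), sum_product, sq, sum_mul_sum]
    dsimp only
    rw [Nat.cast_zero, add_zero, one_div_mul_one_div, Real.mul_self_sqrt ht.le]
  have hhalf : ∑ j ∈ range N, 1 / (2 * √(t + j)) = (∑ j ∈ range N, 1 / √(t + j)) / 2 := by
    rw [sum_div]
    exact sum_congr rfl fun j _ => by rw [div_div, mul_comm]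
  simp only [id, hprod, hhalf, hurwitzHalfApprox]
  linear_combination -4 * Real.sq_sqrt (N.cast_nonneg (α := ℝ))

lemma sum_logSqrtAdd_succ_sub (hN : 0 < N) :
    ∑ i ∈ range N, ∑ j ∈ range N, logSqrtAdd ((i + 1 : ℕ) : ℝ) ((j + 1 : ℕ) : ℝ) -
        ∑ i ∈ range N, ∑ j ∈ range N, logSqrtAdd (i : ℝ) (j : ℝ) =
      2 * N * Real.log N + 4 * ∑ j ∈ range N, Real.log (1 + √((j + 1) / N)) -
        2 * Real.log N.factorial + Real.log N - 2 * Real.log 2 := by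
  have hN' : (0 : ℝ) < N := Nat.cast_pos.2 hN
  have hfactorial : ∑ j ∈ range N, Real.log ((j + 1 : ℕ) : ℝ) = Real.log N.factorial := by
    rw [← Real.log_prod fun j _ => by positivity, ← prod_range_add_one_eq_factorial,
      Nat.cast_prod]
  rw [sum_sum_succ_sub_sum_sum (f := fun i j : ℕ => logSqrtAdd i j)
    (fun i j => logSqrtAdd_comm _ _)]
  have hedge (j : ℕ) : logSqrtAdd ((j + 1 : ℕ) : ℝ) N =
      Real.log N + 2 * Real.log (1 + √((j + 1) / N)) := by
    rw [logSqrtAdd_eq (Nat.cast_nonneg _) hN', Nat.cast_add_one]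
  have hcorner : logSqrtAdd 0 0 = 0 := by simp [logSqrtAdd]
  simp only [Nat.cast_zero, hcorner, logSqrtAdd_zero_left (Nat.cast_nonneg _), hfactorial, hedge,
    logSqrtAdd_self hN', sum_add_distrib, ← mul_sum, sum_const, card_range, nsmul_eq_mul]
  ring

lemma approxSqPrimitive_one_sub_zero (hN : 0 < N) :
    approxSqPrimitive N 1 - approxSqPrimitive N 0 =
      4 * (N * trapezoidal_error (fun t => Real.log (1 + √t)) N 0 (0 + N * (1 / N))) -
        2 * Real.log (Stirling.stirlingSeq N) - 3 * Real.log 2 := by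
  have hN' : (0 : ℝ) < N := Nat.cast_pos.2 hN
  have hmem : ((0, 0) : ℕ × ℕ) ∈ range N ×ˢ range N := by simp [hN]
  have hone : ∑ p ∈ (range N ×ˢ range N).erase (0, 0), logSqrtAdd ((1 : ℝ) + p.1) (1 + p.2) =
      ∑ i ∈ range N, ∑ j ∈ range N, logSqrtAdd ((i + 1 : ℕ) : ℝ) ((j + 1 : ℕ) : ℝ) -
        2 * Real.log 2 := by
    rw [sum_erase_eq_sub hmem, sum_product, Nat.cast_zero, add_zero, logSqrtAdd_self one_pos,
      Real.log_one, add_zero]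
    push_cast
    simp only [add_comm (1 : ℝ)]
  have hzero : ∑ p ∈ (range N ×ˢ range N).erase (0, 0), logSqrtAdd ((0 : ℝ) + p.1) (0 + p.2) =
      ∑ i ∈ range N, ∑ j ∈ range N, logSqrtAdd (i : ℝ) (j : ℝ) := by
    rw [sum_erase _ (by simp [logSqrtAdd]), sum_product]
    simp only [zero_add]
  have hsqrt : ∑ j ∈ range N, √((1 : ℝ) + j) - ∑ j ∈ range N, √((0 : ℝ) + j) = √N := by
    rw [← sum_sub_distrib]
    simpa [add_comm] using sum_range_sub (fun j : ℕ => √(j : ℝ)) N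
  have hstirling := Stirling.log_stirlingSeq_formula N
  rw [Real.log_mul two_ne_zero hN'.ne', Real.log_div hN'.ne' (Real.exp_pos 1).ne',
    Real.log_exp] at hstirling
  rw [approxSqPrimitive, approxSqPrimitive, hone, hzero]
  linear_combination sum_logSqrtAdd_succ_sub hN - 8 * √N * hsqrt +
    4 * sum_log_one_add_sqrt hN + 2 * hstirling - 8 * Real.sq_sqrt hN'.le

lemma integral_hurwitzHalf_sq_sub_one_div :
    ∫ t in (0 : ℝ)..1, (hurwitzHalf t ^ 2 - 1 / t) = -Real.log (8 * π) := by
  refine tendsto_nhds_unique tendsto_integral_hurwitzHalfApprox_sq_sub ?_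
  have hlim := ((tendsto_mul_trapezoidal_error_log_one_add_sqrt.const_mul 4).sub
    ((Stirling.tendsto_stirlingSeq_sqrt_pi.log (by positivity)).const_mul 2)).sub_const
    (3 * Real.log 2)
  have hvalue : 4 * 0 - 2 * Real.log √π - 3 * Real.log 2 = -Real.log (8 * π) := by
    rw [Real.log_sqrt pi_pos.le, show (8 : ℝ) = 2 ^ 3 by norm_num,
      Real.log_mul (by norm_num) pi_ne_zero, Real.log_pow]
    push_cast
    ring
  rw [hvalue] at hlim
  refine hlim.congr' ?_
  filter_upwards [Filter.eventually_gt_atTop 0] with N hN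
  rw [intervalIntegral.integral_eq_sub_of_hasDerivAt_of_le zero_le_one
    (continuousOn_approxSqPrimitive.mono Set.Icc_subset_Ici_self)
    (fun t ht => hasDerivAt_approxSqPrimitive hN ht.1)
    (intervalIntegrable_hurwitzHalfApprox_sq_sub hN), approxSqPrimitive_one_sub_zero hN]

end ReciprocityConstant

section DiagonalTwist

open MeasureTheory

variable {t : ℝ} {N : ℕ}

/-- The part of `hurwitzHalf t ^ 2` on `(0, 1]` which stays continuous at `t = 0`. -/
noncomputable def hurwitzHalfSqRemainder (t : ℝ) : ℝ :=
  hurwitzHalf (1 + t) ^ 2 + 2 * kernelRemainder t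

lemma hurwitzHalf_sq_eq (ht : 0 < t) (ht1 : t ≤ 1) :
    hurwitzHalf t ^ 2 =
      1 / t + 2 * hurwitzHalf 1 * (1 / √t) + hurwitzHalfSqRemainder t := by
  have hkernel : kernelSum t = 0 := kernelSum_eq_sum (N := 0) (by simpa using ht1)
  have hinv : (1 / √t) ^ 2 = 1 / t := by rw [one_div_pow, Real.sq_sqrt ht.le]
  rw [hurwitzHalf_eq_one_div_sqrt_add ht, hurwitzHalfSqRemainder, kernelRemainder, hkernel,
    add_comm t]
  linear_combination hinv

lemma continuousOn_hurwitzHalfSqRemainder :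
    ContinuousOn hurwitzHalfSqRemainder (Set.Icc 0 1) := by
  have hshift : ContinuousOn (fun t : ℝ => hurwitzHalf (1 + t)) (Set.Icc 0 1) :=
    continuousOn_hurwitzHalf_Ici_one.comp (by fun_prop) fun t ht =>
      Set.mem_Ici.2 (by linarith [ht.1])
  exact (hshift.pow 2).add
    ((continuousOn_kernelRemainder.mono Set.Icc_subset_Ici_self).const_mul 2)

lemma integral_hurwitzHalfSqRemainder :
    ∫ t in (0 : ℝ)..1, hurwitzHalfSqRemainder t = -Real.log (8 * π) - 4 * hurwitzHalf 1 := by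
  have hsplit : ∫ t in (0 : ℝ)..1, (hurwitzHalf t ^ 2 - 1 / t) =
      ∫ t in (0 : ℝ)..1, (2 * hurwitzHalf 1 * (1 / √t) + hurwitzHalfSqRemainder t) := by
    refine intervalIntegral.integral_congr_ae (Filter.Eventually.of_forall fun t ht => ?_)
    rw [Set.uIoc_of_le zero_le_one] at ht
    rw [hurwitzHalf_sq_eq ht.1 ht.2]
    ring
  rw [integral_hurwitzHalf_sq_sub_one_div, intervalIntegral.integral_add
    (intervalIntegrable_one_div_sqrt.const_mul _)
    (continuousOn_hurwitzHalfSqRemainder.intervalIntegrable_of_Icc zero_le_one),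
    intervalIntegral.integral_const_mul, integral_one_div_sqrt le_rfl zero_le_one,
    Real.sqrt_one, Real.sqrt_zero] at hsplit
  linarith

lemma tendsto_one_div_sqrt_mul_sum_one_div_sqrt :
    Filter.Tendsto (fun N : ℕ => 1 / √N * ∑ n ∈ range N, 1 / √((n : ℝ) + 1)) Filter.atTop
      (nhds 2) := by
  have hroot := tendsto_one_div_sqrt_atTop.comp tendsto_natCast_atTop_atTop
  have hlim := (hroot.mul ((tendsto_hurwitzHalf_add_natCast 1).const_sub
    (hurwitzHalf 1))).add_const 2
  rw [zero_mul, zero_add] at hlim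
  refine hlim.congr' ?_
  filter_upwards [Filter.eventually_gt_atTop 0] with N hN
  simp only [sum_one_div_sqrt_succ, Function.comp_apply]
  field_simp
  ring

lemma twistedSum_one_left (hN : 0 < N) :
    1 / √N * twistedSum 1 N =
      harmonic N + 2 * hurwitzHalf 1 * (1 / √N * ∑ n ∈ range N, 1 / √((n : ℝ) + 1)) +
        1 / N * ∑ n ∈ range N, hurwitzHalfSqRemainder ((n + 1) / N) := by
  have hN' : (0 : ℝ) < N := Nat.cast_pos.2 hN
  have hroot : 1 / √(N : ℝ) * (1 / √N) = 1 / N := by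
    rw [one_div_mul_one_div, Real.mul_self_sqrt hN'.le]
  have hterm : ∀ n ∈ range N, 1 / (N : ℝ) *
      (hurwitzHalfPeriodic ((1 : ℤ) * (n + 1) / N) * hurwitzHalf ((n + 1) / N)) =
      ((n + 1 : ℕ) : ℝ)⁻¹ + 2 * hurwitzHalf 1 * (1 / √N * (1 / √((n : ℝ) + 1))) +
        1 / N * hurwitzHalfSqRemainder ((n + 1) / N) := by
    intro n hn
    have hpos : 0 < ((n : ℝ) + 1) / N := by positivity
    have hle : ((n : ℝ) + 1) / N ≤ 1 := (div_le_one hN').2 (by exact_mod_cast mem_range.1 hn)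
    rw [Int.cast_one, one_mul, hurwitzHalfPeriodic_of_mem_Ioc ⟨hpos, hle⟩, ← sq,
      hurwitzHalf_sq_eq hpos hle, Real.sqrt_div (by positivity), ← hroot]
    push_cast
    field_simp
    linear_combination -√((n : ℝ) + 1) * Real.sq_sqrt hN'.le
  rw [twistedSum_eq_sum_hurwitzHalf 1 hN, ← mul_assoc, hroot, mul_sum, sum_congr rfl hterm]
  simp only [sum_add_distrib, ← mul_sum, harmonic, Rat.cast_sum, Rat.cast_inv, Rat.cast_natCast]

lemma tendsto_twistedSum_one_left :
    Filter.Tendsto (fun N : ℕ => 1 / √N * twistedSum 1 N - Real.log N) Filter.atTop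
      (nhds (eulerMascheroniConstant - Real.log (8 * π))) := by
  have hlim := (Real.tendsto_harmonic_sub_log.add
    (tendsto_one_div_sqrt_mul_sum_one_div_sqrt.const_mul (2 * hurwitzHalf 1))).add
    (tendsto_one_div_mul_sum continuousOn_hurwitzHalfSqRemainder)
  have hvalue : eulerMascheroniConstant + 2 * hurwitzHalf 1 * 2 +
      ∫ t in (0 : ℝ)..1, hurwitzHalfSqRemainder t =
      eulerMascheroniConstant - Real.log (8 * π) := by
    rw [integral_hurwitzHalfSqRemainder]
    ring
  rw [hvalue] at hlim
  refine hlim.congr' ?_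
  filter_upwards [Filter.eventually_gt_atTop 0] with N hN
  rw [twistedSum_one_left hN]
  ring

lemma twistedSum_one_right (a : ℤ) : twistedSum a 1 = hurwitzHalf 1 ^ 2 := by
  simp [twistedSum, hurwitzHalfPeriodic_zero, sq]

lemma abs_twistedSum_one_left_sub_le (hN : 0 < N) :
    |1 / √N * twistedSum 1 N - Real.log N - 2 * hurwitzHalf 1 ^ 2 * (1 / √N) -
      (eulerMascheroniConstant + recipConst)| ≤ 17 * zetaThreeHalves * (1 / N) := by
  have hN' : (0 : ℝ) < N := Nat.cast_pos.2 hN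
  have hN1 : (1 : ℝ) ≤ N := by exact_mod_cast hN
  have hroot : 0 < √(N : ℝ) := Real.sqrt_pos.2 hN'
  have hrecip := twistedSum_sub_twistedSum one_pos hN (Nat.coprime_one_left N)
  rw [twistedSum_one_right, Nat.cast_one, Nat.cast_one] at hrecip
  have hsmall := abs_recipFun_sub_le (x := 1 / N) (by positivity) ((div_le_one hN').2 hN1)
  rw [← hrecip, Real.sqrt_div zero_le_one, Real.sqrt_one, one_div_one_div, one_div (N : ℝ),
    Real.log_inv, ← one_div] at hsmall
  refine le_trans ?_ hsmall
  have hfactor : 1 / √N * twistedSum 1 N - Real.log N - 2 * hurwitzHalf 1 ^ 2 * (1 / √N) -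
      (eulerMascheroniConstant + recipConst) =
      1 / √N * (twistedSum 1 N - hurwitzHalf 1 ^ 2 -
        √N * (eulerMascheroniConstant - -Real.log N + recipConst) - hurwitzHalf 1 ^ 2) := by
    field_simp
    ring
  rw [hfactor, abs_mul, abs_of_pos (by positivity)]
  exact mul_le_of_le_one_left (abs_nonneg _)
    ((div_le_one hroot).2 (Real.one_le_sqrt.2 hN1))

lemma recipConst_eq : recipConst = -Real.log (8 * π) := by
  have hroot := tendsto_one_div_sqrt_atTop.comp tendsto_natCast_atTop_atTop
  have hdiag := (tendsto_twistedSum_one_left.sub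
    (hroot.const_mul (2 * hurwitzHalf 1 ^ 2))).sub_const (eulerMascheroniConstant + recipConst)
  have hbound : Filter.Tendsto (fun N : ℕ => 17 * zetaThreeHalves * (1 / (N : ℝ)))
      Filter.atTop (nhds 0) := by
    simpa only [mul_zero] using
      tendsto_one_div_atTop_nhds_zero_nat.const_mul (17 * zetaThreeHalves)
  have hzero := abs_nonpos_iff.1 <| le_of_tendsto_of_tendsto hdiag.abs hbound (by
      filter_upwards [Filter.eventually_gt_atTop 0] with N hN
      exact abs_twistedSum_one_left_sub_le hN)
  linarith

end DiagonalTwist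

section HurwitzValue

variable {c x : ℝ} {s : ℂ}

/-- The difference `c ^ (-s) - ∫ t in c..c+1, t ^ (-s)`, with the integral in closed form. -/
noncomputable def cpowSubIntegral (c : ℝ) (s : ℂ) : ℂ :=
  (c : ℂ) ^ (-s) - (((c + 1 : ℝ) : ℂ) ^ (1 - s) - (c : ℂ) ^ (1 - s)) / (1 - s)

lemma cpowSubIntegral_eq_integral (hc : 0 < c) (hs : s ≠ 1) :
    cpowSubIntegral c s = ∫ t in c..c + 1, ((c : ℂ) ^ (-s) - (t : ℂ) ^ (-s)) := by
  have hzero : (0 : ℝ) ∉ Set.uIcc c (c + 1) := by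
    rw [Set.uIcc_of_le (by linarith)]
    exact fun h => hc.not_ge h.1
  have hs' : -s ≠ -1 := neg_injective.ne hs
  rw [intervalIntegral.integral_sub intervalIntegrable_const
      (intervalIntegral.intervalIntegrable_cpow (Or.inr hzero)),
    integral_cpow (Or.inr ⟨hs', hzero⟩), intervalIntegral.integral_const, add_sub_cancel_left,
    one_smul, neg_add_eq_sub, cpowSubIntegral]

lemma norm_cpow_neg_sub_cpow_neg_le {t : ℝ} (hc : 0 < c) (hs : 0 ≤ s.re)
    (ht : t ∈ Set.Icc c (c + 1)) :
    ‖(c : ℂ) ^ (-s) - (t : ℂ) ^ (-s)‖ ≤ ‖s‖ * c ^ (-s.re - 1) := by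
  rcases eq_or_ne s 0 with rfl | hs0
  · simp
  have hderiv : ∀ y ∈ Set.Icc c (c + 1), HasDerivWithinAt (fun y : ℝ => (y : ℂ) ^ (-s))
      (-s * (y : ℂ) ^ (-s - 1)) (Set.Icc c (c + 1)) y := fun y hy =>
    (hasDerivAt_ofReal_cpow_const (hc.trans_le hy.1).ne' (neg_ne_zero.2 hs0)).hasDerivWithinAt
  have hbound : ∀ y ∈ Set.Icc c (c + 1), ‖-s * (y : ℂ) ^ (-s - 1)‖ ≤ ‖s‖ * c ^ (-s.re - 1) := by
    intro y hy
    rw [norm_mul, norm_neg, norm_cpow_eq_rpow_re_of_pos (hc.trans_le hy.1), sub_re, neg_re,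
      one_re]
    gcongr ‖s‖ * ?_
    exact Real.rpow_le_rpow_of_nonpos hc hy.1 (by linarith)
  rw [norm_sub_rev]
  refine ((convex_Icc c (c + 1)).norm_image_sub_le_of_norm_hasDerivWithin_le hderiv hbound
    (Set.left_mem_Icc.2 (by linarith)) ht).trans (mul_le_of_le_one_right (by positivity) ?_)
  rw [Real.norm_eq_abs, abs_le]
  constructor <;> linarith [ht.1, ht.2]

lemma norm_cpowSubIntegral_le (hc : 0 < c) (hs : s ≠ 1) (hre : 0 ≤ s.re) :
    ‖cpowSubIntegral c s‖ ≤ ‖s‖ * c ^ (-s.re - 1) := by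
  have hle := intervalIntegral.norm_integral_le_of_norm_le_const (a := c) (b := c + 1)
    (f := fun t : ℝ => (c : ℂ) ^ (-s) - (t : ℂ) ^ (-s)) (C := ‖s‖ * c ^ (-s.re - 1))
    fun t ht => norm_cpow_neg_sub_cpow_neg_le hc hre
      (Set.Ioc_subset_Icc_self (Set.uIoc_of_le (by linarith : c ≤ c + 1) ▸ ht))
  rwa [← cpowSubIntegral_eq_integral hc hs, add_sub_cancel_left, abs_one, mul_one] at hle

/-- A bounded convex neighbourhood of `1/2` which meets the half-plane `1 < re s` but avoids the
pole `s = 1`: analytic continuation inside it identifies `ζ(1/2, x)`. -/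
def continuationRegion : Set ℂ := {s | 1 / 4 < s.re ∧ s.re - s.im < 1 ∧ ‖s‖ < 4}

lemma isOpen_continuationRegion : IsOpen continuationRegion :=
  (isOpen_lt continuous_const continuous_re).inter
    ((isOpen_lt (continuous_re.sub continuous_im) continuous_const).inter
      (isOpen_lt continuous_norm continuous_const))

lemma convex_continuationRegion : Convex ℝ continuationRegion := by
  refine (convex_halfSpace_re_gt _).inter (Convex.inter ?_ ?_)
  · exact convex_halfSpace_lt (f := reLm - imLm) (reLm - imLm).isLinear 1
  · have hball := convex_ball (0 : ℂ) 4
    rwa [ball_zero_eq] at hball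

lemma ne_one_of_mem_continuationRegion (hs : s ∈ continuationRegion) : s ≠ 1 := by
  rintro rfl
  simpa using hs.2.1

lemma half_mem_continuationRegion : (1 / 2 : ℂ) ∈ continuationRegion := by
  refine ⟨?_, ?_, ?_⟩ <;> norm_num

lemma two_add_two_mul_I_mem_continuationRegion : (2 + 2 * I : ℂ) ∈ continuationRegion := by
  refine ⟨by norm_num, by norm_num, ?_⟩
  rw [Complex.norm_def, Real.sqrt_lt' (by norm_num)]
  norm_num [normSq_apply]

/-- The two exponents account for `c ≥ 1` and `c ≤ 1`. -/
lemma norm_cpowSubIntegral_le_of_mem (hc : 0 < c) (hs : s ∈ continuationRegion) :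
    ‖cpowSubIntegral c s‖ ≤ 4 * (1 / |c| ^ (5 / 4 : ℝ) + 1 / |c| ^ (5 : ℝ)) := by
  have hre : 1 / 4 < s.re := hs.1
  have hre' : s.re ≤ 4 := (re_le_norm s).trans hs.2.2.le
  refine (norm_cpowSubIntegral_le hc (ne_one_of_mem_continuationRegion hs)
    (by linarith)).trans ?_
  rw [abs_of_pos hc, one_div, one_div, ← Real.rpow_neg hc.le, ← Real.rpow_neg hc.le]
  refine mul_le_mul hs.2.2.le ?_ (by positivity) (by norm_num)
  rcases le_total 1 c with h | h
  · exact (Real.rpow_le_rpow_of_exponent_le h (by linarith)).trans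
      (le_add_of_nonneg_right (by positivity))
  · exact (Real.rpow_le_rpow_of_exponent_ge hc h (by linarith)).trans
      (le_add_of_nonneg_left (by positivity))

lemma summable_cpowSubIntegral_bound (x : ℝ) : Summable fun n : ℕ =>
    4 * (1 / |(n : ℝ) + x| ^ (5 / 4 : ℝ) + 1 / |(n : ℝ) + x| ^ (5 : ℝ)) :=
  (((Real.summable_one_div_nat_add_rpow x (5 / 4)).2 (by norm_num)).add
    ((Real.summable_one_div_nat_add_rpow x 5).2 (by norm_num))).mul_left 4

/-- The Hurwitz zeta function `ζ(s, x)` in `0 < re s`, by Euler–Maclaurin summation. -/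
noncomputable def hurwitzContinuation (x : ℝ) (s : ℂ) : ℂ :=
  (x : ℂ) ^ (1 - s) / (s - 1) + ∑' n : ℕ, cpowSubIntegral (n + x) s

lemma differentiableOn_cpow_one_sub_div (hc : 0 < c) :
    DifferentiableOn ℂ (fun s : ℂ => (c : ℂ) ^ (1 - s) / (s - 1)) continuationRegion := by
  refine DifferentiableOn.div (Differentiable.differentiableOn ?_) (by fun_prop)
    fun s hs => sub_ne_zero.2 (ne_one_of_mem_continuationRegion hs)
  exact Differentiable.const_cpow (by fun_prop) (Or.inl (ofReal_ne_zero.2 hc.ne'))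

lemma differentiableOn_cpowSubIntegral (hc : 0 < c) :
    DifferentiableOn ℂ (cpowSubIntegral c) continuationRegion := by
  have hpow : Differentiable ℂ fun s : ℂ => (c : ℂ) ^ (-s) :=
    Differentiable.const_cpow (by fun_prop) (Or.inl (ofReal_ne_zero.2 hc.ne'))
  refine ((hpow.differentiableOn.add (differentiableOn_cpow_one_sub_div
    (by linarith : 0 < c + 1))).sub (differentiableOn_cpow_one_sub_div hc)).congr fun s _ => ?_
  simp only [Pi.add_apply, Pi.sub_apply]
  rw [cpowSubIntegral, ← neg_sub s 1, div_neg, sub_div]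
  ring

lemma differentiableOn_hurwitzContinuation (hx : 0 < x) :
    DifferentiableOn ℂ (hurwitzContinuation x) continuationRegion :=
  (differentiableOn_cpow_one_sub_div hx).add
    (differentiableOn_tsum_of_summable_norm (summable_cpowSubIntegral_bound x)
      (fun _ => differentiableOn_cpowSubIntegral (by positivity)) isOpen_continuationRegion
      fun _ _ hs => norm_cpowSubIntegral_le_of_mem (by positivity) hs)

lemma sum_cpowSubIntegral (x : ℝ) (s : ℂ) (N : ℕ) :
    (x : ℂ) ^ (1 - s) / (s - 1) + ∑ n ∈ range N, cpowSubIntegral (n + x) s =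
      ∑ n ∈ range N, ((n + x : ℝ) : ℂ) ^ (-s) + ((N + x : ℝ) : ℂ) ^ (1 - s) / (s - 1) := by
  induction N with
  | zero => simp
  | succ N ih =>
    rw [sum_range_succ, ← add_assoc, ih, sum_range_succ, cpowSubIntegral, ← neg_sub s 1, div_neg,
      show ((N + 1 : ℕ) : ℝ) + x = N + x + 1 by push_cast; ring]
    ring

lemma tendsto_hurwitzContinuation (hx : 0 < x) (hs : s ∈ continuationRegion) :
    Filter.Tendsto (fun N : ℕ =>
      ∑ n ∈ range N, ((n + x : ℝ) : ℂ) ^ (-s) + ((N + x : ℝ) : ℂ) ^ (1 - s) / (s - 1))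
      Filter.atTop (nhds (hurwitzContinuation x s)) := by
  have hsum : Summable fun n : ℕ => cpowSubIntegral (n + x) s :=
    Summable.of_norm_bounded (summable_cpowSubIntegral_bound x) fun n =>
      norm_cpowSubIntegral_le_of_mem (by positivity) hs
  exact (hsum.hasSum.tendsto_sum_nat.const_add ((x : ℂ) ^ (1 - s) / (s - 1))).congr
    fun N => sum_cpowSubIntegral x s N

lemma tendsto_natCast_add_cpow_zero (x : ℝ) (hs : s.re < 0) :
    Filter.Tendsto (fun N : ℕ => ((N + x : ℝ) : ℂ) ^ s) Filter.atTop (nhds 0) := by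
  have hshift : Filter.Tendsto (fun N : ℕ => (N : ℝ) + x) Filter.atTop Filter.atTop :=
    Filter.tendsto_atTop_add_const_right _ _ tendsto_natCast_atTop_atTop
  rw [tendsto_zero_iff_norm_tendsto_zero]
  refine ((tendsto_rpow_neg_atTop (neg_pos.2 hs)).comp hshift).congr' ?_
  filter_upwards [hshift.eventually_gt_atTop 0] with N hN
  rw [norm_cpow_eq_rpow_re_of_pos hN, Function.comp_apply, neg_neg]

lemma hurwitzZeta_eq_hurwitzContinuation_of_one_lt_re (hx : 0 < x) (hx1 : x ≤ 1)
    (hs : s ∈ continuationRegion) (hre : 1 < s.re) :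
    HurwitzZeta.hurwitzZeta (x : UnitAddCircle) s = hurwitzContinuation x s := by
  have hsum :=
    (HurwitzZeta.hasSum_hurwitzZeta_of_one_lt_re (a := x) ⟨hx.le, hx1⟩ hre).tendsto_sum_nat
  have hend : Filter.Tendsto (fun N : ℕ => ((N + x : ℝ) : ℂ) ^ (1 - s) / (s - 1))
      Filter.atTop (nhds 0) := by
    simpa only [zero_div] using
      (tendsto_natCast_add_cpow_zero x (s := 1 - s) (by simpa using hre)).div_const (s - 1)
  have hlim := hsum.add hend
  rw [add_zero] at hlim
  refine tendsto_nhds_unique (hlim.congr fun N => ?_) (tendsto_hurwitzContinuation hx hs)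
  simp only [cpow_neg, one_div, ofReal_add, ofReal_natCast]

lemma ofReal_cpow_half (hc : 0 ≤ c) : (c : ℂ) ^ (1 / 2 : ℂ) = (√c : ℝ) := by
  rw [Real.sqrt_eq_rpow, ofReal_cpow hc]
  norm_num

lemma ofReal_cpow_neg_half (hc : 0 ≤ c) : (c : ℂ) ^ (-(1 / 2) : ℂ) = (1 / √c : ℝ) := by
  rw [cpow_neg, ofReal_cpow_half hc, one_div, ofReal_inv]

lemma hurwitzContinuation_half (hx : 0 < x) : hurwitzContinuation x (1 / 2) = hurwitzHalf x := by
  have hreal := (continuous_ofReal.tendsto _).comp (tendsto_sum_one_div_sqrt_sub hx)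
  refine tendsto_nhds_unique (tendsto_hurwitzContinuation hx half_mem_continuationRegion)
    (hreal.congr fun N => ?_)
  have hterm (n : ℕ) : ((n + x : ℝ) : ℂ) ^ (-(1 / 2) : ℂ) = (1 / √(n + x) : ℝ) :=
    ofReal_cpow_neg_half (by positivity)
  rw [show (1 - 1 / 2 : ℂ) = 1 / 2 by norm_num, ofReal_cpow_half (by positivity)]
  simp only [hterm, Function.comp_apply, add_comm x]
  push_cast
  ring

lemma hurwitzZeta_half (hx : 0 < x) (hx1 : x ≤ 1) :
    HurwitzZeta.hurwitzZeta (x : UnitAddCircle) (1 / 2) = hurwitzHalf x := by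
  have hzeta : AnalyticOnNhd ℂ (HurwitzZeta.hurwitzZeta (x : UnitAddCircle))
      continuationRegion :=
    DifferentiableOn.analyticOnNhd (fun s hs => (HurwitzZeta.differentiableAt_hurwitzZeta _
      (ne_one_of_mem_continuationRegion hs)).differentiableWithinAt) isOpen_continuationRegion
  rw [← hurwitzContinuation_half hx]
  refine hzeta.eqOn_of_preconnected_of_eventuallyEq
    ((differentiableOn_hurwitzContinuation hx).analyticOnNhd isOpen_continuationRegion)
    convex_continuationRegion.isPreconnected two_add_two_mul_I_mem_continuationRegion ?_
    half_mem_continuationRegion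
  filter_upwards [isOpen_continuationRegion.mem_nhds two_add_two_mul_I_mem_continuationRegion,
    (isOpen_lt continuous_const continuous_re).mem_nhds
      (by simp : 2 + 2 * I ∈ {s : ℂ | 1 < s.re})] with s hs hre
  exact hurwitzZeta_eq_hurwitzContinuation_of_one_lt_re hx hx1 hs hre

lemma riemannZeta_half : riemannZeta (1 / 2) = hurwitzHalf 1 := by
  rw [← hurwitzZeta_half one_pos le_rfl, AddCircle.coe_period, HurwitzZeta.hurwitzZeta_zero]

end HurwitzValue

section TwistedMoment

variable {q : ℕ} [NeZero q]

lemma hurwitzZeta_toAddCircle_half (j : ZMod q) :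
    HurwitzZeta.hurwitzZeta (ZMod.toAddCircle j) (1 / 2) = hurwitzHalfMod q j := by
  rcases eq_or_ne j 0 with rfl | hj
  · rw [map_zero, HurwitzZeta.hurwitzZeta_zero, riemannZeta_half, hurwitzHalfMod, ZMod.val_zero,
      Nat.cast_zero, zero_div, hurwitzHalfPeriodic_zero]
  have hq : (0 : ℝ) < q := Nat.cast_pos.2 (NeZero.pos q)
  have hval : (0 : ℝ) < j.val := Nat.cast_pos.2 (ZMod.val_pos.2 hj)
  have hpos : 0 < (j.val : ℝ) / q := by positivity
  have hle : (j.val : ℝ) / q ≤ 1 := (div_le_one hq).2 (Nat.cast_le.2 (ZMod.val_lt j).le)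
  rw [ZMod.toAddCircle_apply, hurwitzZeta_half hpos hle, hurwitzHalfMod,
    hurwitzHalfPeriodic_of_mem_Ioc ⟨hpos, hle⟩]

lemma LFunction_half (χ : DirichletCharacter ℂ q) :
    χ.LFunction (1 / 2) = (1 / √q : ℝ) * ∑ j, χ j * hurwitzHalfMod q j := by
  have hcast : (q : ℂ) = (q : ℝ) := (ofReal_natCast q).symm
  simp only [DirichletCharacter.LFunction, ZMod.LFunction, hurwitzZeta_toAddCircle_half, hcast,
    ofReal_cpow_neg_half (Nat.cast_nonneg (α := ℝ) q)]

lemma sum_conj_char_mul_char (j b : ZMod q) :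
    ∑ χ : DirichletCharacter ℂ q, starRingEnd ℂ (χ j) * χ b =
      if IsUnit b ∧ j = b then (q.totient : ℂ) else 0 := by
  by_cases hj : IsUnit j
  · have hinv (χ : DirichletCharacter ℂ q) : starRingEnd ℂ (χ j) = χ j⁻¹ := by
      obtain ⟨u, rfl⟩ := hj
      rw [starRingEnd_apply, ← MulChar.star_apply, MulChar.star_eq_inv, MulChar.inv_apply,
        Ring.inverse_unit, ZMod.inv_coe_unit]
    simp only [hinv, DirichletCharacter.sum_char_inv_mul_char_eq ℂ hj]
    exact if_congr ⟨fun h => ⟨h ▸ hj, h⟩, And.right⟩ rfl rfl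
  · rw [if_neg fun h : IsUnit b ∧ j = b => hj (h.2 ▸ h.1)]
    refine sum_eq_zero fun χ _ => ?_
    rw [MulChar.map_nonunit χ hj, map_zero, zero_mul]

lemma sum_char_transform_mul_transform (f g : ZMod q → ℂ) (a : ZMod q) :
    ∑ χ : DirichletCharacter ℂ q,
        (∑ j, starRingEnd ℂ (χ j) * f j) * (∑ l, χ l * g l) * χ a =
      q.totient * ∑ l with IsUnit (a * l), f (a * l) * g l := by
  calc ∑ χ : DirichletCharacter ℂ q,
        (∑ j, starRingEnd ℂ (χ j) * f j) * (∑ l, χ l * g l) * χ a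
      = ∑ χ : DirichletCharacter ℂ q, ∑ l, ∑ j,
          f j * g l * (starRingEnd ℂ (χ j) * χ (a * l)) := by
        refine sum_congr rfl fun χ _ => ?_
        rw [sum_mul_sum, sum_comm, sum_mul]
        refine sum_congr rfl fun l _ => ?_
        rw [sum_mul]
        refine sum_congr rfl fun j _ => ?_
        rw [map_mul]
        ring
    _ = ∑ l, ∑ j, f j * g l * ∑ χ : DirichletCharacter ℂ q,
          starRingEnd ℂ (χ j) * χ (a * l) := by
        simp only [mul_sum]
        rw [sum_comm]
        exact sum_congr rfl fun l _ => sum_comm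
    _ = q.totient * ∑ l with IsUnit (a * l), f (a * l) * g l := by
        rw [sum_filter, mul_sum]
        refine sum_congr rfl fun l _ => ?_
        simp only [sum_conj_char_mul_char]
        rw [sum_eq_single (a * l) (fun j _ hj => by simp [hj]) (by simp)]
        by_cases hl : IsUnit (a * l) <;> simp [hl, mul_comm]

lemma sum_isUnit_mul [Fact q.Prime] {a : ZMod q} (ha : a ≠ 0) (f : ZMod q → ℂ) :
    ∑ l with IsUnit (a * l), f l = ∑ l, f l - f 0 := by
  have hfilter : univ.filter (fun l => IsUnit (a * l)) = univ.erase 0 := by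
    ext l
    simp [ha]
  rw [hfilter, sum_erase_eq_sub (mem_univ 0)]

lemma sum_LFunction_half_mul_LFunction_half [Fact q.Prime] {a : ℤ} (ha : (a : ZMod q) ≠ 0) :
    ∑ χ : DirichletCharacter ℂ q,
        DirichletCharacter.LFunction (χ.ringHomComp (starRingEnd ℂ)) (1 / 2) *
          χ.LFunction (1 / 2) * χ a =
      q.totient * (1 / √q * twistedSum a q - hurwitzHalf 1 ^ 2 / q : ℝ) := by
  have hcast : (q : ℂ) = (√q : ℝ) ^ 2 := by
    rw [← ofReal_pow, Real.sq_sqrt (Nat.cast_nonneg q), ofReal_natCast]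
  have horth := sum_char_transform_mul_transform (fun j => (hurwitzHalfMod q j : ℂ))
    (fun j => (hurwitzHalfMod q j : ℂ)) a
  have hzero : hurwitzHalfMod q 0 = hurwitzHalf 1 := by
    rw [hurwitzHalfMod, ZMod.val_zero, Nat.cast_zero, zero_div, hurwitzHalfPeriodic_zero]
  rw [sum_isUnit_mul ha, mul_zero, hzero] at horth
  calc _ = (1 / √q : ℝ) ^ 2 * ∑ χ : DirichletCharacter ℂ q,
          (∑ j, starRingEnd ℂ (χ j) * hurwitzHalfMod q j) * (∑ l, χ l * hurwitzHalfMod q l) *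
            χ a := by
        rw [mul_sum]
        refine sum_congr rfl fun χ _ => ?_
        simp only [LFunction_half, MulChar.ringHomComp_apply]
        ring
    _ = _ := by
        rw [horth, twistedSum_eq_sum_zmod]
        push_cast
        rw [hcast]
        ring

lemma Mstar_zero_eq_twistedSum (hq : q.Prime) {a : ℤ} (ha : (a : ZMod q) ≠ 0) :
    Mstar 0 a q = twistedSum a q := by
  have : Fact q.Prime := ⟨hq⟩
  have hq0 : (0 : ℝ) < q := Nat.cast_pos.2 hq.pos
  have hs : √(q : ℝ) ≠ 0 := (Real.sqrt_pos.2 hq0).ne'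
  have hsq : √(q : ℝ) ^ 2 = q := Real.sq_sqrt hq0.le
  have htot : (q.totient : ℝ) = √q ^ 2 - 1 := by
    rw [Nat.totient_prime hq, Nat.cast_sub hq.one_le, Nat.cast_one, hsq]
  have htot0 : √(q : ℝ) ^ 2 - 1 ≠ 0 := htot ▸ Nat.cast_ne_zero.2 (Nat.totient_pos.2 hq.pos).ne'
  rw [Mstar]
  simp only [Nat.cast_zero, sub_zero, add_zero, neg_zero, cpow_zero]
  rw [sum_LFunction_half_mul_LFunction_half ha, riemannZeta_half, neg_div, ← ofReal_natCast q,
    ofReal_cpow_half hq0.le, ofReal_cpow_neg_half hq0.le, ← ofReal_natCast q.totient, htot]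
  norm_cast
  rw [← hsq, Real.sqrt_sq (Real.sqrt_nonneg _)]
  field_simp
  ring

end TwistedMoment

section ErrorFunction

variable {x : ℝ}

/-- The function `ψ₀`: what remains of `recipFun` once its leading terms are removed, namely those
at infinity for `0 < x` (evaluated at `1 / x`) and those at zero for `x < 0` (evaluated at `-x`). -/
noncomputable def recipError (x : ℝ) : ℝ :=
  if 0 < x then -recipSeries (1 / x)
  else if x < 0 then recipFun (-x) -
    1 / √(-x) * (eulerMascheroniConstant - Real.log (-x) + -Real.log (8 * π)) - hurwitzHalf 1 ^ 2
  else 0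

lemma recipError_of_pos (hx : 0 < x) : recipError x = -recipSeries (1 / x) := if_pos hx

lemma recipError_of_neg (hx : x < 0) : recipError x = recipFun (-x) -
    1 / √(-x) * (eulerMascheroniConstant - Real.log (-x) + -Real.log (8 * π)) -
      hurwitzHalf 1 ^ 2 := by
  rw [recipError, if_neg hx.not_gt, if_pos hx]

lemma recipError_zero : recipError 0 = 0 := by simp [recipError]

/-- A constant `C` with `|recipError x| ≤ C * |x|` for `|x| ≤ 1`. -/
noncomputable def recipErrorBound : ℝ := (recipKernelBound + 17) * zetaThreeHalves

lemma recipErrorBound_pos : 0 < recipErrorBound := by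
  have := recipKernelBound_pos
  have := one_le_zetaThreeHalves
  unfold recipErrorBound
  positivity

lemma abs_recipError_le (hx : |x| ≤ 1) : |recipError x| ≤ recipErrorBound * |x| := by
  have hzeta : 0 < zetaThreeHalves := one_pos.trans_le one_le_zetaThreeHalves
  have hkernel := recipKernelBound_pos
  rw [recipErrorBound, add_mul, add_mul]
  rcases lt_trichotomy x 0 with hneg | rfl | hpos
  · have hsmall := abs_recipFun_sub_le (neg_pos.2 hneg) (abs_of_neg hneg ▸ hx)
    rw [recipConst_eq, ← recipError_of_neg hneg] at hsmall
    exact (hsmall.trans_eq (by rw [abs_of_neg hneg])).trans (le_add_of_nonneg_left (by positivity))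
  · simp [recipError_zero]
  · have hlarge := abs_recipSeries_le (one_div_pos.2 hpos)
    rw [div_div_eq_mul_div, div_one] at hlarge
    rw [recipError_of_pos hpos, abs_neg, abs_of_pos hpos]
    exact hlarge.trans (le_add_of_nonneg_right (by positivity))

lemma continuousAt_recipSeries (hx : 0 < x) : ContinuousAt recipSeries x :=
  continuousOn_recipSeries.continuousAt (Ioi_mem_nhds hx)

lemma continuousAt_recipError_of_pos (hx : 0 < x) : ContinuousAt recipError x := by
  have hcont : ContinuousAt (fun y => -recipSeries (1 / y)) x :=
    ((continuousAt_recipSeries (one_div_pos.2 hx)).comp (f := fun y : ℝ => 1 / y)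
      (continuousAt_const.div continuousAt_id hx.ne')).neg
  exact hcont.congr ((eventually_gt_nhds hx).mono fun y hy => (recipError_of_pos hy).symm)

lemma continuousAt_recipError_of_neg (hx : x < 0) : ContinuousAt recipError x := by
  have hx' : 0 < -x := neg_pos.2 hx
  have hroot : √(-x) ≠ 0 := (Real.sqrt_pos.2 hx').ne'
  have hseries : ContinuousAt (fun y => recipSeries (-y)) x :=
    (continuousAt_recipSeries hx').comp (f := fun y : ℝ => -y) continuousAt_neg
  have hcont : ContinuousAt (fun y => recipFun (-y) - 1 / √(-y) *
      (eulerMascheroniConstant - Real.log (-y) + -Real.log (8 * π)) - hurwitzHalf 1 ^ 2) x := by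
    unfold recipFun
    fun_prop (disch := first | assumption | exact hx'.ne')
  exact hcont.congr ((eventually_lt_nhds hx).mono fun y hy => (recipError_of_neg hy).symm)

lemma continuousAt_recipError_zero : ContinuousAt recipError 0 := by
  have hbound : Continuous fun y : ℝ => recipErrorBound * |y| := by fun_prop
  have hlim := hbound.tendsto 0
  rw [abs_zero, mul_zero] at hlim
  rw [ContinuousAt, recipError_zero]
  refine squeeze_zero_norm' ?_ hlim
  filter_upwards [Metric.ball_mem_nhds (0 : ℝ) one_pos] with y hy
  exact abs_recipError_le (mem_ball_zero_iff.1 hy).le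

lemma continuous_recipError : Continuous recipError :=
  continuous_iff_continuousAt.2 fun x => by
    rcases lt_trichotomy x 0 with h | rfl | h
    · exact continuousAt_recipError_of_neg h
    · exact continuousAt_recipError_zero
    · exact continuousAt_recipError_of_pos h

end ErrorFunction

section ReciprocityStep

variable {k u v : ℕ} {a b σ : ℤ}

lemma twistedSum_congr [NeZero k] (h : (a : ZMod k) = b) : twistedSum a k = twistedSum b k := by
  rw [twistedSum_eq_sum_zmod, twistedSum_eq_sum_zmod, h]

lemma twistedSum_eq_of_mul_eq_one [NeZero k] (h : (a : ZMod k) * b = 1) :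
    twistedSum a k = twistedSum b k := by
  rw [twistedSum_eq_sum_zmod, twistedSum_eq_sum_zmod,
    ← sum_zmod_unit_mul _ (Units.mkOfMulEqOne _ _ ((mul_comm _ _).trans h))]
  congr 1
  refine sum_congr rfl fun j _ => ?_
  rw [Units.val_mkOfMulEqOne, ← mul_assoc, h, one_mul, mul_comm]

/-- The main term of the reciprocity formula for `twistedSum (σ * u) v`, where `σ = ± 1` and
`x = v / u`. -/
noncomputable def recipMainTerm (σ : ℤ) (x : ℝ) : ℝ :=
  if σ = 1 then √x * (Real.log x + eulerMascheroniConstant - Real.log (8 * π)) else -(π / 2 * √x)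

lemma twistedSum_natCast_eq (hu : 0 < u) (hv : 0 < v) (hcop : Nat.Coprime u v) :
    twistedSum u v = recipMainTerm 1 (v / u) + hurwitzHalf 1 ^ 2 + recipError (-(u / v)) +
      twistedSum (-v) u := by
  have hdiv : (0 : ℝ) < u / v := by positivity
  rw [recipError_of_neg (neg_neg_of_pos hdiv), neg_neg, ← twistedSum_sub_twistedSum hu hv hcop,
    recipMainTerm, if_pos rfl, ← inv_div (u : ℝ), Real.log_inv, Real.sqrt_inv]
  ring

lemma twistedSum_neg_natCast_eq (hu : 0 < u) (hv : 0 < v) (hcop : Nat.Coprime u v) :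
    twistedSum (-u) v = recipMainTerm (-1) (v / u) + hurwitzHalf 1 ^ 2 + recipError (u / v) +
      twistedSum v u := by
  have hdiv : (0 : ℝ) < u / v := by positivity
  have hrecip := twistedSum_sub_twistedSum hv hu hcop.symm
  rw [recipFun] at hrecip
  rw [recipError_of_pos hdiv, one_div_div, recipMainTerm, if_neg (by decide)]
  linarith

lemma twistedSum_sign_mul_eq (hσ : σ = 1 ∨ σ = -1) (hu : 0 < u) (hv : 0 < v)
    (hcop : Nat.Coprime u v) :
    twistedSum (σ * u) v = recipMainTerm σ (v / u) + hurwitzHalf 1 ^ 2 +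
      recipError (-σ * (u / v)) + twistedSum (-σ * v) u := by
  rcases hσ with rfl | rfl
  · simpa using twistedSum_natCast_eq hu hv hcop
  · simpa using twistedSum_neg_natCast_eq hu hv hcop

end ReciprocityStep

section ContinuedFraction

variable {a q j : ℕ} {ε : ℤ}

/-- The remainders `a, q, a % q, …` of the Euclidean algorithm. -/
def euclidRem (a q : ℕ) : ℕ → ℕ
  | 0 => a
  | 1 => q
  | j + 2 => euclidRem a q j % euclidRem a q (j + 1)

lemma euclidRem_succ (a q : ℕ) : ∀ j, euclidRem a q (j + 1) = euclidRem q (a % q) j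
  | 0 => rfl
  | 1 => rfl
  | j + 2 => by
    rw [euclidRem, euclidRem_succ a q j, euclidRem_succ a q (j + 1), ← euclidRem]

lemma cfList_zero_right (a : ℕ) : cfList a 0 = [] := by
  rw [cfList, dif_pos rfl]

lemma cfList_of_pos (a : ℕ) (hq : 0 < q) : cfList a q = a / q :: cfList q (a % q) := by
  rw [cfList, dif_neg hq.ne']

lemma euclidRem_length_cfList (q : ℕ) : ∀ a : ℕ,
    euclidRem a q (cfList a q).length = Nat.gcd a q ∧
      euclidRem a q ((cfList a q).length + 1) = 0 := by
  induction q using Nat.strong_induction_on with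
  | _ q ih =>
    intro a
    rcases Nat.eq_zero_or_pos q with rfl | hq
    · simp [cfList_zero_right, euclidRem]
    · rw [cfList_of_pos a hq, List.length_cons, euclidRem_succ, euclidRem_succ, Nat.gcd_comm a,
        Nat.gcd_rec, Nat.gcd_comm]
      exact ih _ (Nat.mod_lt _ hq) q

lemma getD_cfList_of_lt (q : ℕ) : ∀ a j : ℕ, j < (cfList a q).length →
    0 < euclidRem a q (j + 1) ∧
      (cfList a q).getD j 0 = euclidRem a q j / euclidRem a q (j + 1) := by
  induction q using Nat.strong_induction_on with
  | _ q ih =>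
    intro a j hj
    rcases Nat.eq_zero_or_pos q with rfl | hq
    · simp [cfList_zero_right] at hj
    rw [cfList_of_pos a hq] at hj ⊢
    cases j with
    | zero => exact ⟨hq, rfl⟩
    | succ j =>
      rw [euclidRem_succ a q (j + 1), euclidRem_succ a q j, List.getD_cons_succ]
      exact ih _ (Nat.mod_lt _ hq) q j (Nat.lt_of_succ_lt_succ hj)

lemma euclidRem_eq_getD_mul_add (hj : j < (cfList a q).length) :
    euclidRem a q j =
      (cfList a q).getD j 0 * euclidRem a q (j + 1) + euclidRem a q (j + 2) := by
  rw [(getD_cfList_of_lt q a j hj).2, euclidRem, Nat.div_add_mod']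

lemma getD_cfList_pos (hj : j + 1 < (cfList a q).length) : 0 < (cfList a q).getD (j + 1) 0 := by
  obtain ⟨hpos, hquot⟩ := getD_cfList_of_lt q a (j + 1) hj
  have hprev := (getD_cfList_of_lt q a j (Nat.lt_of_succ_lt hj)).1
  rw [hquot]
  exact Nat.div_pos (Nat.mod_lt _ hprev).le hpos

/-- The denominator `v_{j-1}` of the previous convergent of `a/q`, with `v_{-1} = 0`. -/
def cfDenPrev (a q : ℕ) : ℕ → ℕ
  | 0 => 0
  | j + 1 => cfDen a q j

lemma cfDen_succ (a q j : ℕ) :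
    cfDen a q (j + 1) = (cfList a q).getD (j + 1) 0 * cfDen a q j + cfDenPrev a q j := by
  cases j <;> simp [cfDen, cfDenPrev]

lemma cfDen_pos (hj : j < (cfList a q).length) : 0 < cfDen a q j := by
  induction j with
  | zero => exact one_pos
  | succ j ih =>
    rw [cfDen_succ]
    have := Nat.mul_pos (getD_cfList_pos hj) (ih (Nat.lt_of_succ_lt hj))
    omega

lemma coprime_cfDen_succ (a q j : ℕ) : Nat.Coprime (cfDen a q j) (cfDen a q (j + 1)) := by
  induction j with
  | zero => exact Nat.coprime_one_left _
  | succ j ih =>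
    rw [cfDen_succ a q (j + 1), cfDenPrev, Nat.coprime_mul_right_add_right]
    exact ih.symm

lemma cfDen_mul_euclidRem_add (hj : j < (cfList a q).length) :
    cfDen a q j * euclidRem a q (j + 1) + cfDenPrev a q j * euclidRem a q (j + 2) = q := by
  induction j with
  | zero => simp [cfDen, cfDenPrev, euclidRem]
  | succ j ih =>
    refine .trans ?_ (ih (Nat.lt_of_succ_lt hj))
    rw [cfDen_succ, euclidRem_eq_getD_mul_add hj, cfDenPrev]
    ring

lemma intCast_mul_cfDen (hj : j < (cfList a q).length) :
    (a * cfDen a q j : ZMod q) = (-1) ^ j * euclidRem a q (j + 2) ∧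
      (a * cfDenPrev a q j : ZMod q) = -((-1) ^ j * euclidRem a q (j + 1)) := by
  induction j with
  | zero => simp [cfDen, cfDenPrev, euclidRem]
  | succ j ih =>
    obtain ⟨hden, hprev⟩ := ih (Nat.lt_of_succ_lt hj)
    have hstep := congrArg (Nat.cast (R := ZMod q)) (euclidRem_eq_getD_mul_add hj)
    rw [cfDen_succ, cfDenPrev, hden, pow_succ]
    push_cast at hstep ⊢
    exact ⟨by linear_combination (cfList a q).getD (j + 1) 0 * hden + hprev - (-1) ^ j * hstep,
      by ring⟩

lemma length_cfList_pos (a : ℕ) (hq : 0 < q) : 0 < (cfList a q).length := by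
  rw [cfList_of_pos a hq]
  exact Nat.succ_pos _

lemma cfDen_last (hq : 0 < q) (hcop : Nat.Coprime a q) :
    cfDen a q ((cfList a q).length - 1) = q := by
  obtain ⟨κ, hκ⟩ := Nat.exists_eq_add_of_lt (length_cfList_pos a hq)
  obtain ⟨hgcd, hzero⟩ := euclidRem_length_cfList q a
  have hden := cfDen_mul_euclidRem_add (a := a) (q := q) (j := κ) (by omega)
  simp only [hκ, zero_add, hcop.gcd_eq_one] at hgcd hzero ⊢
  simpa [hgcd, hzero] using hden

lemma intCast_mul_cfDenPrev_last (hq : 0 < q) (hcop : Nat.Coprime a q) :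
    (a * cfDenPrev a q ((cfList a q).length - 1) : ZMod q) =
      -(-1) ^ ((cfList a q).length - 1) := by
  obtain ⟨κ, hκ⟩ := Nat.exists_eq_add_of_lt (length_cfList_pos a hq)
  have hgcd := (euclidRem_length_cfList q a).1
  have hprev := (intCast_mul_cfDen (a := a) (q := q) (j := κ) (by omega)).2
  simp only [hκ, zero_add, hcop.gcd_eq_one] at hgcd ⊢
  simpa [hgcd] using hprev

/-- Telescoping along the convergents: modulo `v_j`, the next denominator `v_{j+1}` is `v_{j-1}`. -/
lemma twistedSum_cfDenPrev_eq_sum (hε : ε = 1 ∨ ε = -1) (hj : j < (cfList a q).length) :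
    twistedSum (-ε * (-1) ^ j * cfDenPrev a q j) (cfDen a q j) =
      ∑ i ∈ Icc 1 j, recipMainTerm (-ε * (-1) ^ i) (cfDen a q i / cfDen a q (i - 1)) +
        hurwitzHalf 1 ^ 2 * (j + 1) +
        ∑ i ∈ Icc 1 j, recipError (ε * (-1) ^ i * (cfDen a q (i - 1) / cfDen a q i)) := by
  induction j with
  | zero => simp [cfDen, twistedSum_one_right]
  | succ j ih =>
    have hj' := Nat.lt_of_succ_lt hj
    have : NeZero (cfDen a q j) := ⟨(cfDen_pos hj').ne'⟩
    have hsign : -ε * (-1) ^ (j + 1) = 1 ∨ -ε * (-1) ^ (j + 1) = -1 := by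
      rcases hε with rfl | rfl <;> rcases neg_one_pow_eq_or ℤ (j + 1) with h | h <;> simp [h]
    have hmod : twistedSum (-(-ε * (-1) ^ (j + 1)) * cfDen a q (j + 1)) (cfDen a q j) =
        twistedSum (-ε * (-1) ^ j * cfDenPrev a q j) (cfDen a q j) := by
      refine twistedSum_congr ?_
      rw [cfDen_succ, pow_succ]
      push_cast
      rw [ZMod.natCast_self]
      ring
    rw [cfDenPrev, twistedSum_sign_mul_eq hsign (cfDen_pos hj') (cfDen_pos hj)
      (coprime_cfDen_succ a q j), hmod, ih hj', sum_Icc_succ_top (by omega),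
      sum_Icc_succ_top (by omega), Nat.add_sub_cancel]
    push_cast
    ring_nf

lemma twistedSum_mul_eq_sum (hq : 0 < q) (hcop : Nat.Coprime a q) (hε : ε = 1 ∨ ε = -1) :
    twistedSum (ε * a) q =
      ∑ j ∈ Icc 1 ((cfList a q).length - 1),
          recipMainTerm (-ε * (-1) ^ j) (cfDen a q j / cfDen a q (j - 1)) +
        hurwitzHalf 1 ^ 2 * (((cfList a q).length - 1 : ℕ) + 1) +
        ∑ j ∈ Icc 1 ((cfList a q).length - 1),
          recipError (ε * (-1) ^ j * (cfDen a q (j - 1) / cfDen a q j)) := by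
  have : NeZero q := ⟨hq.ne'⟩
  have hlast : (cfList a q).length - 1 < (cfList a q).length :=
    Nat.sub_lt (length_cfList_pos a hq) one_pos
  have hinv := intCast_mul_cfDenPrev_last hq hcop
  rw [← twistedSum_cfDenPrev_eq_sum hε hlast, cfDen_last hq hcop]
  refine twistedSum_eq_of_mul_eq_one ?_
  have hsign : ((-1 : ZMod q) ^ ((cfList a q).length - 1)) ^ 2 = 1 := by
    rw [← pow_mul, mul_comm, pow_mul, neg_one_sq, one_pow]
  have hsq : (ε : ZMod q) ^ 2 = 1 := by rcases hε with rfl | rfl <;> simp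
  push_cast
  linear_combination -(ε : ZMod q) ^ 2 * (-1) ^ ((cfList a q).length - 1) * hinv +
    (ε : ZMod q) ^ 2 * hsign + hsq

lemma sum_recipMainTerm (hε : ε = 1 ∨ ε = -1) (s : Finset ℕ) (f : ℕ → ℝ) :
    ∑ j ∈ s, recipMainTerm (-ε * (-1) ^ j) (f j) =
      (∑ j ∈ s, if (-1 : ℤ) ^ j = -ε then
        √(f j) * (Real.log (f j) + eulerMascheroniConstant - Real.log (8 * π)) else 0) -
      π / 2 * ∑ j ∈ s, if (-1 : ℤ) ^ j = ε then √(f j) else 0 := by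
  rw [mul_sum, ← sum_sub_distrib]
  refine sum_congr rfl fun j _ => ?_
  rcases hε with rfl | rfl <;> rcases neg_one_pow_eq_or ℤ j with h | h <;>
    norm_num [h, recipMainTerm]

end ContinuedFraction

/-- Theorem 4 of the paper: expression of `M_0*(±a,q)` in terms of the continued
fraction expansion of `a/q`. -/
theorem reciprocity_continued_fraction :
    ∃ (ψ : ℝ → ℝ) (C : ℝ), Continuous ψ ∧ 0 < C ∧
      (∀ x : ℝ, |x| ≤ 1 → |ψ x| ≤ C * |x|) ∧
      ∀ (q a : ℕ) (hq : q.Prime), 0 < a → Nat.Coprime a q →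
        ∀ (ε : ℤ), ε = 1 ∨ ε = -1 →
        haveI : NeZero q := ⟨hq.ne_zero⟩
        Mstar 0 (ε * a) q =
          ((∑ j ∈ Finset.Icc 1 ((cfList a q).length - 1),
              if (-1:ℤ)^j = -ε then
                Real.sqrt ((cfDen a q j : ℝ) / cfDen a q (j-1)) *
                  (Real.log ((cfDen a q j : ℝ) / cfDen a q (j-1))
                    + Real.eulerMascheroniConstant - Real.log (8*π))
              else 0 : ℝ) : ℂ)
          - ((π/2 * ∑ j ∈ Finset.Icc 1 ((cfList a q).length - 1),
              if (-1:ℤ)^j = ε then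
                Real.sqrt ((cfDen a q j : ℝ) / cfDen a q (j-1))
              else 0 : ℝ) : ℂ)
          + (riemannZeta (1/2))^2 * (((cfList a q).length - 1 : ℕ) + 1)
          + ((∑ j ∈ Finset.Icc 1 ((cfList a q).length - 1),
              ψ ((ε:ℝ) * (-1:ℝ)^j * ((cfDen a q (j-1) : ℝ) / cfDen a q j)) : ℝ) : ℂ) := by
  refine ⟨recipError, recipErrorBound, continuous_recipError, recipErrorBound_pos,
    fun x hx => abs_recipError_le hx, fun q a hq _ hcop ε hε => ?_⟩
  have : NeZero q := ⟨hq.ne_zero⟩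
  have : Fact q.Prime := ⟨hq⟩
  have hunit : ((ε * a : ℤ) : ZMod q) ≠ 0 := by
    have ha : (a : ZMod q) ≠ 0 := (ZMod.isUnit_iff_coprime a q).2 hcop |>.ne_zero
    rcases hε with rfl | rfl <;> simpa using ha
  rw [Mstar_zero_eq_twistedSum hq hunit, twistedSum_mul_eq_sum hq.pos hcop hε,
    sum_recipMainTerm hε, riemannZeta_half]
  push_cast
  rfl
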